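/- Let L_A and L_C be lattices, and suppose L_C has more than one element. Then there exist a lattice L and injective lattice homomorphisms f : L_A → L and g : L_C → L such that: (1) g is congruence-preserving, i.e., for every lattice congruence θ of L_C there is exactly one lattice congruence Θ of L with Θ(g x, g y) if and only if θ(x, y) for all x, y ∈ L_C; and (2) f is automorphism-preserving, i.e., for every lattice automorphism α of L_A there is exactly one lattice automorphism β of L with β ∘ f = f ∘ α, and conversely every lattice automorphism β of L satisfies β ∘ f = f ∘ α for some lattice automorphism α of L_A. -/

import Mathlib

/-!
The lattice `L` is obtained from `Lc` by two applications of one construction.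

*The construction.* Given a lattice `B`, elements `r i` of `B` and bounded lattices `F i` (the
gadgets), the lattice `GadgetExt r F` contains `B` and, for every `i`, `c : F i` and `d : B`, an
element `tensor r i c d`, to be thought of as `c` placed over the interval `[r i, r i ⊔ d]`: for
`c = ⊥` it is `r i`, and for `c = ⊤` it is an element above `d`, the join of `d` with
`tensor r i c d` for any `c ≠ ⊥`. The elements of `GadgetExt r F` are the finitely generated closed
sets of such symbols. Every one of them is also the intersection of finitely many sets of two simple
forms, so that they form a lattice; as generators and presentations remain equivalent modulo every
congruence of `B`, every congruence of `B` extends to `GadgetExt r F`. If the gadgets are simple and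
contain two disjoint nonzero elements, the extension is unique: a collapse in `B` forces collapses
between the corresponding tops of gadgets, and a collapse inside a gadget forces one in `B`.

*The gadgets.* The double comb `Comb col` is a simple lattice. It consists of two combs whose
elements have lower sets of prescribed cardinalities; if these differ and the index set is
well-ordered, the double comb is rigid. A bounded lattice `K` is stored in a simple lattice
`Inflation K G` by inserting a copy of a simple rigid `G` below each nonzero element, which keeps
exactly the automorphisms of `K`.

*The two steps.* Fix `x₀ < y₀` in `Lc`. The first extension places a double comb over every
`m ≥ x₀`; in the result `B` all intervals of `Lc` above `x₀` are linked. The second extension places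
over every element of `B` a double comb, and over `x₀` in addition the gadget `Inflation K G` for
`K = WithBot (WithTop La)`. All combs of the second step are given distinct cardinals, larger than
that of `B`. An automorphism of the second extension therefore recognises from the sizes of lower
sets the elements of `B` and the gadget to which a given element belongs. It follows that it fixes
`B` pointwise, since every element of `B` carries its own gadget; that it fixes the tops of the
gadgets; and that it fixes the double combs elementwise. On the remaining gadget it could a priori
act differently over different intervals; the linking elements force it to act by one and the same
automorphism of the gadget, which comes from `K` and so from `La`. The element `a` of `La` is sent
to the copy of `a` over `[x₀, y₀]`.
-/

universe u

/-- A lattice congruence. -/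
def LatCon (L : Type*) [Lattice L] (θ : L → L → Prop) : Prop :=
  Equivalence θ ∧
  ∀ a b c d : L, θ a b → θ c d → θ (a ⊔ c) (b ⊔ d) ∧ θ (a ⊓ c) (b ⊓ d)

/-- A lattice automorphism: a bijection preserving joins and meets. -/
def IsLatAuto (L : Type*) [Lattice L] (h : L → L) : Prop :=
  Function.Bijective h ∧
  (∀ x y : L, h (x ⊔ y) = h x ⊔ h y) ∧ ∀ x y : L, h (x ⊓ y) = h x ⊓ h y

/-- A congruence-preserving lattice embedding: injective lattice homomorphism such
that every congruence of the source extends to exactly one congruence of the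
target. -/
def CPEmb (Lc : Type*) [Lattice Lc] (L : Type*) [Lattice L] (g : Lc → L) : Prop :=
  Function.Injective g ∧
  (∀ x y : Lc, g (x ⊔ y) = g x ⊔ g y) ∧ (∀ x y : Lc, g (x ⊓ y) = g x ⊓ g y) ∧
  ∀ θ : Lc → Lc → Prop, LatCon Lc θ →
    ∃! Θ : L → L → Prop, LatCon L Θ ∧ ∀ x y : Lc, (Θ (g x) (g y) ↔ θ x y)

/-- An automorphism-preserving lattice embedding: injective lattice homomorphism
such that every automorphism of the source extends to exactly one automorphism of
the target, and every automorphism of the target is such an extension. -/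
def APEmb (La : Type*) [Lattice La] (L : Type*) [Lattice L] (f : La → L) : Prop :=
  Function.Injective f ∧
  (∀ x y : La, f (x ⊔ y) = f x ⊔ f y) ∧ (∀ x y : La, f (x ⊓ y) = f x ⊓ f y) ∧
  (∀ α : La → La, IsLatAuto La α →
    ∃! β : L → L, IsLatAuto L β ∧ ∀ x : La, β (f x) = f (α x)) ∧
  (∀ β : L → L, IsLatAuto L β →
    ∃ α : La → La, IsLatAuto La α ∧ ∀ x : La, β (f x) = f (α x))

namespace StrongIndependence

/-! ### Generators, attributes and the closure they define -/

section CongPreorder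

variable {B : Type*} [Lattice B] {R : B → B → Prop}

/-- A congruence preorder: the relation `x ≤ y` modulo some congruence of the lattice. -/
structure IsCongPreorder (R : B → B → Prop) : Prop where
  of_le {a b} : a ≤ b → R a b
  trans {a b c} : R a b → R b c → R a c
  sup {a b c} : R a c → R b c → R (a ⊔ b) c
  inf {a b c} : R c a → R c b → R c (a ⊓ b)

/-- A possibly empty ideal of `B` modulo the preorder `R`. -/
structure IsIdealMod (R : B → B → Prop) (N : Set B) : Prop where
  down {a b} : R a b → b ∈ N → a ∈ N
  sup {a b} : a ∈ N → b ∈ N → a ⊔ b ∈ N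

theorem isCongPreorder_le : IsCongPreorder ((· ≤ ·) : B → B → Prop) :=
  ⟨id, le_trans, sup_le, le_inf⟩

theorem IsCongPreorder.isIdealMod (hR : IsCongPreorder R) (n : B) : IsIdealMod R {x | R x n} :=
  ⟨hR.trans, hR.sup⟩

theorem isIdealMod_univ : IsIdealMod R Set.univ := ⟨fun _ _ => trivial, fun _ _ => trivial⟩

theorem isIdealMod_Iic (n : B) : IsIdealMod (· ≤ ·) (Set.Iic n) := isCongPreorder_le.isIdealMod n

theorem IsCongPreorder.refl (hR : IsCongPreorder R) (a : B) : R a a := hR.of_le le_rfl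

theorem IsCongPreorder.le_trans (hR : IsCongPreorder R) {a b c : B} (h : a ≤ b) (h' : R b c) :
    R a c :=
  hR.trans (hR.of_le h) h'

theorem IsCongPreorder.trans_le (hR : IsCongPreorder R) {a b c : B} (h : R a b) (h' : b ≤ c) :
    R a c :=
  hR.trans h (hR.of_le h')

theorem IsIdealMod.of_le {N : Set B} (hR : IsCongPreorder R) (hN : IsIdealMod R N) :
    IsIdealMod (· ≤ ·) N :=
  ⟨fun h => hN.down (hR.of_le h), hN.sup⟩

end CongPreorder

/-- The generators of the extension of `B` by the gadgets `F i`: `base d` stands for the element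
`d` of `B`, and `tensor i c d` for the copy of the gadget element `c : F i` over the interval
`[r i, r i ⊔ d]`, that is, for a pure tensor `c ⊗ d`. -/
inductive Gen (B : Type*) {X : Type*} (F : X → Type*)
  | base (d : B) : Gen B F
  | tensor (i : X) (c : F i) (d : B) : Gen B F

namespace Gen

variable {B X : Type*} {F : X → Type*}

/-- The base element lying below a generator by definition. -/
def corner (r : X → B) : Gen B F → B
  | base d => d
  | tensor i _ _ => r i

/-- The upper end of the interval over which a generator is placed. -/
def height : Gen B F → B
  | base d => d
  | tensor _ _ d => d

variable [∀ i, Lattice (F i)] [∀ i, BoundedOrder (F i)] {i j : X} {c : F i} {d : B}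

open Classical in
/-- The gadget coordinates of a generator. -/
noncomputable def slot : Gen B F → ∀ i, F i
  | base _ => ⊥
  | tensor i c _ => Function.update ⊥ i c

@[simp] theorem slot_base : (base d : Gen B F).slot = ⊥ := rfl

@[simp] theorem slot_tensor_self : (tensor i c d).slot i = c := by simp [slot]

theorem slot_tensor_of_ne (h : j ≠ i) : (tensor i c d).slot j = ⊥ := by simp [slot, h]

@[simp] theorem slot_tensor_le {a : ∀ i, F i} : (tensor i c d).slot ≤ a ↔ c ≤ a i := by
  simp [slot, update_le_iff]

theorem setOf_slot_ne_bot_finite (o : Gen B F) : {i | o.slot i ≠ ⊥}.Finite := by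
  cases o with
  | base d => simp
  | tensor i c d =>
    exact (Set.finite_singleton i).subset fun j hj =>
      of_not_not fun h => hj (slot_tensor_of_ne h)

end Gen

section Attributes

variable {B X : Type*} (r : X → B) {F : X → Type*} [∀ i, Lattice (F i)] [∀ i, BoundedOrder (F i)]
  {N N' : Set B} {i j : X} {a a' : ∀ i, F i} {o : Gen B F}

/-- An attribute of the first kind: the ideal `N` bounds the copies of the `i`-th gadget. -/
def SatBound (i : X) (N : Set B) (o : Gen B F) : Prop := o.slot i = ⊥ ∨ o.height ∈ N

/-- An attribute of the second kind, the box `a □ N` of the lattice tensor product. -/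
def SatBox (a : ∀ i, F i) (N : Set B) (o : Gen B F) : Prop :=
  o.corner r ∈ N ∧ (o.slot ≤ a ∨ o.height ∈ N)

@[simp] theorem satBound_base {d : B} : SatBound i N (.base d : Gen B F) := .inl rfl

@[simp] theorem satBound_tensor_self {c : F i} {d : B} :
    SatBound i N (.tensor i c d) ↔ c = ⊥ ∨ d ∈ N := by
  simp [SatBound, Gen.height]

theorem satBound_tensor_of_ne (h : i ≠ j) {c : F j} {d : B} : SatBound i N (.tensor j c d) :=
  .inl (Gen.slot_tensor_of_ne h)

@[simp] theorem satBox_base {d : B} : SatBox r a N (.base d) ↔ d ∈ N := by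
  simp [SatBox, Gen.corner]

@[simp] theorem satBox_tensor {c : F i} {d : B} :
    SatBox r a N (.tensor i c d) ↔ r i ∈ N ∧ (c ≤ a i ∨ d ∈ N) := by
  simp [SatBox, Gen.corner, Gen.height]

theorem SatBound.mono (h : SatBound i N o) (hN : N ⊆ N') : SatBound i N' o :=
  h.imp_right fun ho => hN ho

variable {r} in
theorem SatBox.mono (h : SatBox r a N o) (ha : a ≤ a') (hN : N ⊆ N') : SatBox r a' N' o :=
  ⟨hN h.1, h.2.imp (le_trans · ha) fun ho => hN ho⟩

end Attributes

section Closure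

variable {B X : Type*} [Lattice B] (r : X → B) {F : X → Type*} [∀ i, Lattice (F i)]
  [∀ i, BoundedOrder (F i)] {R : B → B → Prop} {i : X} {S T : Set (Gen B F)}

/-- The Galois closure of a set of generators with respect to the attributes whose ideals are
ideals modulo `R`. -/
def genClosure (R : B → B → Prop) (S : Set (Gen B F)) : Set (Gen B F) :=
  {o | (∀ i N, IsIdealMod R N → r i ∈ N → (∀ s ∈ S, SatBound i N s) → SatBound i N o) ∧
    ∀ a N, IsIdealMod R N → (∀ i, a i ≠ ⊤) → (∀ s ∈ S, SatBox r a N s) → SatBox r a N o}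

theorem subset_genClosure (R : B → B → Prop) (S : Set (Gen B F)) : S ⊆ genClosure r R S :=
  fun _ ho => ⟨fun _ _ _ _ h => h _ ho, fun _ _ _ _ h => h _ ho⟩

theorem genClosure_subset (h : S ⊆ genClosure r R T) : genClosure r R S ⊆ genClosure r R T :=
  fun _ ho => ⟨fun i N hN hr hT => ho.1 i N hN hr fun _ hs => (h hs).1 i N hN hr hT,
    fun a N hN ha hT => ho.2 a N hN ha fun _ hs => (h hs).2 a N hN ha hT⟩

theorem genClosure_mono (h : S ⊆ T) : genClosure r R S ⊆ genClosure r R T :=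
  genClosure_subset r (h.trans (subset_genClosure r R T))

theorem genClosure_le_subset (hR : IsCongPreorder R) (S : Set (Gen B F)) :
    genClosure r (· ≤ ·) S ⊆ genClosure r R S :=
  fun _ ho => ⟨fun i N hN => ho.1 i N (hN.of_le hR), fun a N hN => ho.2 a N (hN.of_le hR)⟩

theorem genClosure_genClosure_le (hR : IsCongPreorder R) (S : Set (Gen B F)) :
    genClosure r R (genClosure r (· ≤ ·) S) = genClosure r R S :=
  (genClosure_subset r (genClosure_le_subset r hR S)).antisymm
    (genClosure_mono r (subset_genClosure r _ S))

variable {r}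

theorem base_mem_genClosure {d d' : B} (h : .base d' ∈ genClosure r R S)
    (hd : R d d') : .base d ∈ genClosure r R S :=
  ⟨fun _ _ _ _ _ => satBound_base, fun a N hN ha hS =>
    (satBox_base r).2 (hN.down hd ((satBox_base r).1 (h.2 a N hN ha hS)))⟩

theorem tensor_mem_genClosure {c c' : F i} {d d' : B} (h : .tensor i c' d' ∈ genClosure r R S)
    (hc : c ≤ c') (hd : R d (d' ⊔ r i)) : .tensor i c d ∈ genClosure r R S := by
  refine ⟨fun j N hN hr hS => ?_, fun a N hN ha hS => ?_⟩
  · obtain rfl | hj := eq_or_ne j i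
    · have := h.1 j N hN hr hS
      simp only [satBound_tensor_self] at this ⊢
      exact this.imp (fun h0 => le_bot_iff.1 (hc.trans_eq h0)) fun hd' => hN.down hd (hN.sup hd' hr)
    · exact satBound_tensor_of_ne hj
  · have := h.2 a N hN ha hS
    simp only [satBox_tensor] at this ⊢
    exact ⟨this.1, this.2.imp hc.trans fun hd' => hN.down hd (hN.sup hd' this.1)⟩

theorem tensor_mem_genClosure_of_base {c : F i} {d d' : B} (h : .base d' ∈ genClosure r R S)
    (hr : R (r i) d') (hcd : c = ⊥ ∨ R d (r i)) : .tensor i c d ∈ genClosure r R S := by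
  refine ⟨fun j N hN hN' _ => ?_, fun a N hN ha hS => ?_⟩
  · obtain rfl | hj := eq_or_ne j i
    · exact satBound_tensor_self.2 (hcd.imp_right (hN.down · hN'))
    · exact satBound_tensor_of_ne hj
  · have hrN := hN.down hr ((satBox_base r).1 (h.2 a N hN ha hS))
    exact (satBox_tensor r).2 ⟨hrN, hcd.imp (fun h0 => h0.trans_le bot_le) (hN.down · hrN)⟩

theorem base_sup_mem_genClosure {d d' : B} (h : .base d ∈ genClosure r R S)
    (h' : .base d' ∈ genClosure r R S) : .base (d ⊔ d') ∈ genClosure r R S :=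
  ⟨fun _ _ _ _ _ => satBound_base, fun a N hN ha hS => (satBox_base r).2
    (hN.sup ((satBox_base r).1 (h.2 a N hN ha hS)) ((satBox_base r).1 (h'.2 a N hN ha hS)))⟩

theorem base_corner_mem_genClosure {o : Gen B F} (h : o ∈ genClosure r R S) :
    .base (o.corner r) ∈ genClosure r R S :=
  ⟨fun _ _ _ _ _ => satBound_base, fun a N hN ha hS => (satBox_base r).2 (h.2 a N hN ha hS).1⟩

theorem base_mem_genClosure_of_tensor_top {d : B} (h : .tensor i ⊤ d ∈ genClosure r R S) :
    .base d ∈ genClosure r R S :=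
  ⟨fun _ _ _ _ _ => satBound_base, fun a N hN ha hS => (satBox_base r).2
    (((satBox_tensor r).1 (h.2 a N hN ha hS)).2.resolve_left fun hi => ha i (top_le_iff.1 hi))⟩

theorem tensor_sup_mem_genClosure {c c' : F i} {d : B} (h : .tensor i c d ∈ genClosure r R S)
    (h' : .tensor i c' d ∈ genClosure r R S) : .tensor i (c ⊔ c') d ∈ genClosure r R S := by
  refine ⟨fun j N hN hr hS => ?_, fun a N hN ha hS => ?_⟩
  · obtain rfl | hj := eq_or_ne j i
    · have h1 := h.1 j N hN hr hS
      have h2 := h'.1 j N hN hr hS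
      simp only [satBound_tensor_self, sup_eq_bot_iff] at h1 h2 ⊢
      tauto
    · exact satBound_tensor_of_ne hj
  · have h1 := h.2 a N hN ha hS
    have h2 := h'.2 a N hN ha hS
    simp only [satBox_tensor, sup_le_iff] at h1 h2 ⊢
    tauto

theorem tensor_mem_genClosure_sup {c : F i} {d d' : B} (h : .tensor i c d ∈ genClosure r R S)
    (h' : .tensor i c d' ∈ genClosure r R S) : .tensor i c (d ⊔ d') ∈ genClosure r R S := by
  refine ⟨fun j N hN hr hS => ?_, fun a N hN ha hS => ?_⟩
  · obtain rfl | hj := eq_or_ne j i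
    · have h1 := h.1 j N hN hr hS
      have h2 := h'.1 j N hN hr hS
      have h3 := hN.sup (a := d) (b := d')
      simp only [satBound_tensor_self] at h1 h2 ⊢
      tauto
    · exact satBound_tensor_of_ne hj
  · have h1 := h.2 a N hN ha hS
    have h2 := h'.2 a N hN ha hS
    have h3 := hN.sup (a := d) (b := d')
    simp only [satBox_tensor] at h1 h2 ⊢
    tauto

theorem tensor_top_mem_genClosure {c : F i} {d : B} (hc : c ≠ ⊥)
    (h : .base d ∈ genClosure r R S) (h' : .tensor i c d ∈ genClosure r R S) :
    .tensor i ⊤ d ∈ genClosure r R S := by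
  refine ⟨fun j N hN hr hS => ?_, fun a N hN ha hS => ?_⟩
  · obtain rfl | hj := eq_or_ne j i
    · exact satBound_tensor_self.2
        (.inr ((satBound_tensor_self.1 (h'.1 j N hN hr hS)).resolve_left hc))
    · exact satBound_tensor_of_ne hj
  · exact (satBox_tensor r).2 ⟨((satBox_tensor r).1 (h'.2 a N hN ha hS)).1,
      .inr ((satBox_base r).1 (h.2 a N hN ha hS))⟩

end Closure

/-! ### Generators versus presentations -/

section Presentation

variable {B X : Type*} [Lattice B] (r : X → B) {F : X → Type*} [∀ i, Lattice (F i)]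
  [∀ i, BoundedOrder (F i)] {R : B → B → Prop} {l : Finset ((∀ i, F i) × B)} {m : X → B}

/-- A finite presentation of a closed set by attributes: the boxes in `l`, and for each `i` the
bound `m i` on the copies of the `i`-th gadget. The condition `le_of_bound_ne` makes presentations
compatible with passing to a quotient of `B`. -/
structure IsPresentation (l : Finset ((∀ i, F i) × B)) (m : X → B) : Prop where
  nonempty : l.Nonempty
  ne_top : ∀ p ∈ l, ∀ i, p.1 i ≠ ⊤
  le_bound : ∀ i, r i ≤ m i
  finite_support : {i | m i ≠ r i}.Finite
  le_of_bound_ne : ∀ i, m i ≠ r i → ∀ p ∈ l, r i ≤ p.2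

/-- The set presented by `l` and `m`, computed modulo the preorder `R`. -/
def presented (R : B → B → Prop) (l : Finset ((∀ i, F i) × B)) (m : X → B) : Set (Gen B F) :=
  {o | (∀ i, SatBound i {x | R x (m i)} o) ∧ ∀ p ∈ l, SatBox r p.1 {x | R x p.2} o}

variable (S : Finset (Gen B F)) (hS : S.Nonempty)

open Classical in
/-- The least bound on the copies of the `i`-th gadget satisfied by a finite set of generators. -/
noncomputable def leastBound (i : X) : B :=
  S.sup' hS fun o => if o.slot i = ⊥ then r i else r i ⊔ o.height

open Classical in
/-- The minimal boxes satisfied by a finite set `S` of generators. To satisfy a box, a generator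
needs either its gadget coordinate or its height to be small; the set `T` in the formula consists
of the generators for which it is the gadget coordinate. -/
noncomputable def minimalBoxes : Finset ((∀ i, F i) × B) :=
  (S.powerset.image fun T => (T.sup Gen.slot,
    S.sup' hS fun o => o.corner r ⊔ if o ∈ T then o.corner r else o.height)).filter
    fun p => ∀ i, p.1 i ≠ ⊤

theorem le_leastBound (i : X) : r i ≤ leastBound r S hS i := by
  obtain ⟨o, ho⟩ := hS
  refine le_trans ?_ (Finset.le_sup' _ ho)
  split_ifs
  exacts [le_rfl, le_sup_left]

variable {S}

theorem satBound_leastBound {o : Gen B F} (ho : o ∈ S) (i : X) :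
    SatBound i (Set.Iic (leastBound r S hS i)) o := by
  by_cases h : o.slot i = ⊥
  · exact .inl h
  · refine .inr (le_trans ?_ (Finset.le_sup' _ ho))
    rw [if_neg h]
    exact le_sup_right

theorem leastBound_mem {i : X} {N : Set B} (hN : IsIdealMod R N) (hr : r i ∈ N)
    (h : ∀ o ∈ S, SatBound i N o) : leastBound r S hS i ∈ N := by
  refine Finset.sup'_induction hS _ (fun _ hx _ hy => hN.sup hx hy) fun o ho => ?_
  split_ifs with hi
  exacts [hr, hN.sup hr ((h o ho).resolve_left hi)]

theorem exists_slot_ne_bot_of_leastBound_ne {i : X} (h : leastBound r S hS i ≠ r i) :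
    ∃ o ∈ S, o.slot i ≠ ⊥ := by
  contrapose! h
  rw [leastBound, Finset.sup'_congr hS rfl fun o ho => if_pos (h o ho), Finset.sup'_const]

theorem ne_top_of_mem_minimalBoxes {p : (∀ i, F i) × B} (hp : p ∈ minimalBoxes r S hS) (i : X) :
    p.1 i ≠ ⊤ := by
  classical exact (Finset.mem_filter.1 hp).2 i

theorem satBox_of_mem_minimalBoxes {p : (∀ i, F i) × B} (hp : p ∈ minimalBoxes r S hS)
    {o : Gen B F} (ho : o ∈ S) : SatBox r p.1 (Set.Iic p.2) o := by
  classical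
  simp only [minimalBoxes, Finset.mem_filter, Finset.mem_image] at hp
  obtain ⟨⟨T, -, rfl⟩, -⟩ := hp
  have hle := Finset.le_sup' (fun o => o.corner r ⊔ if o ∈ T then o.corner r else o.height) ho
  refine ⟨le_sup_left.trans hle, ?_⟩
  by_cases hT : o ∈ T
  · exact .inl (Finset.le_sup hT)
  · refine .inr (le_trans ?_ hle)
    rw [if_neg hT]
    exact le_sup_right

theorem exists_mem_minimalBoxes_le {a : ∀ i, F i} {N : Set B} (ha : ∀ i, a i ≠ ⊤)
    (hN : IsIdealMod R N) (h : ∀ o ∈ S, SatBox r a N o) :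
    ∃ p ∈ minimalBoxes r S hS, p.1 ≤ a ∧ p.2 ∈ N := by
  classical
  set T := S.filter (Gen.slot · ≤ a)
  have hT : T.sup Gen.slot ≤ a := Finset.sup_le fun o ho => (Finset.mem_filter.1 ho).2
  refine ⟨_, Finset.mem_filter.2 ⟨Finset.mem_image_of_mem _
    (Finset.mem_powerset.2 (Finset.filter_subset _ S)), fun i hi => ?_⟩, hT, ?_⟩
  · exact ha i (top_le_iff.1 (hi ▸ hT i))
  · refine Finset.sup'_induction hS _ (fun _ hx _ hy => hN.sup hx hy)
      fun o ho => hN.sup (h o ho).1 ?_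
    split_ifs with hoT
    · exact (h o ho).1
    · exact (h o ho).2.resolve_left fun hle => hoT (Finset.mem_filter.2 ⟨ho, hle⟩)

theorem isPresentation_minimalBoxes [∀ i, Nontrivial (F i)] :
    IsPresentation r (minimalBoxes r S hS) (leastBound r S hS) where
  nonempty := by
    obtain ⟨p, hp, -⟩ := exists_mem_minimalBoxes_le r hS (a := ⊥) (N := Set.univ)
      (fun i => bot_ne_top) (isIdealMod_univ (R := (· ≤ ·))) fun o _ => ⟨trivial, .inr trivial⟩
    exact ⟨p, hp⟩
  ne_top _ := ne_top_of_mem_minimalBoxes r hS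
  le_bound := le_leastBound r S hS
  finite_support := by
    refine (S.finite_toSet.biUnion fun o _ => o.setOf_slot_ne_bot_finite).subset fun i hi => ?_
    obtain ⟨o, ho, hoi⟩ := exists_slot_ne_bot_of_leastBound_ne r hS hi
    exact Set.mem_biUnion ho hoi
  le_of_bound_ne i hi p hp := by
    obtain ⟨o, ho, hoi⟩ := exists_slot_ne_bot_of_leastBound_ne r hS hi
    have hop := (satBox_of_mem_minimalBoxes r hS hp ho).1
    cases o with
    | base d => simp at hoi
    | tensor j c d =>
      obtain rfl : i = j := of_not_not fun h => hoi (Gen.slot_tensor_of_ne h)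
      exact hop

variable {r} in
theorem genClosure_subset_presented {T : Set (Gen B F)} (hR : IsCongPreorder R)
    (hP : IsPresentation r l m) (h : T ⊆ presented r R l m) :
    genClosure r R T ⊆ presented r R l m :=
  fun _ ho => ⟨fun i => ho.1 i _ (hR.isIdealMod _) (hR.of_le (hP.le_bound i))
      fun _ hs => (h hs).1 i,
    fun p hp => ho.2 p.1 _ (hR.isIdealMod _) (hP.ne_top p hp) fun _ hs => (h hs).2 p hp⟩

theorem genClosure_eq_presented [∀ i, Nontrivial (F i)] (hR : IsCongPreorder R) :
    genClosure r R S = presented r R (minimalBoxes r S hS) (leastBound r S hS) := by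
  refine Set.Subset.antisymm
    (genClosure_subset_presented hR (isPresentation_minimalBoxes r hS) fun s hs =>
      ⟨fun i => (satBound_leastBound r hS hs i).mono fun _ => hR.of_le,
        fun p hp => (satBox_of_mem_minimalBoxes r hS hp hs).mono le_rfl fun _ => hR.of_le⟩)
    fun o ho => ⟨fun i N hN hr h => ?_, fun a N hN ha h => ?_⟩
  · exact (ho.1 i).mono fun x hx => hN.down hx (leastBound_mem r hS hN hr h)
  · obtain ⟨p, hp, hpa, hpN⟩ := exists_mem_minimalBoxes_le r hS ha hN h
    exact (ho.2 p hp).mono hpa fun x hx => hN.down hx hpN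

variable (hl : l.Nonempty) (m) {r}

open Classical in
/-- The maximal rectangles of the `i`-th gadget contained in all boxes of `l` and bounded by `m i`;
the set `T` in the formula consists of the boxes entered through the gadget coordinate. -/
noncomputable def maximalRectangles (i : X) : Finset (F i × B) :=
  l.powerset.image fun T =>
    (T.inf fun p => p.1 i,
      l.inf' hl fun p => if p ∈ T then m i else m i ⊓ p.2)

theorem le_of_mem_maximalRectangles {i : X} {q : F i × B} (hq : q ∈ maximalRectangles m hl i) :
    q.2 ≤ m i ∧ ∀ p ∈ l, q.1 ≤ p.1 i ∨ q.2 ≤ p.2 := by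
  classical
  obtain ⟨T, -, rfl⟩ := Finset.mem_image.1 hq
  have hle := fun p (hp : p ∈ l) =>
    Finset.inf'_le (fun p => if p ∈ T then m i else m i ⊓ p.2) hp
  refine ⟨?_, fun p hp => ?_⟩
  · obtain ⟨p, hp⟩ := id hl
    refine (hle p hp).trans ?_
    split_ifs
    exacts [le_rfl, inf_le_left]
  · by_cases hT : p ∈ T
    · exact .inl (Finset.inf_le (f := fun p : (∀ i, F i) × B => p.1 i) hT)
    · exact .inr ((hle p hp).trans ((if_neg hT).trans_le inf_le_right))

theorem exists_mem_maximalRectangles_ge (hR : IsCongPreorder R) {i : X} {c : F i} {d : B}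
    (hd : R d (m i)) (h : ∀ p ∈ l, c ≤ p.1 i ∨ R d p.2) :
    ∃ q ∈ maximalRectangles m hl i, c ≤ q.1 ∧ R d q.2 := by
  classical
  refine ⟨_, Finset.mem_image_of_mem _ (Finset.mem_powerset.2
    (Finset.filter_subset (fun p => c ≤ p.1 i) l)), Finset.le_inf fun p hp =>
    (Finset.mem_filter.1 hp).2, Finset.inf'_induction hl _ (fun _ hx _ hy => hR.inf hx hy)
    fun p hp => ?_⟩
  split_ifs with hT
  · exact hd
  · exact hR.inf hd ((h p hp).resolve_left fun hle => hT (Finset.mem_filter.2 ⟨hp, hle⟩))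

open Classical in
/-- A finite set of generators of the closed set presented by `l` and `m`. -/
noncomputable def presentationGens (hP : IsPresentation r l m) : Finset (Gen B F) :=
  insert (.base (l.inf' hP.nonempty Prod.snd)) (hP.finite_support.toFinset.biUnion fun i =>
    (maximalRectangles m hP.nonempty i).image fun q => .tensor i q.1 q.2)

variable {m}

theorem base_mem_presentationGens (hP : IsPresentation r l m) :
    .base (l.inf' hP.nonempty Prod.snd) ∈ presentationGens m hP := by
  classical exact Finset.mem_insert_self ..

theorem tensor_mem_presentationGens (hP : IsPresentation r l m) {i : X} (hi : m i ≠ r i)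
    {q : F i × B} (hq : q ∈ maximalRectangles m hP.nonempty i) :
    .tensor i q.1 q.2 ∈ presentationGens m hP := by
  classical
  exact Finset.mem_insert_of_mem (Finset.mem_biUnion.2
    ⟨i, hP.finite_support.mem_toFinset.2 hi, Finset.mem_image_of_mem _ hq⟩)

theorem presentationGens_subset_presented (hR : IsCongPreorder R) (hP : IsPresentation r l m) :
    (presentationGens m hP : Set (Gen B F)) ⊆ presented r R l m := by
  classical
  intro o ho
  simp only [presentationGens, Finset.coe_insert, Finset.coe_biUnion, Finset.coe_image,
    Set.mem_insert_iff, Set.mem_iUnion, Set.mem_image, Finset.mem_coe] at ho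
  obtain rfl | ⟨i, hi, q, hq, rfl⟩ := ho
  · exact ⟨fun _ => satBound_base, fun p hp => (satBox_base r).2 (hR.of_le (Finset.inf'_le _ hp))⟩
  · have hq' := le_of_mem_maximalRectangles m hP.nonempty hq
    refine ⟨fun j => ?_, fun p hp =>
      (satBox_tensor r).2 ⟨hR.of_le ?_, (hq'.2 p hp).imp_right hR.of_le⟩⟩
    · obtain rfl | hj := eq_or_ne j i
      · exact satBound_tensor_self.2 (.inr (hR.of_le hq'.1))
      · exact satBound_tensor_of_ne hj
    · exact hP.le_of_bound_ne i (hP.finite_support.mem_toFinset.1 hi) p hp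

theorem presented_eq_genClosure (hR : IsCongPreorder R) (hP : IsPresentation r l m) :
    presented r R l m = genClosure r R (presentationGens m hP) := by
  refine Set.Subset.antisymm (fun o ho => ?_)
    (genClosure_subset_presented hR hP (presentationGens_subset_presented hR hP))
  have hbase := subset_genClosure r R _ (base_mem_presentationGens hP)
  have hcorner : R (o.corner r) (l.inf' hP.nonempty Prod.snd) :=
    Finset.inf'_induction hP.nonempty _ (fun _ hx _ hy => hR.inf hx hy) fun p hp => (ho.2 p hp).1
  cases o with
  | base d => exact base_mem_genClosure hbase hcorner
  | tensor i c d =>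
    obtain hc | hd := satBound_tensor_self.1 (ho.1 i)
    · exact tensor_mem_genClosure_of_base hbase hcorner (.inl hc)
    · by_cases hi : m i = r i
      · exact tensor_mem_genClosure_of_base hbase hcorner (.inr (hi ▸ hd))
      · obtain ⟨q, hq, hc, hdq⟩ := exists_mem_maximalRectangles_ge m hP.nonempty hR hd fun p hp =>
          ((satBox_tensor r).1 (ho.2 p hp)).2
        exact tensor_mem_genClosure
          (subset_genClosure r R _ (tensor_mem_presentationGens hP hi hq)) hc
          (hR.trans hdq (hR.of_le le_sup_left))

theorem IsPresentation.union [DecidableEq ((∀ i, F i) × B)] {l' : Finset ((∀ i, F i) × B)}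
    {m' : X → B} (hP : IsPresentation r l m) (hP' : IsPresentation r l' m') :
    IsPresentation r (l ∪ l') fun i => m i ⊓ m' i := by
  have hne : ∀ i, m i ⊓ m' i ≠ r i → m i ≠ r i ∧ m' i ≠ r i := fun i hi =>
    ⟨fun h => hi (h ▸ inf_eq_left.2 (h ▸ hP'.le_bound i)),
      fun h => hi (h ▸ inf_eq_right.2 (h ▸ hP.le_bound i))⟩
  exact
    { nonempty := hP.nonempty.mono Finset.subset_union_left
      ne_top := fun p hp => (Finset.mem_union.1 hp).elim (hP.ne_top p) (hP'.ne_top p)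
      le_bound := fun i => le_inf (hP.le_bound i) (hP'.le_bound i)
      finite_support := hP.finite_support.subset fun i hi => (hne i hi).1
      le_of_bound_ne := fun i hi p hp => (Finset.mem_union.1 hp).elim
        (hP.le_of_bound_ne i (hne i hi).1 p) (hP'.le_of_bound_ne i (hne i hi).2 p) }

theorem presented_inter_presented [DecidableEq ((∀ i, F i) × B)] {l' : Finset ((∀ i, F i) × B)}
    {m' : X → B} (hR : IsCongPreorder R) :
    presented r R l m ∩ presented r R l' m' =
      presented r R (l ∪ l') fun i => m i ⊓ m' i := by
  have hinf : ∀ d a b, R d (a ⊓ b) ↔ R d a ∧ R d b := fun d a b =>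
    ⟨fun h => ⟨hR.trans h (hR.of_le inf_le_left), hR.trans h (hR.of_le inf_le_right)⟩,
      fun h => hR.inf h.1 h.2⟩
  ext o
  simp only [presented, SatBound, Set.mem_inter_iff, Set.mem_ofPred_eq, hinf, or_and_left,
    forall_and, Finset.mem_union, or_imp]
  tauto

end Presentation

/-! ### The extension of a lattice by gadgets -/

/-- The extension of the lattice `B` by the gadgets `F i` placed above `r i`: the finitely generated
closed sets of generators, ordered by inclusion. -/
@[ext] structure GadgetExt {B X : Type*} [Lattice B] (r : X → B) (F : X → Type*)
    [∀ i, Lattice (F i)] [∀ i, BoundedOrder (F i)] where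
  /-- the closed set of the generators below the element -/
  carrier : Set (Gen B F)
  exists_gens : ∃ S : Finset (Gen B F), S.Nonempty ∧ carrier = genClosure r (· ≤ ·) S

namespace GadgetExt

variable {B X : Type*} [Lattice B] {r : X → B} {F : X → Type*} [∀ i, Lattice (F i)]
  [∀ i, BoundedOrder (F i)]

section Lattice

theorem genClosure_carrier (w : GadgetExt r F) : genClosure r (· ≤ ·) w.carrier = w.carrier := by
  obtain ⟨S, -, h⟩ := w.exists_gens
  rw [h, genClosure_genClosure_le r isCongPreorder_le]

theorem genClosure_subset_carrier {w : GadgetExt r F} {S : Set (Gen B F)} (h : S ⊆ w.carrier) :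
    genClosure r (· ≤ ·) S ⊆ w.carrier := by
  rw [← w.genClosure_carrier]
  exact genClosure_mono r h

instance : PartialOrder (GadgetExt r F) := PartialOrder.lift carrier fun _ _ => GadgetExt.ext

theorem le_def {w w' : GadgetExt r F} : w ≤ w' ↔ w.carrier ⊆ w'.carrier := Iff.rfl

variable (r) in
/-- The element generated by a single generator. -/
def gen (o : Gen B F) : GadgetExt r F :=
  ⟨genClosure r (· ≤ ·) {o}, {o}, Finset.singleton_nonempty o, by rw [Finset.coe_singleton]⟩

theorem gen_le {o : Gen B F} {w : GadgetExt r F} : gen r o ≤ w ↔ o ∈ w.carrier :=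
  ⟨fun h => h (subset_genClosure r _ _ rfl), fun h =>
    genClosure_subset_carrier (Set.singleton_subset_iff.2 h)⟩

theorem le_iff_forall_gen_le {w w' : GadgetExt r F} :
    w ≤ w' ↔ ∀ o, gen r o ≤ w → gen r o ≤ w' :=
  ⟨fun h _ ho => ho.trans h, fun h o ho => gen_le.1 (h o (gen_le.2 ho))⟩

instance : SemilatticeSup (GadgetExt r F) where
  sup w w' := ⟨genClosure r (· ≤ ·) (w.carrier ∪ w'.carrier), by
    classical
    obtain ⟨S, hS, h⟩ := w.exists_gens
    obtain ⟨S', -, h'⟩ := w'.exists_gens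
    refine ⟨S ∪ S', hS.mono Finset.subset_union_left, ?_⟩
    rw [h, h', Finset.coe_union]
    exact (genClosure_subset r (Set.union_subset (genClosure_mono r Set.subset_union_left)
      (genClosure_mono r Set.subset_union_right))).antisymm (genClosure_mono r
        (Set.union_subset_union (subset_genClosure r _ _) (subset_genClosure r _ _)))⟩
  le_sup_left _ _ := Set.subset_union_left.trans (subset_genClosure r _ _)
  le_sup_right _ _ := Set.subset_union_right.trans (subset_genClosure r _ _)
  sup_le _ _ _ h h' := genClosure_subset_carrier (Set.union_subset h h')

theorem carrier_sup (w w' : GadgetExt r F) :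
    (w ⊔ w').carrier = genClosure r (· ≤ ·) (w.carrier ∪ w'.carrier) := rfl

theorem gen_le_gen {o o' : Gen B F} : gen r o ≤ gen r o' ↔ o ∈ genClosure r (· ≤ ·) {o'} := gen_le

theorem gen_le_gen_sup_gen {o o₁ o₂ : Gen B F} :
    gen r o ≤ gen r o₁ ⊔ gen r o₂ ↔ o ∈ genClosure r (· ≤ ·) {o₁, o₂} := by
  refine gen_le.trans (Set.ext_iff.1 (Set.Subset.antisymm (genClosure_subset r (Set.union_subset
    (genClosure_mono r (by simp)) (genClosure_mono r (by simp)))) (genClosure_mono r ?_)) o)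
  rintro _ (rfl | rfl)
  exacts [.inl (subset_genClosure r _ _ rfl), .inr (subset_genClosure r _ _ rfl)]

theorem exists_presentation [∀ i, Nontrivial (F i)] (w : GadgetExt r F) :
    ∃ l m, IsPresentation r l m ∧
      ∀ R, IsCongPreorder R → genClosure r R w.carrier = presented r R l m := by
  obtain ⟨S, hS, h⟩ := w.exists_gens
  refine ⟨_, _, isPresentation_minimalBoxes r hS, fun R hR => ?_⟩
  rw [h, genClosure_genClosure_le r hR, genClosure_eq_presented r hS hR]

variable [∀ i, Nontrivial (F i)]

theorem exists_inter_presentation (w w' : GadgetExt r F) : ∃ l m, IsPresentation r l m ∧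
    ∀ R, IsCongPreorder R → 
      genClosure r R w.carrier ∩ genClosure r R w'.carrier = presented r R l m := by
  classical
  obtain ⟨l, m, hP, h⟩ := w.exists_presentation
  obtain ⟨l', m', hP', h'⟩ := w'.exists_presentation
  refine ⟨l ∪ l', fun i => m i ⊓ m' i, hP.union hP', fun R hR => ?_⟩
  rw [h R hR, h' R hR, presented_inter_presented hR]

instance : Lattice (GadgetExt r F) where
  inf w w' := ⟨w.carrier ∩ w'.carrier, by
    obtain ⟨l, m, hP, h⟩ := exists_inter_presentation w w'
    have h' := h _ isCongPreorder_le
    rw [genClosure_carrier, genClosure_carrier] at h'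
    exact ⟨_, ⟨_, base_mem_presentationGens hP⟩,
      h'.trans (presented_eq_genClosure isCongPreorder_le hP)⟩⟩
  inf_le_left _ _ := Set.inter_subset_left
  inf_le_right _ _ := Set.inter_subset_right
  le_inf _ _ _ h h' := Set.subset_inter h h'

theorem carrier_inf (w w' : GadgetExt r F) : (w ⊓ w').carrier = w.carrier ∩ w'.carrier := rfl

end Lattice

section Rules

variable (r F) in
/-- The embedding of `B`. -/
def base (d : B) : GadgetExt r F := gen r (.base d)

variable (r) in
/-- The gadget element `c` placed over the interval `[r i, r i ⊔ d]`. -/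
def tensor (i : X) (c : F i) (d : B) : GadgetExt r F := gen r (.tensor i c d)

variable {w w' : GadgetExt r F} {i : X} {c c' : F i} {d d' : B}

theorem le_iff : w ≤ w' ↔ (∀ d, base r F d ≤ w → base r F d ≤ w') ∧
    ∀ i (c : F i) d, tensor r i c d ≤ w → tensor r i c d ≤ w' := by
  rw [le_iff_forall_gen_le]
  constructor
  · exact fun h => ⟨fun d => h _, fun i c d => h _⟩
  · rintro ⟨h1, h2⟩ (d | ⟨i, c, d⟩)
    exacts [h1 d, h2 i c d]

@[elab_as_elim]
theorem induction {P : GadgetExt r F → Prop} (base : ∀ d, P (base r F d))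
    (tensor : ∀ i c d, P (tensor r i c d)) (sup : ∀ w w', P w → P w' → P (w ⊔ w'))
    (w : GadgetExt r F) : P w := by
  obtain ⟨S, hS, hw⟩ := w.exists_gens
  have hgen : ∀ o, P (gen r o) := by
    rintro (d | ⟨i, c, d⟩)
    exacts [base d, tensor i c d]
  obtain rfl : w = S.sup' hS (gen r) := le_antisymm
    (by
      rw [le_def, hw]
      exact genClosure_subset_carrier fun o ho => gen_le.1 (Finset.le_sup' (gen r) ho))
    (Finset.sup'_le hS _ fun o ho => gen_le.2 (hw ▸ subset_genClosure r _ _ ho))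
  exact Finset.sup'_induction hS _ (fun _ h _ => sup _ _ h) fun o _ => hgen o

theorem base_mono (h : d ≤ d') : base r F d ≤ base r F d' :=
  gen_le_gen.2 (base_mem_genClosure (subset_genClosure r _ _ (Set.mem_singleton _)) h)

theorem tensor_mono (hc : c ≤ c') (hd : d ≤ d' ⊔ r i) : tensor r i c d ≤ tensor r i c' d' :=
  gen_le_gen.2 (tensor_mem_genClosure (subset_genClosure r _ _ (Set.mem_singleton _)) hc hd)

theorem base_sup (d d' : B) : base r F (d ⊔ d') = base r F d ⊔ base r F d' :=
  le_antisymm (gen_le_gen_sup_gen.2 (base_sup_mem_genClosure (subset_genClosure r _ _ (.inl rfl))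
    (subset_genClosure r _ _ (.inr rfl))))
    (sup_le (base_mono le_sup_left) (base_mono le_sup_right))

theorem base_le_tensor (i : X) (c : F i) (d : B) : base r F (r i) ≤ tensor r i c d :=
  gen_le_gen.2 (base_corner_mem_genClosure (subset_genClosure r _ _ (Set.mem_singleton _)))

theorem base_le_tensor_top (i : X) (d : B) : base r F d ≤ tensor r i (⊤ : F i) d :=
  gen_le_gen.2 (base_mem_genClosure_of_tensor_top (subset_genClosure r _ _ (Set.mem_singleton _)))

theorem tensor_eq_base (h : c = ⊥ ∨ d ≤ r i) : tensor r i c d = base r F (r i) :=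
  (gen_le_gen.2 (tensor_mem_genClosure_of_base (subset_genClosure r _ _ (Set.mem_singleton _))
    le_rfl h)).antisymm (base_le_tensor i c d)

theorem tensor_sup_left (i : X) (c c' : F i) (d : B) :
    tensor r i (c ⊔ c') d = tensor r i c d ⊔ tensor r i c' d :=
  le_antisymm (gen_le_gen_sup_gen.2 (tensor_sup_mem_genClosure
    (subset_genClosure r _ _ (.inl rfl)) (subset_genClosure r _ _ (.inr rfl))))
    (sup_le (tensor_mono le_sup_left le_sup_left) (tensor_mono le_sup_right le_sup_left))

theorem tensor_sup_right (i : X) (c : F i) (d d' : B) :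
    tensor r i c (d ⊔ d') = tensor r i c d ⊔ tensor r i c d' :=
  le_antisymm (gen_le_gen_sup_gen.2 (tensor_mem_genClosure_sup
    (subset_genClosure r _ _ (.inl rfl)) (subset_genClosure r _ _ (.inr rfl))))
    (sup_le (tensor_mono le_rfl (le_sup_left.trans le_sup_left))
      (tensor_mono le_rfl (le_sup_right.trans le_sup_left)))

theorem tensor_sup_corner (i : X) (c : F i) (d : B) :
    tensor r i c (d ⊔ r i) = tensor r i c d :=
  (tensor_mono le_rfl le_rfl).antisymm (tensor_mono le_rfl (le_sup_left.trans le_sup_left))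

theorem tensor_top_le (hc : c ≠ ⊥) (h : base r F d ≤ w) (h' : tensor r i c d ≤ w) :
    tensor r i ⊤ d ≤ w := by
  rw [tensor, gen_le, ← w.genClosure_carrier]
  exact tensor_top_mem_genClosure hc (subset_genClosure r _ _ (gen_le.1 h))
    (subset_genClosure r _ _ (gen_le.1 h'))

theorem tensor_top_le_base_sup (hc : c ≠ ⊥) : tensor r i ⊤ d ≤ base r F d ⊔ tensor r i c d :=
  tensor_top_le hc le_sup_left le_sup_right

end Rules

section Order

variable {i j : X} {c f : F i} {b d y : B}

theorem exists_forall_base_le_iff [∀ i, Nontrivial (F i)] (w : GadgetExt r F) :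
    ∃ ρ : B, ∀ d, base r F d ≤ w ↔ d ≤ ρ := by
  obtain ⟨l, m, hP, h⟩ := w.exists_presentation
  refine ⟨l.inf' hP.nonempty Prod.snd, fun d => ?_⟩
  rw [base, gen_le, ← w.genClosure_carrier, h _ isCongPreorder_le, Finset.le_inf'_iff]
  exact ⟨fun ho p hp => (satBox_base r).1 (ho.2 p hp), fun hd =>
    ⟨fun _ => satBound_base, fun p hp => (satBox_base r).2 (hd p hp)⟩⟩

@[simp] theorem base_le_base [∀ i, Nontrivial (F i)] : base r F b ≤ base r F d ↔ b ≤ d := by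
  refine ⟨fun h => (satBox_base r).1 ((gen_le_gen.1 h).2 ⊥ _ (isIdealMod_Iic d)
    (fun _ => bot_ne_top) ?_), base_mono⟩
  simp

theorem base_injective [∀ i, Nontrivial (F i)] : Function.Injective (base r F) :=
  fun _ _ h => le_antisymm (base_le_base.1 h.le) (base_le_base.1 h.ge)

theorem tensor_le_base [∀ i, Nontrivial (F i)] :
    tensor r i c b ≤ base r F d ↔ r i ≤ d ∧ (c = ⊥ ∨ b ≤ r i) := by
  refine ⟨fun h => ⟨base_le_base.1 ((base_le_tensor i c b).trans h), ?_⟩, fun ⟨h1, h2⟩ => ?_⟩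
  · exact satBound_tensor_self.1
      ((gen_le_gen.1 h).1 i _ (isIdealMod_Iic (r i)) Set.self_mem_Iic (by simp))
  · exact (tensor_eq_base h2).trans_le (base_mono h1)

variable (r) in
/-- The copy of the gadget element `c` over the interval `[y, d]`, where `r i ≤ y ≤ d`. -/
def copy (i : X) (y d : B) (c : F i) : GadgetExt r F := tensor r i c d ⊔ tensor r i ⊤ y

theorem copy_corner (i : X) (d : B) (c : F i) : copy r i (r i) (d ⊔ r i) c = tensor r i c d := by
  rw [copy, tensor_eq_base (.inr le_rfl), sup_eq_left.2 (base_le_tensor ..), tensor_sup_corner]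

theorem copy_sup (i : X) (y d : B) (c f : F i) :
    copy r i y d (c ⊔ f) = copy r i y d c ⊔ copy r i y d f := by
  rw [copy, copy, copy, tensor_sup_left, sup_sup_sup_comm, sup_idem]

theorem copy_bot (hy : r i ≤ y) : copy r i y d (⊥ : F i) = tensor r i ⊤ y := by
  rw [copy, tensor_eq_base (.inl rfl), sup_eq_right]
  exact (base_mono hy).trans (base_le_tensor_top i y)

theorem copy_mono (h : c ≤ f) : copy r i y d c ≤ copy r i y d f :=
  sup_le_sup_right (tensor_mono h le_sup_left) _

theorem satBound_of_gen_le_copy {o : Gen B F} (ho : gen r o ≤ copy r i y d c) (hy : r i ≤ y)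
    (hd : y ≤ d) : SatBound i (Set.Iic d) o :=
  (gen_le_gen_sup_gen.1 ho).1 i _ (isIdealMod_Iic d) (hy.trans hd) (by simp [hd])

theorem satBound_of_gen_le_copy_of_ne {o : Gen B F} (ho : gen r o ≤ copy r i y d c) (hj : j ≠ i) :
    SatBound j (Set.Iic (r j)) o :=
  (gen_le_gen_sup_gen.1 ho).1 j _ (isIdealMod_Iic _) Set.self_mem_Iic
    (by simp [satBound_tensor_of_ne hj])

theorem tensor_le_copy_of_ne {c : F j} (hj : j ≠ i) :
    tensor r j c b ≤ copy r i y d f ↔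
      (c = ⊥ ∨ b ≤ r j) ∧ base r F (r j) ≤ copy r i y d f :=
  ⟨fun h => ⟨satBound_tensor_self.1 (satBound_of_gen_le_copy_of_ne h hj),
    (base_le_tensor j c b).trans h⟩, fun ⟨h1, h2⟩ => (tensor_eq_base h1).trans_le h2⟩

theorem eq_of_tensor_le_tensor {c : F j} (h : tensor r j c b ≤ tensor r i f d) (hc : c ≠ ⊥)
    (hb : ¬ b ≤ r j) : j = i := by
  rw [← copy_corner i d f] at h
  by_contra hj
  exact ((tensor_le_copy_of_ne hj).1 h).1.elim hc hb

open Classical in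
theorem satBox_of_gen_le_copy [∀ i, Nontrivial (F i)] {o : Gen B F}
    (ho : gen r o ≤ copy r i y d c) (hy : r i ≤ y) (hc : c ≠ ⊤) :
    SatBox r (Function.update ⊥ i c) (Set.Iic y) o :=
  (gen_le_gen_sup_gen.1 ho).2 _ _ (isIdealMod_Iic y)
    ((Function.forall_update_iff _ fun _ b => b ≠ ⊤).2 ⟨hc, fun _ _ => bot_ne_top⟩) (by simp [hy])

theorem base_le_of_base_le_copy [∀ i, Nontrivial (F i)] (h : base r F b ≤ copy r i y d c)
    (hy : r i ≤ y) (hd : y ≤ d) : b ≤ d :=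
  (satBox_base r).1 ((gen_le_gen_sup_gen.1 h).2 ⊥ _ (isIdealMod_Iic d) (fun _ => bot_ne_top)
    (by simp [hd, hy.trans hd]))

variable [∀ i, Nontrivial (F i)]

theorem tensor_le_copy (hy : r i ≤ y) (hd : y ≤ d) :
    tensor r i c b ≤ copy r i y d f ↔ c = ⊥ ∨ b ≤ d ∧ (c ≤ f ∨ b ≤ y) := by
  constructor
  · intro h
    refine (satBound_tensor_self.1 (satBound_of_gen_le_copy h hy hd)).imp_right fun hb => ⟨hb, ?_⟩
    obtain rfl | hf := eq_or_ne f ⊤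
    · exact .inl le_top
    · simpa using ((satBox_tensor r).1 (satBox_of_gen_le_copy h hy hf)).2
  · rintro (h | ⟨h1, h2 | h2⟩)
    · exact ((tensor_eq_base (.inl h)).trans_le (base_le_tensor i f d)).trans le_sup_left
    · exact (tensor_mono h2 (h1.trans le_sup_left)).trans le_sup_left
    · exact (tensor_mono le_top (h2.trans le_sup_left)).trans le_sup_right

theorem base_le_copy (hy : r i ≤ y) (hd : y ≤ d) :
    base r F b ≤ copy r i y d f ↔ b ≤ y ∨ f = ⊤ ∧ b ≤ d := by
  constructor
  · intro h
    obtain rfl | hf := eq_or_ne f ⊤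
    · exact .inr ⟨rfl, base_le_of_base_le_copy h hy hd⟩
    · exact .inl ((satBox_base r).1 (satBox_of_gen_le_copy h hy hf))
  · rintro (h | ⟨rfl, h⟩)
    · exact ((base_mono h).trans (base_le_tensor_top i y)).trans le_sup_right
    · exact ((base_mono h).trans (base_le_tensor_top i d)).trans le_sup_left

theorem base_le_tensor_iff : base r F b ≤ tensor r i f d ↔ b ≤ r i ∨ f = ⊤ ∧ b ≤ d ⊔ r i := by
  rw [← copy_corner, base_le_copy le_rfl le_sup_right]

theorem tensor_le_tensor :
    tensor r i c b ≤ tensor r i f d ↔ c = ⊥ ∨ b ≤ r i ∨ c ≤ f ∧ b ≤ d ⊔ r i := by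
  rw [← copy_corner i d f, tensor_le_copy le_rfl le_sup_right]
  have := (le_sup_right : r i ≤ d ⊔ r i)
  grind

theorem copy_inf (hy : r i ≤ y) (hd : y ≤ d) (c f : F i) :
    copy r i y d (c ⊓ f) = copy r i y d c ⊓ copy r i y d f := by
  have hbase {b} (hc : base r F b ≤ copy r i y d c) (hf : base r F b ≤ copy r i y d f) :
      base r F b ≤ copy r i y d (c ⊓ f) := by
    rw [base_le_copy hy hd] at *
    rw [inf_eq_top_iff]
    tauto
  refine (le_inf (copy_mono inf_le_left) (copy_mono inf_le_right)).antisymm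
    (le_iff.2 ⟨fun b hb => hbase (hb.trans inf_le_left) (hb.trans inf_le_right),
      fun j e b hb => ?_⟩)
  rw [le_inf_iff] at hb
  obtain rfl | hj := eq_or_ne j i
  · rw [tensor_le_copy hy hd, tensor_le_copy hy hd] at hb
    rw [tensor_le_copy hy hd, le_inf_iff]
    tauto
  · rw [tensor_le_copy_of_ne hj, tensor_le_copy_of_ne hj] at hb
    exact (tensor_le_copy_of_ne hj).2 ⟨hb.1.1, hbase hb.1.2 hb.2.2⟩

theorem tensor_inf (i : X) (c f : F i) (b d : B) :
    tensor r i c b ⊓ tensor r i f d = tensor r i (c ⊓ f) ((b ⊔ r i) ⊓ (d ⊔ r i)) := by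
  have hbase {e} (he : base r F e ≤ tensor r i c b) (he' : base r F e ≤ tensor r i f d) :
      base r F e ≤ tensor r i (c ⊓ f) ((b ⊔ r i) ⊓ (d ⊔ r i)) := by
    rw [base_le_tensor_iff] at *
    rw [inf_eq_top_iff, sup_eq_left.2 (le_inf le_sup_right le_sup_right), le_inf_iff]
    tauto
  refine le_antisymm (le_iff.2 ⟨fun e he => hbase (he.trans inf_le_left) (he.trans inf_le_right),
    fun j e a ha => ?_⟩) (le_inf (tensor_mono inf_le_left inf_le_left)
      (tensor_mono inf_le_right inf_le_right))
  rw [le_inf_iff] at ha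
  by_cases htriv : e = ⊥ ∨ a ≤ r j
  · rw [tensor_eq_base htriv] at ha ⊢
    exact hbase ha.1 ha.2
  · push Not at htriv
    obtain rfl := eq_of_tensor_le_tensor ha.1 htriv.1 htriv.2
    rw [tensor_le_tensor, tensor_le_tensor] at ha
    refine tensor_mono (le_inf ?_ ?_) ((le_inf ?_ ?_).trans le_sup_left) <;> tauto

theorem base_inf (b d : B) : base r F (b ⊓ d) = base r F b ⊓ base r F d := by
  refine (le_inf (base_mono inf_le_left) (base_mono inf_le_right)).antisymm (le_iff.2
    ⟨fun e he => ?_, fun j e a ha => ?_⟩)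
  · rw [le_inf_iff, base_le_base, base_le_base] at he
    exact base_mono (le_inf he.1 he.2)
  · rw [le_inf_iff, tensor_le_base, tensor_le_base] at ha
    exact tensor_le_base.2 ⟨le_inf ha.1.1 ha.2.1, ha.1.2⟩

theorem mem_range_base {w : GadgetExt r F} :
    w ∈ Set.range (base r F) ↔ ∀ i (c : F i) d, tensor r i c d ≤ w → c = ⊥ ∨ d ≤ r i := by
  constructor
  · rintro ⟨b, rfl⟩ i c d h
    exact (tensor_le_base.1 h).2
  · intro h
    obtain ⟨ρ, hρ⟩ := exists_forall_base_le_iff w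
    exact ⟨ρ, le_antisymm ((hρ ρ).2 le_rfl) (le_iff.2 ⟨fun d hd => base_mono ((hρ d).1 hd),
      fun i c d hd => tensor_le_base.2 ⟨(hρ _).1 ((base_le_tensor i c d).trans hd), h i c d hd⟩⟩)⟩

theorem mem_range_base_of_le {w : GadgetExt r F} (h : w ≤ base r F d) :
    w ∈ Set.range (base r F) :=
  mem_range_base.2 fun _ _ _ he => (tensor_le_base.1 (he.trans h)).2

end Order

end GadgetExt

/-! ### Congruences -/

section Congruence

variable {L : Type*} [Lattice L] {θ : L → L → Prop}

/-- The order of a lattice modulo a congruence. -/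
def ConLE (θ : L → L → Prop) (a b : L) : Prop := θ (a ⊔ b) b

theorem isCongPreorder_conLE (h : LatCon L θ) : IsCongPreorder (ConLE θ) := by
  obtain ⟨⟨hr, hs, ht⟩, hc⟩ := h
  refine ⟨fun {a b} hab => ?_, fun {a b c} h1 h2 => ?_, fun {a b c} h1 h2 => ?_,
    fun {a b c} h1 h2 => ?_⟩
  · rw [ConLE, sup_eq_right.2 hab]
    exact hr b
  · have h3 := (hc _ _ _ _ (hr a) h2).1
    have h4 := (hc _ _ _ _ h1 (hr c)).1
    rw [sup_assoc] at h4
    exact ht (hs h3) (ht h4 h2)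
  · have h3 := (hc _ _ _ _ h1 h2).1
    rwa [sup_sup_sup_comm, sup_idem] at h3
  · have h3 := (hc _ _ _ _ h1 h2).2
    have h4 := (hc _ _ _ _ (hr (c ⊔ a ⊓ b)) h3).2
    rwa [inf_eq_left.2 (le_inf (sup_le_sup_left inf_le_left c) (sup_le_sup_left inf_le_right c)),
      inf_eq_right.2 (le_sup_right : a ⊓ b ≤ c ⊔ a ⊓ b)] at h4

theorem iff_conLE_and_conLE (h : LatCon L θ) (a b : L) : θ a b ↔ ConLE θ a b ∧ ConLE θ b a := by
  obtain ⟨⟨hr, hs, ht⟩, hc⟩ := h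
  constructor
  · intro h
    have h1 := (hc _ _ _ _ h (hr b)).1
    have h2 := (hc _ _ _ _ (hs h) (hr a)).1
    rw [sup_idem] at h1 h2
    exact ⟨h1, h2⟩
  · rintro ⟨h1, h2⟩
    rw [ConLE, sup_comm] at h2
    exact ht (hs h2) h1

/-- Simplicity of a bounded lattice: the only congruence preorders are `≤` and the total one. -/
def IsCongSimple (L : Type*) [Lattice L] [BoundedOrder L] : Prop :=
  ∀ S : L → L → Prop, IsCongPreorder S → ∀ a b, S a b → ¬ a ≤ b → S ⊤ ⊥

/-- A lattice that contains two disjoint nonzero elements. -/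
def HasDisjointPair (L : Type*) [Lattice L] [BoundedOrder L] : Prop :=
  ∃ a b : L, a ≠ ⊥ ∧ b ≠ ⊥ ∧ Disjoint a b

theorem HasDisjointPair.exists_le_ne [BoundedOrder L] (hL : HasDisjointPair L) {c : L}
    (hc : c ≠ ⊥) : ∃ c' ≤ c, c' ≠ ⊥ ∧ c' ≠ ⊤ := by
  obtain rfl | hct := eq_or_ne c ⊤
  · obtain ⟨a, b, ha, hb, hab⟩ := hL
    exact ⟨a, le_top, ha, fun h => hb (top_disjoint.1 (h ▸ hab))⟩
  · exact ⟨c, le_rfl, hc, hct⟩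

end Congruence

theorem CPEmb.comp {L M N : Type*} [Lattice L] [Lattice M] [Lattice N] {f : L → M} {g : M → N}
    (hf : CPEmb L M f) (hg : CPEmb M N g) : CPEmb L N (g ∘ f) := by
  obtain ⟨f_inj, f_sup, f_inf, f_ext⟩ := hf
  obtain ⟨g_inj, g_sup, g_inf, g_ext⟩ := hg
  refine ⟨g_inj.comp f_inj, fun x y => by simp [f_sup, g_sup], fun x y => by simp [f_inf, g_inf],
    fun θ hθ => ?_⟩
  obtain ⟨Φ, ⟨hΦ, hΦθ⟩, Φ_unique⟩ := f_ext θ hθ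
  obtain ⟨Ψ, ⟨hΨ, hΨΦ⟩, Ψ_unique⟩ := g_ext Φ hΦ
  refine ⟨Ψ, ⟨hΨ, fun x y => (hΨΦ _ _).trans (hΦθ x y)⟩, fun Ω ⟨hΩ, hΩθ⟩ => ?_⟩
  have hΩΦ : (fun x y => Ω (g x) (g y)) = Φ := by
    refine Φ_unique _ ⟨⟨⟨fun _ => hΩ.1.1 _, hΩ.1.2, hΩ.1.3⟩, fun a b c d h1 h2 => ?_⟩, hΩθ⟩
    simpa only [g_sup, g_inf] using hΩ.2 _ _ _ _ h1 h2
  exact Ψ_unique Ω ⟨hΩ, fun x y => by rw [← hΩΦ]⟩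

namespace GadgetExt

variable {B X : Type*} [Lattice B] {r : X → B} {F : X → Type*} [∀ i, Lattice (F i)]
  [∀ i, BoundedOrder (F i)]

section Extension

variable {R : B → B → Prop}

theorem gen_carrier_subset (hR : IsCongPreorder R) {o : Gen B F} {w : GadgetExt r F} :
    (gen r o).carrier ⊆ genClosure r R w.carrier ↔ o ∈ genClosure r R w.carrier := by
  refine ⟨fun h => h (gen_le.1 le_rfl), fun h => (genClosure_le_subset r hR _).trans
    (genClosure_subset r (Set.singleton_subset_iff.2 h))⟩

theorem genClosure_carrier_sup (hR : IsCongPreorder R) (w w' : GadgetExt r F) :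
    genClosure r R (w ⊔ w').carrier =
      genClosure r R (genClosure r R w.carrier ∪ genClosure r R w'.carrier) := by
  rw [carrier_sup, genClosure_genClosure_le r hR]
  exact (genClosure_mono r (Set.union_subset_union (subset_genClosure r R _)
    (subset_genClosure r R _))).antisymm (genClosure_subset r (Set.union_subset
      (genClosure_mono r Set.subset_union_left) (genClosure_mono r Set.subset_union_right)))

variable [∀ i, Nontrivial (F i)]

theorem genClosure_carrier_inf (hR : IsCongPreorder R) (w w' : GadgetExt r F) :
    genClosure r R (w ⊓ w').carrier = genClosure r R w.carrier ∩ genClosure r R w'.carrier := by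
  obtain ⟨l, m, hP, h⟩ := exists_inter_presentation w w'
  have hle := h _ isCongPreorder_le
  rw [genClosure_carrier, genClosure_carrier, presented_eq_genClosure isCongPreorder_le hP] at hle
  rw [carrier_inf, hle, genClosure_genClosure_le r hR, h R hR, presented_eq_genClosure hR hP]

theorem latCon_genClosure (hR : IsCongPreorder R) :
    LatCon (GadgetExt r F) fun w w' => genClosure r R w.carrier = genClosure r R w'.carrier := by
  refine ⟨⟨fun _ => rfl, Eq.symm, Eq.trans⟩, fun a b c d h1 h2 => ?_⟩
  simp only [genClosure_carrier_sup hR, genClosure_carrier_inf hR, h1, h2, and_self]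

theorem base_carrier_subset_iff (hR : IsCongPreorder R) {a b : B} :
    (base r F a).carrier ⊆ genClosure r R (base r F b).carrier ↔ R a b := by
  rw [base, gen_carrier_subset hR, base, gen, genClosure_genClosure_le r hR]
  refine ⟨fun h => (satBox_base r).1 (h.2 ⊥ _ (hR.isIdealMod b) (fun _ => bot_ne_top) ?_),
    fun h => base_mem_genClosure (subset_genClosure r R _ (Set.mem_singleton _)) h⟩
  simp [hR.refl b]

end Extension

section Uniqueness

variable [∀ i, Nontrivial (F i)] {S : GadgetExt r F → GadgetExt r F → Prop} {i : X} {c f : F i}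
  {d y : B} {w w' : GadgetExt r F}

theorem isCongPreorder_preimage_base (hS : IsCongPreorder S) :
    IsCongPreorder (base r F ⁻¹'o S) where
  of_le h := hS.of_le (base_mono h)
  trans := hS.trans
  sup h h' := by
    rw [Order.Preimage, base_sup]
    exact hS.sup h h'
  inf h h' := by
    rw [Order.Preimage, base_inf]
    exact hS.inf h h'

theorem rel_of_forall_gen (hS : IsCongPreorder S) (h : ∀ o, gen r o ≤ w → S (gen r o) w') :
    S w w' := by
  induction w using induction with
  | base d => exact h _ le_rfl
  | tensor i c d => exact h _ le_rfl
  | sup w v hw hv =>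
    exact hS.sup (hw fun o ho => h o (ho.trans le_sup_left))
      (hv fun o ho => h o (ho.trans le_sup_right))

theorem exists_base_le_of_rel (hS : IsCongPreorder S) (h : S (base r F d) w) :
    ∃ e, base r F e ≤ w ∧ S (base r F d) (base r F e) := by
  obtain ⟨e, he⟩ := mem_range_base_of_le (inf_le_left : base r F d ⊓ w ≤ _)
  exact ⟨e, he.trans_le inf_le_right, he ▸ hS.inf (hS.refl _) h⟩

/-- The elements `c` and `f` of a disjoint pair are collapsed one after the other: modulo `S`, the
top over `[y, d]` is the copy of `f`, so the copy of `c` is below the copy of `c ⊓ f = ⊥`. -/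
theorem rel_tensor_top_of_le (hS : IsCongPreorder S) (hF : HasDisjointPair (F i)) (hy : r i ≤ y)
    (hd : y ≤ d) (h : S (base r F d) (base r F y)) : S (tensor r i ⊤ d) (tensor r i ⊤ y) := by
  obtain ⟨c, f, hc, hf, hcf⟩ := hF
  have hbase : S (base r F d) (tensor r i ⊤ y) := hS.trans_le h (base_le_tensor_top i y)
  have hf_top : S (tensor r i ⊤ d) (copy r i y d f) :=
    hS.le_trans (tensor_top_le_base_sup hf)
      (hS.sup (hS.trans_le hbase le_sup_right) (hS.of_le le_sup_left))
  have hc_bot : S (tensor r i c d) (tensor r i ⊤ y) := by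
    rw [← copy_bot (d := d) hy, ← hcf.eq_bot, copy_inf hy hd]
    exact hS.inf (hS.of_le le_sup_left) (hS.le_trans (tensor_mono le_top le_sup_left) hf_top)
  exact hS.le_trans (tensor_top_le_base_sup hc) (hS.sup hbase hc_bot)

theorem rel_tensor_top (hS : IsCongPreorder S) (hF : HasDisjointPair (F i))
    (h : S (base r F d) (base r F y)) : S (tensor r i ⊤ d) (tensor r i ⊤ y) := by
  rw [← tensor_sup_corner i ⊤ y]
  refine hS.le_trans (tensor_mono le_rfl (le_sup_left.trans le_sup_left))
    (rel_tensor_top_of_le hS hF le_sup_right (le_sup_right : _ ≤ d ⊔ (y ⊔ r i)) ?_)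
  rw [base_sup]
  exact hS.sup (hS.trans_le h (base_mono le_sup_left)) (hS.refl _)

theorem rel_tensor (hS : IsCongPreorder S) (hF : HasDisjointPair (F i))
    (h : S (base r F d) (base r F y)) : S (tensor r i c d) (tensor r i c y) := by
  have hinf : S (tensor r i c d) (tensor r i c (d ⊔ y) ⊓ tensor r i ⊤ y) :=
    hS.inf (hS.of_le (tensor_mono le_rfl (le_sup_left.trans le_sup_left)))
      (hS.le_trans (tensor_mono le_top le_sup_left) (rel_tensor_top hS hF h))
  refine hS.trans_le hinf ?_
  rw [tensor_inf, inf_top_eq]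
  exact tensor_mono le_rfl inf_le_right

theorem rel_of_mem_genClosure (hS : IsCongPreorder S) (hF : ∀ i, HasDisjointPair (F i))
    {o : Gen B F} (h : o ∈ genClosure r (base r F ⁻¹'o S) w.carrier) : S (gen r o) w := by
  have hR := isCongPreorder_preimage_base hS
  obtain ⟨l, m, hP, hw⟩ := w.exists_presentation
  have hgens : ∀ s ∈ presentationGens m hP, gen r s ≤ w := fun s hs => by
    rw [gen_le, ← w.genClosure_carrier, hw _ isCongPreorder_le,
      presented_eq_genClosure isCongPreorder_le hP]
    exact subset_genClosure r _ _ hs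
  rw [hw _ hR] at h
  have hcorner : S (base r F (o.corner r)) w :=
    hS.trans_le (Finset.inf'_induction hP.nonempty (p := (base r F ⁻¹'o S) (o.corner r)) _
      (fun _ hx _ hy => hR.inf hx hy) fun p hp => (h.2 p hp).1)
      (hgens _ (base_mem_presentationGens hP))
  cases o with
  | base d => exact hcorner
  | tensor i c d =>
    change S (tensor r i c d) w
    obtain rfl | hd := satBound_tensor_self.1 (h.1 i)
    · rwa [tensor_eq_base (.inl rfl)]
    · by_cases hi : m i = r i
      · rw [hi] at hd
        refine hS.trans (rel_tensor hS (hF i) hd) ?_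
        rwa [tensor_eq_base (.inr le_rfl)]
      · obtain ⟨q, hq, hcq, hdq⟩ := exists_mem_maximalRectangles_ge m hP.nonempty hR hd fun p hp =>
          ((satBox_tensor r).1 (h.2 p hp)).2
        exact hS.trans_le (rel_tensor hS (hF i) hdq) ((tensor_mono hcq le_sup_left).trans
          (hgens _ (tensor_mem_presentationGens hP hi hq)))

theorem rel_base_of_rel_copy (hS : IsCongPreorder S) (hF : IsCongSimple (F i)) (hy : r i ≤ y)
    (hd : y ≤ d) (hcf : ¬ c ≤ f) (h : S (tensor r i c d) (copy r i y d f)) :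
    S (base r F d) (base r F y) := by
  have hcopy : IsCongPreorder (copy r i y d ⁻¹'o S) :=
    ⟨fun h => hS.of_le (copy_mono h), hS.trans, fun h h' => by
      rw [Order.Preimage, copy_sup]
      exact hS.sup h h', fun h h' => by
      rw [Order.Preimage, copy_inf hy hd]
      exact hS.inf h h'⟩
  have htop : S (copy r i y d ⊤) (copy r i y d ⊥) :=
    hF _ hcopy c f (hS.sup h (hS.of_le le_sup_right)) hcf
  rw [copy_bot hy] at htop
  obtain ⟨e, he, hde⟩ := exists_base_le_of_rel hS
    (hS.le_trans ((base_le_tensor_top i d).trans le_sup_left) htop)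
  refine hS.trans_le hde (base_mono ((base_le_tensor_iff.1 he).elim (·.trans hy) fun h => ?_))
  exact h.2.trans (sup_le le_rfl hy)

theorem tensor_inf_le_copy (hy : r i ≤ y) (hd : y ≤ d)
    (hbase : c = ⊤ → ∀ b ≤ d, base r F b ≤ w → b ≤ y)
    (htensor : ∀ e b, e ≠ ⊥ → b ≤ d → tensor r i e b ≤ w → e ≤ f ∨ b ≤ y) :
    tensor r i c d ⊓ w ≤ copy r i y d f := by
  have hb {b} (h : base r F b ≤ tensor r i c d) (hw : base r F b ≤ w) :
      base r F b ≤ copy r i y d f := by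
    refine (base_le_copy hy hd).2 (.inl ?_)
    obtain h | ⟨hc, h⟩ := base_le_tensor_iff.1 h
    · exact h.trans hy
    · exact hbase hc b (h.trans (sup_le le_rfl (hy.trans hd))) hw
  refine le_iff.2 ⟨fun b h => hb (h.trans inf_le_left) (h.trans inf_le_right), fun j e b h => ?_⟩
  rw [le_inf_iff] at h
  by_cases htriv : e = ⊥ ∨ b ≤ r j
  · rw [tensor_eq_base htriv] at h ⊢
    exact hb h.1 h.2
  · push Not at htriv
    obtain rfl := eq_of_tensor_le_tensor h.1 htriv.1 htriv.2
    have hbd := (((tensor_le_tensor.1 h.1).resolve_left htriv.1).resolve_left htriv.2).2.trans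
      (sup_le le_rfl (hy.trans hd))
    exact (tensor_le_copy hy hd).2 (.inr ⟨hbd, htensor e b htriv.1 hbd h.2⟩)

theorem rel_base_of_rel_tensor (hS : IsCongPreorder S) (hF : IsCongSimple (F i)) (hcf : ¬ c ≤ f)
    (h : S (tensor r i c d) w) (hy : r i ≤ y)
    (hbase : c = ⊤ → ∀ b, base r F b ≤ w → b ≤ y)
    (htensor : ∀ e b, e ≠ ⊥ → tensor r i e b ≤ w → e ≤ f ∨ b ≤ y) :
    S (base r F d) (base r F y) := by
  have hcopy : tensor r i c (d ⊔ r i) ⊓ w ≤ copy r i ((d ⊔ r i) ⊓ y) (d ⊔ r i) f :=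
    tensor_inf_le_copy (le_inf le_sup_right hy) inf_le_left
      (fun hc b hb hbw => le_inf hb (hbase hc b hbw))
      fun e b he hb hbw => (htensor e b he hbw).imp_right (le_inf hb)
  rw [← tensor_sup_corner] at h
  exact hS.le_trans (base_mono le_sup_left) (hS.trans_le
    (rel_base_of_rel_copy hS hF (le_inf le_sup_right hy) inf_le_left hcf
      (hS.trans_le (hS.inf (hS.refl _) h) hcopy)) (base_mono inf_le_right))

theorem mem_genClosure_of_rel (hS : IsCongPreorder S) (hF : ∀ i, IsCongSimple (F i))
    (hD : ∀ i, HasDisjointPair (F i)) {o : Gen B F} (h : S (gen r o) w) :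
    o ∈ genClosure r (base r F ⁻¹'o S) w.carrier := by
  have hR := isCongPreorder_preimage_base hS
  obtain ⟨l, m, hP, hw⟩ := w.exists_presentation
  rw [hw _ hR]
  have hmem {o} (ho : gen r o ≤ w) : o ∈ presented r (· ≤ ·) l m := by
    rwa [gen_le, ← w.genClosure_carrier, hw _ isCongPreorder_le] at ho
  have hbase {d} (hd : base r F d ≤ w) {p} (hp : p ∈ l) : d ≤ p.2 :=
    (satBox_base r).1 ((hmem hd).2 p hp)
  have hcorner : ∀ p ∈ l, S (base r F (o.corner r)) (base r F p.2) := fun p hp => by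
    obtain ⟨e, he, hde⟩ := exists_base_le_of_rel hS (hS.le_trans
      (gen_le_gen.2 (base_corner_mem_genClosure (subset_genClosure r _ _ rfl))) h)
    exact hS.trans_le hde (base_mono (hbase he hp))
  cases o with
  | base d => exact ⟨fun _ => satBound_base, fun p hp => (satBox_base r).2 (hcorner p hp)⟩
  | tensor i c d =>
    change S (tensor r i c d) w at h
    have hbound : c = ⊥ ∨ S (base r F d) (base r F (m i)) := or_iff_not_imp_left.2 fun hc => by
      obtain ⟨c', hc', hc'_bot, hc'_top⟩ := (hD i).exists_le_ne hc
      exact rel_base_of_rel_tensor hS (hF i) (f := ⊥) (by rwa [le_bot_iff])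
        (hS.le_trans (tensor_mono hc' le_sup_left) h) (hP.le_bound i) (absurd · hc'_top)
        fun e b he hb => .inr ((satBound_tensor_self.1 ((hmem hb).1 i)).resolve_left he)
    refine ⟨fun j => ?_, fun p hp => (satBox_tensor r).2 ⟨hcorner p hp, ?_⟩⟩
    · obtain rfl | hj := eq_or_ne j i
      · exact satBound_tensor_self.2 hbound
      · exact satBound_tensor_of_ne hj
    · refine or_iff_not_imp_left.2 fun hcp => ?_
      by_cases hi : m i = r i
      · obtain rfl | hd := hbound
        · exact absurd bot_le hcp
        · rw [hi] at hd
          exact hS.trans hd (hcorner p hp)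
      · exact rel_base_of_rel_tensor hS (hF i) hcp h (hP.le_of_bound_ne i hi p hp)
          (fun _ b hb => hbase hb hp) fun e b _ hb => ((satBox_tensor r).1 ((hmem hb).2 p hp)).2

theorem rel_iff_subset_genClosure (hS : IsCongPreorder S) (hF : ∀ i, IsCongSimple (F i))
    (hD : ∀ i, HasDisjointPair (F i)) :
    S w w' ↔ w.carrier ⊆ genClosure r (base r F ⁻¹'o S) w'.carrier :=
  ⟨fun h _ ho => mem_genClosure_of_rel hS hF hD (hS.le_trans (gen_le.2 ho) h),
    fun h => rel_of_forall_gen hS fun _ ho => rel_of_mem_genClosure hS hD (h (gen_le.1 ho))⟩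

end Uniqueness

theorem genClosure_eq_iff {R : B → B → Prop} {S T : Set (Gen B F)} :
    genClosure r R S = genClosure r R T ↔ S ⊆ genClosure r R T ∧ T ⊆ genClosure r R S :=
  ⟨fun h => ⟨h ▸ subset_genClosure r _ _, h ▸ subset_genClosure r _ _⟩,
    fun h => (genClosure_subset r h.1).antisymm (genClosure_subset r h.2)⟩

theorem cpEmb_base [∀ i, Nontrivial (F i)] (hF : ∀ i, IsCongSimple (F i))
    (hD : ∀ i, HasDisjointPair (F i)) : CPEmb B (GadgetExt r F) (base r F) := by
  refine ⟨base_injective, base_sup, base_inf, fun θ hθ => ?_⟩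
  have hR := isCongPreorder_conLE hθ
  refine ⟨_, ⟨latCon_genClosure hR, fun x y => ?_⟩, fun Θ ⟨hΘ, hΘθ⟩ => ?_⟩
  · rw [genClosure_eq_iff, base_carrier_subset_iff hR, base_carrier_subset_iff hR,
      iff_conLE_and_conLE hθ]
  · have hpre : base r F ⁻¹'o ConLE Θ = ConLE θ := by
      ext a b
      rw [Order.Preimage, ConLE, ← base_sup, hΘθ, ConLE]
    have hS := isCongPreorder_conLE hΘ
    ext w w'
    rw [iff_conLE_and_conLE hΘ, genClosure_eq_iff, rel_iff_subset_genClosure hS hF hD,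
      rel_iff_subset_genClosure hS hF hD, hpre]

end GadgetExt

/-! ### Double combs -/

open Cardinal

/-- Two combs with common roof. Each of them has a spine, descending along the indices of one
colour, with a tooth attached to every element of the spine. -/
inductive Comb {I : Type*} (col : I → Bool)
  | bot : Comb col
  | top : Comb col
  | roof : Comb col
  | spine (i : I) : Comb col
  | tooth (i : I) : Comb col

/-- An element that is the join of two smaller elements which are not disjoint. -/
def IsNondisjointSup {L : Type*} [Lattice L] [OrderBot L] (z : L) : Prop :=
  ∃ u v, u < z ∧ v < z ∧ u ⊔ v = z ∧ u ⊓ v ≠ ⊥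

theorem IsNondisjointSup.map {L M : Type*} [Lattice L] [OrderBot L] [Lattice M] [OrderBot M]
    (φ : L ≃o M) {z : L} (hz : IsNondisjointSup z) : IsNondisjointSup (φ z) := by
  obtain ⟨u, v, hu, hv, huv, hdisj⟩ := hz
  refine ⟨φ u, φ v, φ.strictMono hu, φ.strictMono hv, by rw [← map_sup, huv], ?_⟩
  rwa [← map_inf, Ne, map_eq_bot_iff]

theorem IsCongPreorder.rel_top_of_isCoatom {L : Type*} [Lattice L] [BoundedOrder L]
    {S : L → L → Prop} (hS : IsCongPreorder S) {p q w : L} (hw : IsCoatom w) (hp : ¬ p ≤ w)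
    (hq : q ≤ w) (h : S p q) : S ⊤ w := by
  rw [← hw.2 _ (right_lt_sup.2 hp)]
  exact hS.sup (hS.trans_le h hq) (hS.refl w)

theorem mk_Iic_map {α β : Type u} [Preorder α] [Preorder β] (φ : α ≃o β) (x : α) :
    #(Set.Iic (φ x)) = #(Set.Iic x) := by
  rw [← φ.image_Iic, mk_image_eq φ.injective]

namespace Comb

/-- The members of the comb of colour `a`, without the bounds and the roof. -/
def branch {I : Type*} (col : I → Bool) (a : Bool) : Set (Comb col) :=
  {x | ∃ i, col i = a ∧ (x = spine i ∨ x = tooth i)}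

section Branch

variable {I : Type*} {col : I → Bool} {x : Comb col} {a b : Bool}

theorem spine_mem_branch (i : I) : spine i ∈ branch col (col i) := ⟨i, rfl, .inl rfl⟩

theorem tooth_mem_branch (i : I) : tooth i ∈ branch col (col i) := ⟨i, rfl, .inr rfl⟩

theorem eq_of_mem_branch (h : x ∈ branch col a) (h' : x ∈ branch col b) : a = b := by
  obtain ⟨i, rfl, rfl | rfl⟩ := h <;> obtain ⟨j, rfl, h | h⟩ := h' <;> cases h <;> rfl

end Branch

variable {I : Type*} [LinearOrder I] {col : I → Bool} {i j k : I} {x y z : Comb col} {a b : Bool}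

/-- The order of the double comb. -/
protected def le : Comb col → Comb col → Prop
  | bot, _ => True
  | _, top => True
  | roof, roof => True
  | spine _, roof => True
  | spine i, spine j => col i = col j ∧ j ≤ i
  | spine i, tooth j => col i = col j ∧ j ≤ i
  | tooth i, tooth j => i = j
  | _, _ => False

/-- The join of the double comb. -/
protected def sup : Comb col → Comb col → Comb col
  | bot, x => x
  | x, bot => x
  | top, _ => top
  | _, top => top
  | roof, roof => roof
  | roof, spine _ => roof
  | spine _, roof => roof
  | roof, tooth _ => top
  | tooth _, roof => top
  | spine i, spine j => if col i = col j then spine (min i j) else roof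
  | spine i, tooth j => if col i = col j ∧ j ≤ i then tooth j else top
  | tooth j, spine i => if col i = col j ∧ j ≤ i then tooth j else top
  | tooth i, tooth j => if i = j then tooth i else top

/-- The meet of the double comb. -/
protected def inf : Comb col → Comb col → Comb col
  | bot, _ => bot
  | _, bot => bot
  | top, x => x
  | x, top => x
  | roof, roof => roof
  | roof, spine i => spine i
  | spine i, roof => spine i
  | roof, tooth i => spine i
  | tooth i, roof => spine i
  | spine i, spine j => if col i = col j then spine (max i j) else bot
  | spine i, tooth j => if col i = col j then spine (max i j) else bot
  | tooth i, spine j => if col i = col j then spine (max i j) else bot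
  | tooth i, tooth j =>
    if i = j then tooth i else if col i = col j then spine (max i j) else bot

instance : Lattice (Comb col) where
  le := Comb.le
  le_refl x := by cases x <;> simp [Comb.le]
  le_trans x y z := by cases x <;> cases y <;> cases z <;> simp [Comb.le] <;> grind
  le_antisymm x y := by cases x <;> cases y <;> simp [Comb.le] <;> grind
  sup := Comb.sup
  le_sup_left x y := by cases x <;> cases y <;> simp only [Comb.sup] <;> grind [Comb.le]
  le_sup_right x y := by cases x <;> cases y <;> simp only [Comb.sup] <;> grind [Comb.le]
  sup_le x y z := by cases x <;> cases y <;> cases z <;> simp only [Comb.sup] <;> grind [Comb.le]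
  inf := Comb.inf
  inf_le_left x y := by cases x <;> cases y <;> simp only [Comb.inf] <;> grind [Comb.le]
  inf_le_right x y := by cases x <;> cases y <;> simp only [Comb.inf] <;> grind [Comb.le]
  le_inf x y z := by cases x <;> cases y <;> cases z <;> simp only [Comb.inf] <;> grind [Comb.le]

instance : BoundedOrder (Comb col) where
  top := top
  le_top x := by cases x <;> trivial
  bot := bot
  bot_le x := by cases x <;> trivial

theorem bot_def : (⊥ : Comb col) = bot := rfl
theorem top_def : (⊤ : Comb col) = top := rfl
theorem le_def : x ≤ y ↔ Comb.le x y := Iff.rfl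
theorem sup_def (x y : Comb col) : x ⊔ y = Comb.sup x y := rfl
theorem inf_def (x y : Comb col) : x ⊓ y = Comb.inf x y := rfl

instance : Nontrivial (Comb col) := ⟨⟨bot, top, by simp⟩⟩

theorem roof_ne_top : (roof : Comb col) ≠ ⊤ := by simp [top_def]
theorem tooth_ne_top : (tooth i : Comb col) ≠ ⊤ := by simp [top_def]
theorem tooth_ne_bot : (tooth i : Comb col) ≠ ⊥ := by simp [bot_def]

theorem spine_le_roof : (spine i : Comb col) ≤ roof := trivial

theorem spine_le_spine : (spine i : Comb col) ≤ spine j ↔ col i = col j ∧ j ≤ i := Iff.rfl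

theorem spine_le_tooth : (spine i : Comb col) ≤ tooth j ↔ col i = col j ∧ j ≤ i := Iff.rfl

theorem tooth_inf_roof (i : I) : (tooth i : Comb col) ⊓ roof = spine i := rfl

theorem spine_sup_spine_of_ne (h : col i ≠ col j) : (spine i : Comb col) ⊔ spine j = roof :=
  if_neg h

theorem tooth_inf_tooth (h : col i = col j) (hij : i < j) :
    (tooth i : Comb col) ⊓ tooth j = spine j := by
  simp [inf_def, Comb.inf, hij.ne, h, hij.le]

theorem tooth_sup_tooth (hij : i ≠ j) : (tooth i : Comb col) ⊔ tooth j = ⊤ := if_neg hij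

theorem isCoatom_tooth (i : I) : IsCoatom (tooth i : Comb col) := by
  refine ⟨tooth_ne_top, fun y hy => ?_⟩
  rw [lt_iff_le_not_ge, le_def, le_def] at hy
  cases y <;> grind [top_def, Comb.le]

theorem isCoatom_roof : IsCoatom (roof : Comb col) := by
  refine ⟨roof_ne_top, fun y hy => ?_⟩
  rw [lt_iff_le_not_ge, le_def, le_def] at hy
  cases y <;> grind [top_def, Comb.le]

theorem ne_bot_of_mem_branch (h : x ∈ branch col a) : x ≠ ⊥ := by
  obtain ⟨i, -, rfl | rfl⟩ := h <;> simp [bot_def]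

theorem ne_top_of_mem_branch (h : x ∈ branch col a) : x ≠ ⊤ := by
  obtain ⟨i, -, rfl | rfl⟩ := h <;> simp [top_def]

theorem mem_branch_of_le (h : x ∈ branch col a) (hyx : y ≤ x) (hy : y ≠ ⊥) : y ∈ branch col a := by
  obtain ⟨i, rfl, rfl | rfl⟩ := h <;> cases y <;> rw [le_def] at hyx <;>
    simp_all [Comb.le, bot_def, branch]

theorem inf_eq_bot_of_mem_branch (hx : x ∈ branch col a) (hy : y ∈ branch col b) (h : a ≠ b) :
    x ⊓ y = ⊥ := by
  by_contra hne
  exact h (eq_of_mem_branch (mem_branch_of_le hx inf_le_left hne)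
    (mem_branch_of_le hy inf_le_right hne))

theorem tooth_sup_of_mem_branch (hx : x ∈ branch col a) (h : col i ≠ a) : tooth i ⊔ x = ⊤ :=
  (isCoatom_tooth i).2 _ (left_lt_sup.2 fun hle =>
    h (eq_of_mem_branch (mem_branch_of_le (tooth_mem_branch i) hle (ne_bot_of_mem_branch hx)) hx))

theorem tooth_sup_spine (h : i < j) : (tooth j : Comb col) ⊔ spine i = ⊤ :=
  (isCoatom_tooth j).2 _ (left_lt_sup.2 fun hle => h.not_ge (spine_le_tooth.1 hle).2)

end Comb

/-- A colouring of an index set suitable for a double comb: both colours occur, and the final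
segments of colour `a` all have the infinite cardinality `κ a`. -/
structure IsCombColoring {I : Type u} [LinearOrder I] (col : I → Bool) (κ : Bool → Cardinal.{u}) :
    Prop where
  exists_col : ∀ a, ∃ i, col i = a
  mk_final : ∀ i, #{j | col j = col i ∧ i ≤ j} = κ (col i)
  aleph0_le : ∀ a, ℵ₀ ≤ κ a

namespace IsCombColoring

variable {I : Type u} [LinearOrder I] {col : I → Bool} {κ : Bool → Cardinal.{u}}

theorem exists_col_ne (H : IsCombColoring col κ) (a : Bool) : ∃ i, col i ≠ a :=
  (H.exists_col !a).imp fun i hi => by simp [hi]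

theorem exists_gt (H : IsCombColoring col κ) (i : I) : ∃ j, i < j ∧ col i = col j := by
  have : Infinite {j | col j = col i ∧ i ≤ j} := by
    rw [infinite_iff, H.mk_final]
    exact H.aleph0_le _
  obtain ⟨⟨j, hj, hij⟩, hne⟩ := exists_ne (⟨i, rfl, le_rfl⟩ : {j | col j = col i ∧ i ≤ j})
  exact ⟨j, hij.lt_of_ne fun h => hne (Subtype.ext h.symm), hj.symm⟩

end IsCombColoring

namespace Comb

variable {I : Type u} [LinearOrder I] {col : I → Bool} {κ : Bool → Cardinal.{u}} {i : I}
  {x y z : Comb col} {a : Bool}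

theorem exists_mem_branch_le (H : IsCombColoring col κ) (hx : x ≠ ⊥) :
    ∃ a, ∃ y ∈ branch col a, y ≤ x := by
  obtain ⟨i, -⟩ := H.exists_col true
  cases x with
  | bot => exact absurd rfl hx
  | top => exact ⟨_, _, spine_mem_branch i, le_top⟩
  | roof => exact ⟨_, _, spine_mem_branch i, spine_le_roof⟩
  | spine j => exact ⟨_, _, spine_mem_branch j, le_rfl⟩
  | tooth j => exact ⟨_, _, tooth_mem_branch j, le_rfl⟩

theorem mem_branch_of_forall (H : IsCombColoring col κ) (hx : x ≠ ⊥)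
    (h : ∀ b, ∀ y ∈ branch col b, y ≤ x → b = a) : x ∈ branch col a := by
  obtain ⟨i, hi⟩ := H.exists_col_ne a
  cases x with
  | bot => exact absurd rfl hx
  | top => exact absurd (h _ _ (spine_mem_branch i) le_top) hi
  | roof => exact absurd (h _ _ (spine_mem_branch i) spine_le_roof) hi
  | spine j => exact h _ _ (spine_mem_branch j) le_rfl ▸ spine_mem_branch j
  | tooth j => exact h _ _ (tooth_mem_branch j) le_rfl ▸ tooth_mem_branch j

/-- Up to finitely many elements, the lower set of a member of a comb is a final segment of its
spine. -/
theorem mk_Iic_of_mem_branch (H : IsCombColoring col κ) (hx : x ∈ branch col a) :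
    #(Set.Iic x) = κ a := by
  obtain ⟨i, rfl, hx⟩ := hx
  have hspine : spine i ≤ x := by obtain rfl | rfl := hx <;> simp [spine_le_tooth]
  have htooth : x ≤ tooth i := by obtain rfl | rfl := hx <;> simp [spine_le_tooth]
  have hmk : #(spine (col := col) '' {j | col j = col i ∧ i ≤ j}) = κ (col i) := by
    rw [mk_image_eq fun _ _ h => spine.inj h, H.mk_final]
  refine le_antisymm ?_ ?_
  · have hsub : Set.Iic x ⊆
        insert bot (insert (tooth i) (spine '' {j | col j = col i ∧ i ≤ j})) := fun y hy => by
      have hle := le_def.1 (htooth.trans' hy)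
      cases y <;> simp_all [Comb.le]
    refine (mk_le_mk_of_subset hsub).trans (mk_insert_le.trans
      ((add_le_add_left mk_insert_le 1).trans ?_))
    rw [hmk, add_one_eq (H.aleph0_le _), add_one_eq (H.aleph0_le _)]
  · rw [← hmk]
    refine mk_le_mk_of_subset ?_
    rintro _ ⟨j, hj, rfl⟩
    exact hspine.trans' (spine_le_spine.2 hj)

theorem exists_isCompl_tooth (H : IsCombColoring col κ) :
    ∃ i j, IsCompl (tooth i : Comb col) (tooth j) := by
  obtain ⟨i, -⟩ := H.exists_col true
  obtain ⟨j, hj⟩ := H.exists_col_ne (col i)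
  exact ⟨i, j, .of_eq (inf_eq_bot_of_mem_branch (tooth_mem_branch i) (tooth_mem_branch j) hj.symm)
    (tooth_sup_of_mem_branch (tooth_mem_branch j) hj.symm)⟩

theorem hasDisjointPair (H : IsCombColoring col κ) : HasDisjointPair (Comb col) := by
  obtain ⟨i, j, h⟩ := exists_isCompl_tooth H
  exact ⟨tooth i, tooth j, tooth_ne_bot, tooth_ne_bot, h.disjoint⟩

theorem isNondisjointSup_iff (H : IsCombColoring col κ) : IsNondisjointSup z ↔ z = ⊤ := by
  constructor
  · rintro ⟨u, v, hu, hv, rfl, hdisj⟩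
    revert hdisj
    have hu := hu.ne
    have hv := hv.ne
    revert hu hv
    cases u <;> cases v <;> simp [sup_def, inf_def, Comb.sup, Comb.inf, top_def, bot_def] <;> grind
  · rintro rfl
    obtain ⟨i, -⟩ := H.exists_col true
    obtain ⟨j, hij, hcol⟩ := H.exists_gt i
    refine ⟨tooth i, tooth j, tooth_ne_top.lt_top, tooth_ne_top.lt_top, tooth_sup_tooth hij.ne, ?_⟩
    rw [tooth_inf_tooth hcol hij]
    exact ne_bot_of_mem_branch (spine_mem_branch j)

section Simple

variable {S : Comb col → Comb col → Prop}

theorem rel_top_bot_of_spine (H : IsCombColoring col κ) (hS : IsCongPreorder S)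
    (h : S (spine i) ⊥) : S ⊤ ⊥ := by
  have htooth : ∀ k, col k ≠ col i → S ⊤ (tooth k) := fun k hk => by
    rw [← tooth_sup_of_mem_branch (spine_mem_branch i) hk]
    exact hS.sup (hS.refl _) (hS.trans_le h bot_le)
  obtain ⟨k, hk⟩ := H.exists_col_ne (col i)
  obtain ⟨k', hkk', hcol⟩ := H.exists_gt k
  have hspine : S ⊤ (spine k') := by
    rw [← tooth_inf_tooth hcol hkk']
    exact hS.inf (htooth k hk) (htooth k' (hcol ▸ hk))
  have hbot : ∀ j, col i = col j → S (tooth j) ⊥ := fun j hj => by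
    rw [← inf_eq_bot_of_mem_branch (tooth_mem_branch j) (spine_mem_branch k')
      (hj ▸ hcol ▸ hk.symm)]
    exact hS.inf (hS.refl _) (hS.le_trans le_top hspine)
  obtain ⟨j, hij, hj⟩ := H.exists_gt i
  rw [← tooth_sup_tooth hij.ne]
  exact hS.sup (hbot i rfl) (hbot j hj)

theorem rel_top_bot_of_tooth (H : IsCombColoring col κ) (hS : IsCongPreorder S)
    (h : S ⊤ (tooth i)) : S ⊤ ⊥ := by
  obtain ⟨k, hk⟩ := H.exists_col_ne (col i)
  refine rel_top_bot_of_spine (i := k) H hS ?_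
  rw [← inf_eq_bot_of_mem_branch (spine_mem_branch k) (tooth_mem_branch i) hk]
  exact hS.inf (hS.refl _) (hS.le_trans le_top h)

theorem rel_top_bot_of_roof (H : IsCombColoring col κ) (hS : IsCongPreorder S)
    (h : S ⊤ roof) : S ⊤ ⊥ := by
  obtain ⟨i, -⟩ := H.exists_col true
  obtain ⟨j, hij, hcol⟩ := H.exists_gt i
  have hj : S (tooth j) (spine j) := by
    rw [← tooth_inf_roof j]
    exact hS.inf (hS.refl _) (hS.le_trans le_top h)
  refine rel_top_bot_of_tooth (i := i) H hS ?_
  rw [← tooth_sup_tooth hij.ne]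
  exact hS.sup (hS.refl _) (hS.trans_le hj (spine_le_tooth.2 ⟨hcol.symm, hij.le⟩))

theorem exists_isCoatom_of_not_le (H : IsCombColoring col κ) (h : ¬ x ≤ y) :
    ∃ w, (w = roof ∨ ∃ i, w = tooth i) ∧ y ≤ w ∧ ¬ x ≤ w := by
  cases y with
  | bot =>
    obtain ⟨a, y, hy, hyx⟩ := exists_mem_branch_le H fun hx => h hx.le
    obtain ⟨i, hi⟩ := H.exists_col_ne a
    have hi' : ¬ y ≤ tooth i := fun hle => hi (eq_of_mem_branch
      (mem_branch_of_le (tooth_mem_branch i) hle (ne_bot_of_mem_branch hy)) hy)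
    exact ⟨tooth i, .inr ⟨i, rfl⟩, bot_le, fun hx => hi' (hyx.trans hx)⟩
  | top => exact absurd le_top h
  | roof => exact ⟨roof, .inl rfl, le_rfl, h⟩
  | spine i =>
    by_cases hx : x ≤ tooth i
    · refine ⟨roof, .inl rfl, spine_le_roof, fun hx' => h ?_⟩
      rw [← tooth_inf_roof i]
      exact le_inf hx hx'
    · exact ⟨tooth i, .inr ⟨i, rfl⟩, spine_le_tooth.2 ⟨rfl, le_rfl⟩, hx⟩
  | tooth i => exact ⟨tooth i, .inr ⟨i, rfl⟩, le_rfl, h⟩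

/-- Teeth and roof are coatoms of which every element is a meet, so a nontrivial congruence
identifies one of them with the top. -/
theorem isCongSimple (H : IsCombColoring col κ) : IsCongSimple (Comb col) := by
  intro S hS x y h hxy
  obtain ⟨w, rfl | ⟨i, rfl⟩, hy, hx⟩ := exists_isCoatom_of_not_le H hxy
  · exact rel_top_bot_of_roof H hS (hS.rel_top_of_isCoatom isCoatom_roof hx hy h)
  · exact rel_top_bot_of_tooth H hS (hS.rel_top_of_isCoatom (isCoatom_tooth i) hx hy h)

end Simple

section Rigid

variable (H : IsCombColoring col κ) (hκ : κ.Injective) (φ : Comb col ≃o Comb col)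
include H hκ

theorem map_mem_branch (hx : x ∈ branch col a) : φ x ∈ branch col a := by
  refine mem_branch_of_forall H (by simpa using ne_bot_of_mem_branch hx) fun b y hy hyx => hκ ?_
  have hy' : φ.symm y ∈ branch col a :=
    mem_branch_of_le hx (φ.symm_apply_le.2 hyx) (by simpa using ne_bot_of_mem_branch hy)
  rw [← mk_Iic_of_mem_branch H hy, ← mk_Iic_of_mem_branch H hy', mk_Iic_map]

theorem map_roof : φ roof = roof := by
  have hbranch : ∀ a, φ roof ∉ branch col a := fun a h => by
    have := map_mem_branch H hκ φ.symm h
    rw [φ.symm_apply_apply] at this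
    obtain ⟨i, -, h | h⟩ := this <;> cases h
  have hbot : φ roof ≠ ⊥ := (map_eq_bot_iff φ).not.2 nofun
  have htop : φ roof ≠ ⊤ := (map_eq_top_iff φ).not.2 roof_ne_top
  cases h : φ roof with
  | bot => exact absurd h hbot
  | top => exact absurd h htop
  | roof => rfl
  | spine j => exact absurd (h ▸ spine_mem_branch j) (hbranch _)
  | tooth j => exact absurd (h ▸ tooth_mem_branch j) (hbranch _)

theorem map_spine_le (h : ∀ j < i, φ (spine j) = spine j) : φ (spine i) ≤ spine i := by
  obtain ⟨j, hj, hφ | hφ⟩ := map_mem_branch H hκ φ (spine_mem_branch i)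
  · rw [hφ, spine_le_spine]
    refine ⟨hj, not_lt.1 fun hji => hji.ne ?_⟩
    rw [← h j hji, φ.apply_eq_iff_eq] at hφ
    exact (spine.inj hφ).symm
  · have hle : φ (spine i) ≤ φ roof := φ.monotone spine_le_roof
    rw [map_roof H hκ, hφ] at hle
    exact hle.elim

variable [WellFoundedLT I]

theorem map_spine (i : I) : φ (spine i) = spine i := by
  induction i using WellFoundedLT.induction generalizing φ with
  | ind i ih =>
    refine (map_spine_le H hκ φ fun j hj => ih j hj φ).antisymm ?_
    rw [← φ.symm_apply_le]
    exact map_spine_le H hκ φ.symm fun j hj => ih j hj φ.symm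

theorem map_tooth (i : I) : φ (tooth i) = tooth i := by
  have hinf : φ (tooth i) ⊓ roof = spine i := by
    rw [← map_spine H hκ φ i, ← tooth_inf_roof i, map_inf, map_roof H hκ]
  have hroof : ¬ φ (tooth i) ≤ roof := by
    rw [← map_roof H hκ φ, φ.le_iff_le]
    exact id
  have htop : φ (tooth i) ≠ ⊤ := (map_eq_top_iff φ).not.2 tooth_ne_top
  cases h : φ (tooth i) with
  | bot => exact absurd (h ▸ bot_le) hroof
  | top => exact absurd h htop
  | roof => exact absurd h.le hroof
  | spine j => exact absurd (h ▸ spine_le_roof) hroof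
  | tooth j =>
    rw [h, tooth_inf_roof] at hinf
    rw [spine.inj hinf]

/-- The two combs are told apart by the cardinalities of their lower sets. -/
theorem map_eq_self (x : Comb col) : φ x = x := by
  cases x with
  | bot => exact φ.map_bot
  | top => exact φ.map_top
  | roof => exact map_roof H hκ φ
  | spine i => exact map_spine H hκ φ i
  | tooth i => exact map_tooth H hκ φ i

end Rigid

end Comb

/-! ### Storing a lattice in a simple lattice -/

/-- The lattice obtained from a bounded lattice `K` by inserting, for every `b ≠ ⊥`, a copy of
`G` without its bounds into the interval `[⊥, b]`. The element `x` of `K` is `(x, ⊤)`, and the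
copy of `f` below `b` is `(b, f)`. -/
@[ext]
structure Inflation (K G : Type*) [Lattice K] [BoundedOrder K] [Lattice G] [BoundedOrder G] where
  base : K
  level : G
  level_ne_bot : level ≠ ⊥
  level_eq_top : base = ⊥ → level = ⊤

theorem exists_orderIso_of_mem_range {α β : Type*} [PartialOrder α] [Preorder β] {e : α → β}
    (he : ∀ x y, e x ≤ e y ↔ x ≤ y) (τ : β ≃o β) (h : ∀ x, τ (e x) ∈ Set.range e)
    (h' : ∀ x, τ.symm (e x) ∈ Set.range e) : ∃ φ : α ≃o α, ∀ x, e (φ x) = τ (e x) := by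
  choose φ hφ using h
  choose ψ hψ using h'
  have he' : ∀ x y, e x = e y → x = y := fun x y h =>
    ((he x y).1 h.le).antisymm ((he y x).1 h.ge)
  exact ⟨{  toFun := φ
            invFun := ψ
            left_inv := fun x => he' _ _ (by rw [hψ, hφ, τ.symm_apply_apply])
            right_inv := fun x => he' _ _ (by rw [hφ, hψ, τ.apply_symm_apply])
            map_rel_iff' := fun {x y} => by
              rw [Equiv.coe_fn_mk, ← he, hφ, hφ, τ.le_iff_le, he] }, hφ⟩

namespace Inflation

variable {K G : Type*} [Lattice K] [BoundedOrder K] [Lattice G] [BoundedOrder G]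

instance : PartialOrder (Inflation K G) where
  le p q := p.base = ⊥ ∨ (q.level = ⊤ ∧ p.base ≤ q.base) ∨ (p.base = q.base ∧ p.level ≤ q.level)
  le_refl p := .inr (.inr ⟨rfl, le_rfl⟩)
  le_trans p q s hpq hqs := by grind [le_bot_iff, top_le_iff]
  le_antisymm p q hpq hqp := by
    have hp := p.level_eq_top
    have hq := q.level_eq_top
    refine Inflation.ext ?_ ?_ <;> grind [le_bot_iff, top_le_iff, le_antisymm]

theorem le_def {p q : Inflation K G} : p ≤ q ↔ p.base = ⊥ ∨ (q.level = ⊤ ∧ p.base ≤ q.base) ∨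
    (p.base = q.base ∧ p.level ≤ q.level) :=
  Iff.rfl

variable [Nontrivial G] {p q s : Inflation K G} {x y b : K} {f g : G}

/-- The embedding of `K`. -/
def el (x : K) : Inflation K G := ⟨x, ⊤, top_ne_bot, fun _ => rfl⟩

open Classical in
/-- The copy of `f` below `b`. -/
noncomputable def pt (b : K) (f : G) : Inflation K G :=
  if h : f = ⊥ ∨ b = ⊥ then el ⊥ else ⟨b, f, mt .inl h, fun hb => absurd (.inr hb) h⟩

theorem base_pt (hb : b ≠ ⊥) (hf : f ≠ ⊥) : (pt b f : Inflation K G).base = b := by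
  simp [pt, hb, hf]

theorem level_pt (hb : b ≠ ⊥) (hf : f ≠ ⊥) : (pt b f : Inflation K G).level = f := by
  simp [pt, hb, hf]

theorem el_le : el x ≤ p ↔ x = ⊥ ∨ (p.level = ⊤ ∧ x ≤ p.base) := by
  rw [le_def]
  simp only [el, top_le_iff]
  grind

theorem le_el : p ≤ el x ↔ p.base ≤ x := by
  rw [le_def]
  simp only [el, le_top, true_and, and_true]
  grind [bot_le]

theorem pt_le (hb : b ≠ ⊥) :
    pt b f ≤ p ↔ f = ⊥ ∨ (p.level = ⊤ ∧ b ≤ p.base) ∨ (b = p.base ∧ f ≤ p.level) := by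
  by_cases hf : f = ⊥
  · simp [pt, hf, el_le]
  · rw [le_def, base_pt hb hf, level_pt hb hf]
    simp [hb, hf]

theorem le_pt (hb : b ≠ ⊥) :
    p ≤ pt b g ↔ p.base = ⊥ ∨ (g = ⊤ ∧ p.base ≤ b) ∨ (p.base = b ∧ p.level ≤ g) := by
  by_cases hg : g = ⊥
  · simp [pt, hg, le_el, p.level_ne_bot, bot_ne_top]
  · rw [le_def, base_pt hb hg, level_pt hb hg]

open Classical in
/-- The join of an inflation. -/
protected noncomputable def sup (p q : Inflation K G) : Inflation K G :=
  if p.base = ⊥ then q else if q.base = ⊥ then p else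
    if p.base = q.base then pt p.base (p.level ⊔ q.level) else el (p.base ⊔ q.base)

open Classical in
/-- The meet of an inflation. -/
protected noncomputable def inf (p q : Inflation K G) : Inflation K G :=
  if p ≤ q then p else if q ≤ p then q else
    if p.base = q.base then pt p.base (p.level ⊓ q.level) else
      if p.level = ⊤ ∧ q.level = ⊤ then el (p.base ⊓ q.base) else el ⊥

protected theorem sup_le_iff : Inflation.sup p q ≤ s ↔ p ≤ s ∧ q ≤ s := by
  have hp := p.level_ne_bot
  unfold Inflation.sup
  split_ifs with hp0 hq0 hpq
  · simp [le_def, hp0]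
  · simp [le_def, hq0]
  · rw [pt_le hp0, le_def, le_def, sup_eq_bot_iff, sup_le_iff]
    grind
  · rw [el_le, le_def, le_def, sup_eq_bot_iff, sup_le_iff]
    grind

protected theorem le_inf_iff : s ≤ Inflation.inf p q ↔ s ≤ p ∧ s ≤ q := by
  unfold Inflation.inf
  split_ifs with hpq hqp hbase htop
  · exact ⟨fun h => ⟨h, h.trans hpq⟩, And.left⟩
  · exact ⟨fun h => ⟨h.trans hqp, h⟩, And.right⟩
  · rw [le_pt fun hp => hpq (.inl hp), le_inf_iff, inf_eq_top_iff]
    simp only [le_def] at hpq hqp ⊢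
    grind
  · rw [le_el, le_inf_iff]
    simp only [le_def] at hpq hqp ⊢
    grind [bot_le]
  · rw [le_el, le_bot_iff]
    simp only [le_def] at hpq hqp ⊢
    grind

noncomputable instance : Lattice (Inflation K G) where
  sup := Inflation.sup
  le_sup_left _ _ := (Inflation.sup_le_iff.1 le_rfl).1
  le_sup_right _ _ := (Inflation.sup_le_iff.1 le_rfl).2
  sup_le _ _ _ hp hq := Inflation.sup_le_iff.2 ⟨hp, hq⟩
  inf := Inflation.inf
  inf_le_left _ _ := (Inflation.le_inf_iff.1 le_rfl).1
  inf_le_right _ _ := (Inflation.le_inf_iff.1 le_rfl).2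
  le_inf _ _ _ hp hq := Inflation.le_inf_iff.2 ⟨hp, hq⟩

instance : BoundedOrder (Inflation K G) where
  top := el ⊤
  le_top _ := .inr (.inl ⟨rfl, le_top⟩)
  bot := el ⊥
  bot_le _ := .inl rfl

theorem el_top : el ⊤ = (⊤ : Inflation K G) := rfl

theorem el_bot : el ⊥ = (⊥ : Inflation K G) := rfl

theorem el_le_el : (el x : Inflation K G) ≤ el y ↔ x ≤ y := le_el

theorem base_eq_bot : p.base = ⊥ ↔ p = ⊥ := by rw [← le_bot_iff, ← le_bot_iff, ← el_bot, le_el]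

theorem el_inf (x y : K) : (el (x ⊓ y) : Inflation K G) = el x ⊓ el y :=
  eq_of_forall_le_iff fun p => by rw [le_inf_iff, le_el, le_el, le_el, le_inf_iff]

theorem el_sup (x y : K) : (el (x ⊔ y) : Inflation K G) = el x ⊔ el y :=
  eq_of_forall_ge_iff fun p => by
    rw [sup_le_iff, el_le, el_le, el_le, sup_le_iff, sup_eq_bot_iff]
    grind [bot_le]

theorem pt_base_level (p : Inflation K G) : pt p.base p.level = p := by
  by_cases h : p.base = ⊥
  · rw [pt, dif_pos (.inr h), base_eq_bot.1 h, el_bot]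
  · exact Inflation.ext (base_pt h p.level_ne_bot) (level_pt h p.level_ne_bot)

theorem pt_top (b : K) : pt b ⊤ = (el b : Inflation K G) := pt_base_level (el b)

theorem pt_bot (b : K) : pt b ⊥ = (⊥ : Inflation K G) := dif_pos (.inl rfl)

theorem pt_le_pt (hb : b ≠ ⊥) : (pt b f : Inflation K G) ≤ pt b g ↔ f ≤ g := by
  by_cases hg : g = ⊥
  · rw [hg, pt_bot, pt_le hb]
    simp [← el_bot, el, hb]
  · rw [pt_le hb, base_pt hb hg, level_pt hb hg]
    grind [bot_le, le_top]

theorem pt_lt_pt (hb : b ≠ ⊥) : (pt b f : Inflation K G) < pt b g ↔ f < g := by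
  rw [lt_iff_le_not_ge, lt_iff_le_not_ge, pt_le_pt hb, pt_le_pt hb]

theorem pt_injective (hb : b ≠ ⊥) : Function.Injective (pt b : G → Inflation K G) :=
  fun _ _ h => ((pt_le_pt hb).1 h.le).antisymm ((pt_le_pt hb).1 h.ge)

theorem eq_pt_of_le_pt (hb : b ≠ ⊥) (hg : g ≠ ⊤) (h : p ≤ pt b g) : ∃ f, p = pt b f := by
  obtain h | h | h := (le_pt hb).1 h
  · exact ⟨⊥, by rw [base_eq_bot.1 h, pt_bot]⟩
  · exact absurd h.1 hg
  · exact ⟨p.level, by rw [← h.1, pt_base_level]⟩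

theorem pt_inf (hb : b ≠ ⊥) (f g : G) : (pt b f : Inflation K G) ⊓ pt b g = pt b (f ⊓ g) :=
  eq_of_forall_le_iff fun p => by
    rw [le_inf_iff, le_pt hb, le_pt hb, le_pt hb, le_inf_iff, inf_eq_top_iff]
    grind [le_top]

theorem pt_sup (hb : b ≠ ⊥) (f g : G) : (pt b f : Inflation K G) ⊔ pt b g = pt b (f ⊔ g) :=
  eq_of_forall_ge_iff fun p => by
    rw [sup_le_iff, pt_le hb, pt_le hb, pt_le hb, sup_le_iff, sup_eq_bot_iff]
    grind [bot_le, le_top]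

theorem pt_inf_eq_bot (hb : b ≠ ⊥) (hf : f ≠ ⊤) (h : p.base < b) : pt b f ⊓ p = ⊥ := by
  refine base_eq_bot.1 (by_contra fun h0 => h.not_ge ?_)
  obtain h' | h' | h' := (le_pt hb).1 (inf_le_left : pt b f ⊓ p ≤ pt b f)
  · exact absurd h' h0
  · exact absurd h'.1 hf
  · rw [← h'.1, ← le_el (G := G)]
    exact inf_le_right.trans (le_el.2 le_rfl)

theorem el_sup_pt_top (hx : x ≠ ⊥) (hf : f ≠ ⊥) :
    el x ⊔ pt ⊤ f = (⊤ : Inflation K G) := by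
  have hbot : (⊤ : K) ≠ ⊥ := ne_bot_of_le_ne_bot hx le_top
  obtain ⟨hxs, hfs⟩ := sup_le_iff.1 (le_refl (el x ⊔ pt ⊤ f : Inflation K G))
  rw [← top_le_iff, ← el_top, el_le]
  rw [el_le] at hxs
  rw [pt_le hbot] at hfs
  grind [top_le_iff]

section Simple

variable {S : Inflation K G → Inflation K G → Prop}

theorem rel_el_bot_of_rel_pt (hG : IsCongSimple G) (hS : IsCongPreorder S) (hb : b ≠ ⊥)
    (hfg : ¬ f ≤ g) (h : S (pt b f) (pt b g)) : S (el b) ⊥ := by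
  have hpt : IsCongPreorder (pt b ⁻¹'o S) :=
    ⟨fun h => hS.of_le ((pt_le_pt hb).2 h), hS.trans, fun h h' => by
      rw [Order.Preimage, ← pt_sup hb]
      exact hS.sup h h', fun h h' => by
      rw [Order.Preimage, ← pt_inf hb]
      exact hS.inf h h'⟩
  simpa only [Order.Preimage, pt_top, pt_bot] using hG _ hpt f g h hfg

theorem rel_el_base_bot (hG : IsCongSimple G) (hmid : ∃ f : G, f ≠ ⊥ ∧ f ≠ ⊤)
    (hS : IsCongPreorder S) (hpq : ¬ p ≤ q) (h : S p q) : S (el p.base) ⊥ := by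
  have hb : p.base ≠ ⊥ := fun h => hpq (.inl h)
  obtain ⟨s, hsp, hps⟩ : ∃ s < p, S p s :=
    ⟨p ⊓ q, inf_lt_left.2 hpq, hS.inf (hS.refl p) h⟩
  rw [← pt_base_level p] at hsp
  by_cases hs : ∃ g, s = pt p.base g
  · obtain ⟨g, rfl⟩ := hs
    rw [pt_lt_pt hb] at hsp
    rw [← pt_base_level p, base_pt hb p.level_ne_bot] at hps
    exact rel_el_bot_of_rel_pt hG hS hb hsp.not_ge hps
  · have htop : p.level = ⊤ := by_contra fun h => hs (eq_pt_of_le_pt hb h hsp.le)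
    have hlt : s.base < p.base := by
      refine lt_of_le_of_ne (le_el.1 ?_) fun h => hs ⟨s.level, by rw [← h, pt_base_level]⟩
      rw [← pt_top, ← htop]
      exact hsp.le
    obtain ⟨f, hf, hf'⟩ := hmid
    refine rel_el_bot_of_rel_pt (f := f) (g := ⊥) hG hS hb (by simpa using hf) ?_
    rw [pt_bot, ← pt_inf_eq_bot hb hf' hlt]
    refine hS.inf (hS.refl _) (hS.le_trans ?_ hps)
    rw [pt_le hb]
    exact .inr (.inl ⟨htop, le_rfl⟩)

theorem isCongSimple (hG : IsCongSimple G) (hmid : ∃ f : G, f ≠ ⊥ ∧ f ≠ ⊤) :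
    IsCongSimple (Inflation K G) := by
  intro S hS p q h hpq
  have hb : p.base ≠ ⊥ := fun h => hpq (.inl h)
  have hp := rel_el_base_bot hG hmid hS hpq h
  obtain ⟨f, hf, hf'⟩ := hmid
  refine rel_el_bot_of_rel_pt (f := ⊤) (g := f) hG hS (ne_bot_of_le_ne_bot hb le_top)
    (by simpa using hf') ?_
  rw [pt_top, el_top, ← el_sup_pt_top hb hf]
  exact hS.sup (hS.trans_le hp bot_le) (hS.refl _)

end Simple

/-- The action of an automorphism of `K` on the first component. -/
def mapIso (α : K ≃o K) : Inflation K G ≃o Inflation K G where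
  toFun p := ⟨α p.base, p.level, p.level_ne_bot, fun h => p.level_eq_top (by simpa using h)⟩
  invFun p := ⟨α.symm p.base, p.level, p.level_ne_bot, fun h => p.level_eq_top (by simpa using h)⟩
  left_inv p := by simp
  right_inv p := by simp
  map_rel_iff' {p q} := by simp [le_def]

theorem mapIso_el (α : K ≃o K) (x : K) : mapIso α (el x : Inflation K G) = el (α x) := rfl

theorem isNondisjointSup_pt (hb : b ≠ ⊥) (hf : IsNondisjointSup f) :
    IsNondisjointSup (pt b f : Inflation K G) := by
  obtain ⟨u, v, hu, hv, huv, hdisj⟩ := hf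
  refine ⟨pt b u, pt b v, (pt_lt_pt hb).2 hu, (pt_lt_pt hb).2 hv, by rw [pt_sup hb, huv], ?_⟩
  rwa [pt_inf hb, ← pt_bot b, Ne, (pt_injective hb).eq_iff]

theorem isNondisjointSup_of_pt (hb : b ≠ ⊥) (hf : f ≠ ⊤)
    (h : IsNondisjointSup (pt b f : Inflation K G)) : IsNondisjointSup f := by
  obtain ⟨u, v, hu, hv, huv, hdisj⟩ := h
  obtain ⟨u, rfl⟩ := eq_pt_of_le_pt hb hf hu.le
  obtain ⟨v, rfl⟩ := eq_pt_of_le_pt hb hf hv.le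
  rw [pt_sup hb, (pt_injective hb).eq_iff] at huv
  rw [pt_inf hb, ← pt_bot b, Ne, (pt_injective hb).eq_iff] at hdisj
  exact ⟨u, v, (pt_lt_pt hb).1 hu, (pt_lt_pt hb).1 hv, huv, hdisj⟩

theorem level_eq_top_iff (hG : ∀ f : G, IsNondisjointSup f ↔ f = ⊤) :
    p.level = ⊤ ↔ p = ⊥ ∨ IsNondisjointSup p := by
  by_cases hb : p.base = ⊥
  · exact iff_of_true (p.level_eq_top hb) (.inl (base_eq_bot.1 hb))
  rw [← base_eq_bot, or_iff_right hb, ← hG]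
  refine ⟨fun h => pt_base_level p ▸ isNondisjointSup_pt hb h, fun h => by_contra fun htop => ?_⟩
  rw [← pt_base_level p] at h
  exact htop (isNondisjointSup_of_pt hb (mt (hG _).2 htop) h)

theorem map_el_mem_range (hG : ∀ f : G, IsNondisjointSup f ↔ f = ⊤)
    (σ : Inflation K G ≃o Inflation K G) (x : K) :
    σ (el x) ∈ Set.range (el : K → Inflation K G) := by
  have hx : (σ (el x)).level = ⊤ := by
    rw [level_eq_top_iff hG, map_eq_bot_iff]
    exact ((level_eq_top_iff hG).1 (rfl : (el x : Inflation K G).level = ⊤)).imp_right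
      (.map σ)
  exact ⟨(σ (el x)).base, Inflation.ext rfl hx.symm⟩

theorem base_map (τ : Inflation K G ≃o Inflation K G) (hτ : ∀ x, τ (el x) = el x)
    (p : Inflation K G) : (τ p).base = p.base :=
  eq_of_forall_ge_iff fun x => by rw [← le_el (G := G), ← le_el (G := G), ← hτ x, τ.le_iff_le, hτ]

theorem map_pt_mem_range (τ : Inflation K G ≃o Inflation K G) (hτ : ∀ x, τ (el x) = el x)
    (hb : b ≠ ⊥) (f : G) : τ (pt b f) ∈ Set.range (pt b : G → Inflation K G) := by
  by_cases hf : f = ⊥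
  · exact ⟨⊥, by rw [hf, pt_bot, map_bot]⟩
  · refine ⟨(τ (pt b f)).level, ?_⟩
    rw [← pt_base_level (τ _), base_map τ hτ, base_pt hb hf]
    exact congrArg _ (level_pt hb (level_ne_bot _))

theorem map_eq_self_of_map_el (hG : ∀ (φ : G ≃o G) f, φ f = f)
    (τ : Inflation K G ≃o Inflation K G) (hτ : ∀ x, τ (el x) = el x) (p : Inflation K G) :
    τ p = p := by
  by_cases hb : p.base = ⊥
  · rw [base_eq_bot.1 hb, map_bot]
  have hτ' : ∀ x, τ.symm (el x) = el x := fun x => by rw [τ.symm_apply_eq, hτ]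
  obtain ⟨φ, hφ⟩ := exists_orderIso_of_mem_range (fun f g => pt_le_pt hb) τ
    (map_pt_mem_range τ hτ hb) (map_pt_mem_range τ.symm hτ' hb)
  rw [← congrArg τ (pt_base_level p), ← hφ, hG, pt_base_level]

theorem exists_eq_mapIso (hG : ∀ f : G, IsNondisjointSup f ↔ f = ⊤)
    (hG' : ∀ (φ : G ≃o G) f, φ f = f) (σ : Inflation K G ≃o Inflation K G) :
    ∃ α : K ≃o K, σ = mapIso α := by
  obtain ⟨α, hα⟩ := exists_orderIso_of_mem_range (fun x y => el_le_el) σ (map_el_mem_range hG σ)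
    (map_el_mem_range hG σ.symm)
  refine ⟨α, OrderIso.ext (funext fun p => ?_)⟩
  rw [← (mapIso α).symm_apply_eq]
  refine map_eq_self_of_map_el hG' (σ.trans (mapIso α).symm) (fun x => ?_) p
  rw [OrderIso.trans_apply, ← hα, OrderIso.symm_apply_eq, mapIso_el]

theorem mk_Iic_pt {K G : Type u} [Lattice K] [BoundedOrder K] [Lattice G] [BoundedOrder G]
    [Nontrivial G] {b : K} {f : G} (hb : b ≠ ⊥) (hf : f ≠ ⊤) :
    #(Set.Iic (pt b f : Inflation K G)) = #(Set.Iic f) := by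
  have himage : Set.Iic (pt b f : Inflation K G) = pt b '' Set.Iic f := by
    ext p
    constructor
    · intro hp
      obtain ⟨g, rfl⟩ := eq_pt_of_le_pt hb hf hp
      exact ⟨g, (pt_le_pt hb).1 hp, rfl⟩
    · rintro ⟨g, hg, rfl⟩
      exact (pt_le_pt hb).2 hg
  rw [himage, mk_image_eq (pt_injective hb)]

end Inflation

/-! ### Rigidity -/

open Classical in
theorem mk_supClosure_le {L : Type u} [SemilatticeSup L] (s : Set L) :
    #(supClosure s) ≤ max ℵ₀ #s := by
  have hsub : supClosure s ⊆ {x | ∃ t : Finset s, (x : WithBot L) = t.sup fun a => ↑(a : L)} := by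
    refine supClosure_min (fun a ha => ⟨{⟨a, ha⟩}, by simp⟩) ?_
    rintro x ⟨t, hx⟩ y ⟨t', hy⟩
    exact ⟨t ∪ t', by rw [WithBot.coe_sup, Finset.sup_union, hx, hy]⟩
  choose t ht using fun x : supClosure s => hsub x.2
  have hinj : Function.Injective t := fun x y hxy =>
    Subtype.ext (WithBot.coe_injective (by rw [ht, ht, hxy]))
  refine (mk_le_of_injective hinj).trans ?_
  cases finite_or_infinite s
  · exact le_max_of_le_left (mk_lt_aleph0 (α := Finset s)).le
  · exact le_max_of_le_right (mk_finset_of_infinite s).le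

namespace GadgetExt

section Nontrivial

variable {B X : Type*} [Lattice B] {r : X → B} {F : X → Type*} [∀ i, Lattice (F i)]
  [∀ i, BoundedOrder (F i)] {w w' : GadgetExt r F} {i : X} {c f : F i} {b d m : B}

theorem le_of_forall_le (hb : ∀ b, base r F b ≤ w → base r F b ≤ w')
    (ht : ∀ i (c : F i) b, c ≠ ⊥ → ¬ b ≤ r i → tensor r i c b ≤ w → tensor r i c b ≤ w') :
    w ≤ w' := by
  refine le_iff.2 ⟨hb, fun i c b h => ?_⟩
  by_cases hcb : c = ⊥ ∨ b ≤ r i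
  · rw [tensor_eq_base hcb] at h ⊢
    exact hb _ h
  · exact ht i c b (mt .inl hcb) (mt .inr hcb) h

@[elab_as_elim]
theorem induction' {P : GadgetExt r F → Prop} (base : ∀ d, P (base r F d))
    (tensor : ∀ i c d, c ≠ ⊥ → ¬ d ≤ r i → P (tensor r i c d))
    (sup : ∀ w w', P w → P w' → P (w ⊔ w')) (w : GadgetExt r F) : P w := by
  refine induction base (fun i c d => ?_) sup w
  by_cases hcd : c = ⊥ ∨ d ≤ r i
  · exact tensor_eq_base hcd ▸ base (r i)
  · exact tensor i c d (mt .inl hcd) (mt .inr hcd)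

theorem eq_bot_or_le_of_tensor_le_sup (hm : r i ≤ m)
    (h : ∀ (c : F i) d, tensor r i c d ≤ w → c = ⊥ ∨ d ≤ m)
    (h' : ∀ (c : F i) d, tensor r i c d ≤ w' → c = ⊥ ∨ d ≤ m)
    (hcd : tensor r i c d ≤ w ⊔ w') : c = ⊥ ∨ d ≤ m := by
  rw [tensor, gen_le, carrier_sup] at hcd
  refine satBound_tensor_self.1 (hcd.1 i _ (isIdealMod_Iic m) hm ?_)
  rintro (e | ⟨j, f, e⟩) ho
  · exact satBound_base
  · obtain rfl | hj := eq_or_ne i j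
    · rw [satBound_tensor_self]
      exact ho.elim (fun ho => h f e (gen_le.2 ho)) fun ho => h' f e (gen_le.2 ho)
    · exact satBound_tensor_of_ne hj

variable [∀ i, Nontrivial (F i)]

theorem tensor_notMem_range_base (hc : c ≠ ⊥) (hd : ¬ d ≤ r i) :
    tensor r i c d ∉ Set.range (base r F) :=
  fun h => (mem_range_base.1 h i c d le_rfl).elim hc hd

theorem le_of_tensor_le_tensor (hb : ¬ b ≤ r i) (h : tensor r i c b ≤ tensor r i f d) : c ≤ f := by
  obtain rfl | h | h := tensor_le_tensor.1 h
  exacts [bot_le, absurd h hb, h.1]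

theorem le_sup_of_tensor_le_tensor (hc : c ≠ ⊥) (h : tensor r i c b ≤ tensor r i f d) :
    b ≤ d ⊔ r i := by
  obtain h | h | h := tensor_le_tensor.1 h
  exacts [absurd h hc, h.trans le_sup_right, h.2]

end Nontrivial

end GadgetExt

open GadgetExt

/-- The nonzero elements of a bounded lattice `G` lie above elements of two lower sets `C true` and
`C false` (without `⊥`), and the members of `C a` have principal ideals of infinite cardinality
`κ a`. These are the features by which a gadget is recognized inside the extension. -/
structure IsMarked {G : Type u} [Lattice G] [BoundedOrder G] (C : Bool → Set G)
    (κ : Bool → Cardinal.{u}) : Prop where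
  ne_bot : ∀ {a}, ∀ h ∈ C a, h ≠ ⊥
  ne_top : ∀ {a}, ∀ h ∈ C a, h ≠ ⊤
  mem_of_le : ∀ {a}, ∀ h ∈ C a, ∀ c ≤ h, c ≠ ⊥ → c ∈ C a
  exists_le : ∀ c, c ≠ ⊥ → ∃ a, ∃ h ∈ C a, h ≤ c
  mk_Iic : ∀ {a}, ∀ h ∈ C a, #(Set.Iic h) = κ a
  aleph0_le : ∀ a, ℵ₀ ≤ κ a
  exists_sup_eq_top : ∃ f f' : G, f ≠ ⊤ ∧ f' ≠ ⊤ ∧ f ⊔ f' = ⊤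

/-- A family of marked gadgets sitting above all elements of `B`, in which the cardinality `κ i a`
exceeds that of `B` and determines `i` and `a`. -/
structure IsMarking {B X : Type u} [Lattice B] (r : X → B) {F : X → Type u} [∀ i, Lattice (F i)]
    [∀ i, BoundedOrder (F i)] (C : ∀ i, Bool → Set (F i)) (κ : X → Bool → Cardinal.{u}) :
    Prop where
  isMarked : ∀ i, IsMarked (C i) (κ i)
  injective : ∀ {i a j b}, κ i a = κ j b → i = j ∧ a = b
  mk_lt : ∀ i a, #B < κ i a
  surjective : Function.Surjective r

/-- The members of `C i a` occur nontrivially below `w`. -/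
def IsActive {B X : Type*} [Lattice B] {r : X → B} {F : X → Type*} [∀ i, Lattice (F i)]
    [∀ i, BoundedOrder (F i)] (C : ∀ i, Bool → Set (F i)) (i : X) (a : Bool)
    (w : GadgetExt r F) : Prop :=
  ∃ h ∈ C i a, ∃ d, ¬ d ≤ r i ∧ tensor r i h d ≤ w

/-- Below `w`, only the `i`-th gadget is active, and the elements of `B` are at most `r i`. -/
def IsLocal {B X : Type*} [Lattice B] {r : X → B} {F : X → Type*} [∀ i, Lattice (F i)]
    [∀ i, BoundedOrder (F i)] (C : ∀ i, Bool → Set (F i)) (i : X) (w : GadgetExt r F) : Prop :=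
  (∀ j a, IsActive C j a w → j = i) ∧ ∀ b, base r F b ≤ w → b ≤ r i

namespace IsMarking

variable {B X : Type u} [Lattice B] {r : X → B} {F : X → Type u} [∀ i, Lattice (F i)]
  [∀ i, BoundedOrder (F i)] {C : ∀ i, Bool → Set (F i)} {κ : X → Bool → Cardinal.{u}}
  {w v : GadgetExt r F} {i : X} {a : Bool} {c f g h : F i} {b d z : B}

section Recognition

theorem exists_isActive_of_tensor_le (M : IsMarking r C κ) (hc : c ≠ ⊥) (hd : ¬ d ≤ r i)
    (h : tensor r i c d ≤ w) : ∃ a, IsActive C i a w := by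
  obtain ⟨a, f, hf, hfc⟩ := (M.isMarked i).exists_le c hc
  exact ⟨a, f, hf, d, hd, (tensor_mono hfc le_sup_left).trans h⟩

variable [∀ i, Nontrivial (F i)]

theorem mem_supClosure_of_le_tensor (hw : w ≤ tensor r i h d) :
    w ∈ supClosure (Set.range (base r F) ∪
      Set.range fun p : Set.Iic h × B => tensor r i (p.1 : F i) p.2) := by
  induction w using induction' with
  | base b => exact subset_supClosure (.inl ⟨b, rfl⟩)
  | tensor j c b hc hb =>
    obtain rfl := eq_of_tensor_le_tensor hw hc hb
    exact subset_supClosure (.inr ⟨(⟨c, le_of_tensor_le_tensor hb hw⟩, b), rfl⟩)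
  | sup v v' ih ih' =>
    exact supClosed_supClosure (ih (le_sup_left.trans hw)) (ih' (le_sup_right.trans hw))

theorem mk_Iic_le (M : IsMarking r C κ) (hh : h ∈ C i a) (hw : w ≤ tensor r i h d) :
    #(Set.Iic w) ≤ κ i a := by
  have hB := (M.mk_lt i a).le
  have hsub := mk_le_mk_of_subset fun v (hv : v ∈ Set.Iic w) =>
    mem_supClosure_of_le_tensor (le_trans hv hw)
  refine hsub.trans ((mk_supClosure_le _).trans (max_le ((M.isMarked i).aleph0_le a) ?_))
  refine (mk_union_le _ _).trans
    (add_le_of_le ((M.isMarked i).aleph0_le a) (mk_range_le.trans hB) ?_)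
  refine mk_range_le.trans ?_
  rw [mk_prod, lift_id, lift_id, (M.isMarked _).mk_Iic h hh]
  exact mul_le_of_le ((M.isMarked i).aleph0_le a) le_rfl hB

theorem le_mk_Iic (M : IsMarking r C κ) (hh : h ∈ C i a) (hd : ¬ d ≤ r i)
    (hw : tensor r i h d ≤ w) : κ i a ≤ #(Set.Iic w) := by
  rw [← (M.isMarked _).mk_Iic h hh]
  refine mk_le_of_injective (f := fun c => ⟨tensor r i c.1 d,
    (tensor_mono c.2 le_sup_left).trans hw⟩) fun c c' hcc => ?_
  replace hcc := congrArg Subtype.val hcc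
  exact Subtype.ext ((le_of_tensor_le_tensor hd hcc.le).antisymm (le_of_tensor_le_tensor hd hcc.ge))

theorem exists_isActive (M : IsMarking r C κ) (hw : w ∉ Set.range (base r F)) :
    ∃ i a, IsActive C i a w := by
  rw [mem_range_base] at hw
  push Not at hw
  obtain ⟨i, c, d, h, hc, hd⟩ := hw
  exact ⟨i, M.exists_isActive_of_tensor_le hc hd h⟩

theorem mem_range_base_iff_mk_Iic_le (M : IsMarking r C κ) :
    w ∈ Set.range (base r F) ↔ #(Set.Iic w) ≤ #B := by
  constructor
  · rintro ⟨b, rfl⟩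
    exact (mk_le_mk_of_subset fun v hv => mem_range_base_of_le hv).trans mk_range_le
  · intro h
    by_contra hw
    obtain ⟨i, a, f, hf, d, hd, hfd⟩ := M.exists_isActive hw
    exact (h.trans_lt (M.mk_lt i a)).not_ge (M.le_mk_Iic hf hd hfd)

theorem mk_Iic_eq (M : IsMarking r C κ) (hh : h ∈ C i a) (hw : w ≤ tensor r i h d)
    (hr : w ∉ Set.range (base r F)) : #(Set.Iic w) = κ i a := by
  refine (M.mk_Iic_le hh hw).antisymm ?_
  rw [mem_range_base] at hr
  push Not at hr
  obtain ⟨j, c, e, hce, hc, he⟩ := hr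
  obtain rfl := eq_of_tensor_le_tensor (hce.trans hw) hc he
  have hch := le_of_tensor_le_tensor he (hce.trans hw)
  exact M.le_mk_Iic ((M.isMarked _).mem_of_le h hh c hch hc) he hce

theorem isActive_iff (M : IsMarking r C κ) :
    IsActive C i a w ↔ ∃ w' ≤ w, w' ∉ Set.range (base r F) ∧
      ∀ v ≤ w', v ∉ Set.range (base r F) → #(Set.Iic v) = κ i a := by
  constructor
  · rintro ⟨h, hh, d, hd, hw⟩
    exact ⟨_, hw, tensor_notMem_range_base ((M.isMarked _).ne_bot h hh) hd, fun v => M.mk_Iic_eq hh⟩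
  · rintro ⟨w', hw', hr, hκ⟩
    obtain ⟨j, b, f, hf, d, hd, hfd⟩ := M.exists_isActive hr
    have hmem := tensor_notMem_range_base ((M.isMarked _).ne_bot f hf) hd
    obtain ⟨rfl, rfl⟩ := M.injective ((M.mk_Iic_eq hf le_rfl hmem).symm.trans (hκ _ hfd hmem))
    exact ⟨f, hf, d, hd, hfd.trans hw'⟩

variable (β : GadgetExt r F ≃o GadgetExt r F)

theorem map_mem_range_base (M : IsMarking r C κ) :
    β w ∈ Set.range (base r F) ↔ w ∈ Set.range (base r F) := by
  rw [M.mem_range_base_iff_mk_Iic_le, M.mem_range_base_iff_mk_Iic_le, mk_Iic_map]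

theorem isActive_map (M : IsMarking r C κ) : IsActive C i a (β w) ↔ IsActive C i a w := by
  have himp (β : GadgetExt r F ≃o GadgetExt r F) {w} (h : IsActive C i a w) :
      IsActive C i a (β w) := by
    rw [M.isActive_iff] at h ⊢
    obtain ⟨w', hw', hr, h⟩ := h
    refine ⟨β w', β.monotone hw', (M.map_mem_range_base β).not.2 hr, fun v hv hvr => ?_⟩
    rw [← mk_Iic_map β.symm]
    exact h _ (β.symm_apply_le.2 hv) ((M.map_mem_range_base β.symm).not.2 hvr)
  exact ⟨fun h => by simpa using himp β.symm h, himp β⟩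

theorem map_base (M : IsMarking r C κ) (x : B) : β (base r F x) = base r F x := by
  have hle (β : GadgetExt r F ≃o GadgetExt r F) : β (base r F x) ≤ base r F x := by
    obtain ⟨b, hb⟩ := (M.map_mem_range_base β).2 ⟨x, rfl⟩
    rw [← hb, base_le_base]
    by_cases hx : ∀ y, y ≤ x
    · exact hx b
    push Not at hx
    obtain ⟨y, hy⟩ := hx
    obtain ⟨i, rfl⟩ := M.surjective x
    obtain ⟨a, h, hh, -⟩ := (M.isMarked i).exists_le ⊤ top_ne_bot
    obtain ⟨f, -, d, -, hfd⟩ := (M.isActive_map β.symm).2 ⟨h, hh, y, hy, le_rfl⟩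
    have hbh := (base_le_tensor i f d).trans hfd
    rw [OrderIso.le_symm_apply, ← hb, base_le_tensor_iff] at hbh
    exact hbh.resolve_right fun hbh => (M.isMarked _).ne_top h hh hbh.1
  exact (hle β).antisymm ((OrderIso.symm_apply_le β).1 (hle β.symm))

theorem base_le_map_iff (M : IsMarking r C κ) : base r F b ≤ β w ↔ base r F b ≤ w := by
  conv_lhs => rw [← M.map_base β b]
  exact β.le_iff_le

theorem isLocal_map (M : IsMarking r C κ) : IsLocal C i (β w) ↔ IsLocal C i w := by
  simp only [IsLocal, M.isActive_map, M.base_le_map_iff]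

theorem isLocal_tensor (M : IsMarking r C κ) (hf : f ≠ ⊤) (d : B) :
    IsLocal C i (tensor r i f d) :=
  ⟨fun _ _ ⟨h, hh, _, he, hle⟩ => eq_of_tensor_le_tensor hle ((M.isMarked _).ne_bot h hh) he,
    fun _ hb => (base_le_tensor_iff.1 hb).resolve_right fun h => hf h.1⟩

end Recognition

end IsMarking

namespace IsMarking

variable {B X : Type u} [Lattice B] {r : X → B} {F : X → Type u} [∀ i, Lattice (F i)]
  [∀ i, BoundedOrder (F i)] [∀ i, Nontrivial (F i)] {C : ∀ i, Bool → Set (F i)}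
  {κ : X → Bool → Cardinal.{u}} {w v : GadgetExt r F} {i : X} {a : Bool} {c f g h : F i} {b d z : B}
  (β : GadgetExt r F ≃o GadgetExt r F)

section Top

theorem exists_tensor_top_le (hz : r i ≤ z) (hw : w ≤ tensor r i ⊤ z)
    (hb : ∀ b, base r F b ≤ w → b ≤ r i) :
    ∃ m, r i ≤ m ∧ tensor r i ⊤ m ≤ w ⊔ base r F z ∧ w ≤ tensor r i ⊤ m := by
  induction w using induction' with
  | base b =>
    refine ⟨r i, le_rfl, ?_, (base_mono (hb b le_rfl)).trans (base_le_tensor i ⊤ _)⟩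
    rw [tensor_eq_base (.inr le_rfl)]
    exact (base_mono hz).trans le_sup_right
  | tensor j c d hc hd =>
    obtain rfl := eq_of_tensor_le_tensor hw hc hd
    have hdz : d ≤ z := (le_sup_of_tensor_le_tensor hc hw).trans (sup_le le_rfl hz)
    refine ⟨d ⊔ r j, le_sup_right, ?_, ?_⟩ <;> rw [tensor_sup_corner]
    · exact tensor_top_le hc ((base_mono hdz).trans le_sup_right) le_sup_left
    · exact tensor_mono le_top le_sup_left
  | sup v v' ih ih' =>
    obtain ⟨m, hm, hmv, hvm⟩ := ih (le_sup_left.trans hw) fun b h => hb b (h.trans le_sup_left)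
    obtain ⟨m', -, hmv', hvm'⟩ :=
      ih' (le_sup_right.trans hw) fun b h => hb b (h.trans le_sup_right)
    refine ⟨m ⊔ m', hm.trans le_sup_left, ?_, ?_⟩ <;> rw [tensor_sup_right]
    · exact sup_le (hmv.trans (sup_le_sup_right le_sup_left _))
        (hmv'.trans (sup_le_sup_right le_sup_right _))
    · exact sup_le_sup hvm hvm'

theorem sup_base_inf_le (M : IsMarking r C κ) (hz : r i ≤ z) (hw : w ≤ tensor r i ⊤ z)
    (hwb : ∀ b, base r F b ≤ w → b ≤ r i) (hv : IsLocal C i v) (z' : B) :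
    (w ⊔ base r F z') ⊓ v ≤ w ⊔ base r F z := by
  obtain ⟨m, hm, hmw, hwm⟩ := exists_tensor_top_le hz hw hwb
  refine le_of_forall_le (fun b hb => ?_) fun j c b hc hbr hb => ?_
  · exact (base_mono ((hv.2 b (hb.trans inf_le_right)).trans hz)).trans le_sup_right
  · obtain ⟨a, ha⟩ := M.exists_isActive_of_tensor_le hc hbr (hb.trans inf_le_right)
    obtain rfl := hv.1 _ _ ha
    have hbm : b ≤ m := by
      refine (eq_bot_or_le_of_tensor_le_sup hm (fun f e he => ?_) (fun f e he => ?_)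
        (hb.trans inf_le_left)).resolve_left hc
      · exact or_iff_not_imp_left.2 fun hf =>
          (le_sup_of_tensor_le_tensor hf (he.trans hwm)).trans (sup_le le_rfl hm)
      · exact (tensor_le_base.1 he).2.imp_right hm.trans'
    exact (tensor_mono le_top (hbm.trans le_sup_left)).trans hmw

theorem le_tensor_top_of_forall (M : IsMarking r C κ) (hw : IsLocal C i w)
    (h : ∀ z' v, IsLocal C i v → (w ⊔ base r F z') ⊓ v ≤ w ⊔ base r F z)
    (hb : ∀ b, base r F b ≤ w ⊔ base r F z → b ≤ z) : w ≤ tensor r i ⊤ z := by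
  refine le_of_forall_le (fun b hb => ?_) fun j c b hc hbr hcb => ?_
  · exact (base_mono (hw.2 b hb)).trans (base_le_tensor i ⊤ z)
  · obtain ⟨a, ha⟩ := M.exists_isActive_of_tensor_le hc hbr hcb
    obtain rfl := hw.1 _ _ ha
    obtain ⟨f, f', hf, hf', hff⟩ := (M.isMarked j).exists_sup_eq_top
    have htop : tensor r j ⊤ b ≤ w ⊔ base r F b :=
      tensor_top_le hc le_sup_right (hcb.trans le_sup_left)
    have hcov (g : F j) (hg : g ≠ ⊤) : tensor r j g b ≤ w ⊔ base r F z :=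
      (le_inf ((tensor_mono le_top le_sup_left).trans htop) le_rfl).trans
        (h b _ (M.isLocal_tensor hg b))
    have hbz : b ≤ z := by
      refine hb b ((base_le_tensor_top j b).trans ?_)
      rw [← hff, tensor_sup_left]
      exact sup_le (hcov f hf) (hcov f' hf')
    exact tensor_mono le_top (hbz.trans le_sup_left)

/-- The right-hand side only refers to the order and to the base, so that automorphisms respect
it. -/
theorem le_tensor_top_iff (M : IsMarking r C κ) (hz : r i ≤ z) (hw : IsLocal C i w) :
    w ≤ tensor r i ⊤ z ↔
      (∀ z' v, IsLocal C i v → (w ⊔ base r F z') ⊓ v ≤ w ⊔ base r F z) ∧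
        ∀ b, base r F b ≤ w ⊔ base r F z → b ≤ z := by
  refine ⟨fun h => ⟨fun z' v hv => M.sup_base_inf_le hz h hw.2 hv z', fun b hb => ?_⟩,
    fun h => M.le_tensor_top_of_forall hw h.1 h.2⟩
  obtain hb | hb := base_le_tensor_iff.1 (hb.trans (sup_le h (base_le_tensor_top i z)))
  · exact hb.trans hz
  · exact hb.2.trans (sup_le le_rfl hz)

theorem map_tensor_le_tensor_top_of_ne (M : IsMarking r C κ) (hz : r i ≤ z) (hf : f ≠ ⊤) :
    β (tensor r i f z) ≤ tensor r i ⊤ z := by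
  have hloc := M.isLocal_tensor hf z
  have hsup (z' : B) : β (tensor r i f z) ⊔ base r F z' = β (tensor r i f z ⊔ base r F z') := by
    rw [map_sup, M.map_base]
  obtain ⟨hinf, hbase⟩ := (M.le_tensor_top_iff hz hloc).1 (tensor_mono le_top le_sup_left)
  refine (M.le_tensor_top_iff hz ((M.isLocal_map β).2 hloc)).2 ⟨fun z' v hv => ?_, fun b hb => ?_⟩
  · have hinf := β.monotone (hinf z' (β.symm v) ((M.isLocal_map β.symm).2 hv))
    rwa [map_inf, ← hsup, ← hsup, β.apply_symm_apply] at hinf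
  · rw [hsup, M.base_le_map_iff] at hb
    exact hbase b hb

theorem map_tensor_top (M : IsMarking r C κ) (i : X) (z : B) :
    β (tensor r i ⊤ z) = tensor r i ⊤ z := by
  have hle (β : GadgetExt r F ≃o GadgetExt r F) : β (tensor r i ⊤ z) ≤ tensor r i ⊤ z := by
    obtain ⟨f, f', hf, hf', hff⟩ := (M.isMarked i).exists_sup_eq_top
    rw [← tensor_sup_corner]
    conv_lhs => rw [← hff, tensor_sup_left, map_sup]
    exact sup_le (M.map_tensor_le_tensor_top_of_ne β le_sup_right hf)
      (M.map_tensor_le_tensor_top_of_ne β le_sup_right hf')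
  exact (hle β).antisymm ((OrderIso.symm_apply_le β).1 (hle β.symm))

theorem map_tensor_le_tensor_top (M : IsMarking r C κ) (i : X) (f : F i) (z : B) :
    β (tensor r i f z) ≤ tensor r i ⊤ z :=
  (β.monotone (tensor_mono le_top le_sup_left)).trans (M.map_tensor_top β i z).le

theorem map_tensor_le (M : IsMarking r C κ) (hfg : f = ⊤ → g = ⊤)
    (h : ∀ (c : F i) b, c ≠ ⊥ → ¬ b ≤ r i → b ≤ d ⊔ r i →
      tensor r i c b ≤ β (tensor r i f d) → c ≤ g) : β (tensor r i f d) ≤ tensor r i g d := by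
  refine le_of_forall_le (fun b hb => ?_) fun j c b hc hbr hb => ?_
  · rw [M.base_le_map_iff, base_le_tensor_iff] at hb
    exact base_le_tensor_iff.2 (hb.imp_right (And.imp_left hfg))
  · have htop := hb.trans (M.map_tensor_le_tensor_top β i f d)
    obtain rfl := eq_of_tensor_le_tensor htop hc hbr
    have hbd := le_sup_of_tensor_le_tensor hc htop
    exact tensor_mono (h c b hc hbr hbd hb) hbd

end Top

end IsMarking

/-- Every copy of the gadget element `f` is fixed by the automorphisms of the extension. -/
def IsFixed {B X : Type*} [Lattice B] (r : X → B) {F : X → Type*} [∀ i, Lattice (F i)]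
    [∀ i, BoundedOrder (F i)] (i : X) (f : F i) : Prop :=
  ∀ (β : GadgetExt r F ≃o GadgetExt r F) d, β (tensor r i f d) = tensor r i f d

theorem IsFixed.sup {B X : Type*} [Lattice B] {r : X → B} {F : X → Type*} [∀ i, Lattice (F i)]
    [∀ i, BoundedOrder (F i)] [∀ i, Nontrivial (F i)] {i : X} {f g : F i} (hf : IsFixed r i f)
    (hg : IsFixed r i g) : IsFixed r i (f ⊔ g) := fun β d => by
  rw [tensor_sup_left, map_sup, hf, hg]

namespace IsMarking

variable {B X : Type u} [Lattice B] {r : X → B} {F : X → Type u} [∀ i, Lattice (F i)]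
  [∀ i, BoundedOrder (F i)] [∀ i, Nontrivial (F i)] {C : ∀ i, Bool → Set (F i)}
  {κ : X → Bool → Cardinal.{u}} {i : X} {f : F i} {b d : B}

section Comb

theorem isFixed_of_forall (M : IsMarking r C κ)
    (h : ∀ (β : GadgetExt r F ≃o GadgetExt r F) d (c : F i) b, c ≠ ⊥ → ¬ b ≤ r i → b ≤ d ⊔ r i →
      tensor r i c b ≤ β (tensor r i f d) → c ≤ f) : IsFixed r i f := fun β d =>
  (M.map_tensor_le β id (h β d)).antisymm
    ((OrderIso.symm_apply_le β).1 (M.map_tensor_le β.symm id (h β.symm d)))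

theorem not_tensor_top_le_map (M : IsMarking r C κ) (β : GadgetExt r F ≃o GadgetExt r F)
    (hf : f ≠ ⊤) (hb : ¬ b ≤ r i) : ¬ tensor r i ⊤ b ≤ β (tensor r i f d) := fun h =>
  (base_le_tensor_iff.1 ((M.base_le_map_iff β).1 ((base_le_tensor_top i b).trans h))).elim hb
    fun h => hf h.1

open Comb

variable {I : Type u} [LinearOrder I] {col : I → Bool} {κ' : Bool → Cardinal.{u}}
  {e : Comb col ≃o F i} {x z : Comb col} {a : Bool} {j k : I}

theorem mem_branch_of_tensor_le_map (M : IsMarking r C κ) (H : IsCombColoring col κ')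
    (hC : ∀ a, C i a = e '' branch col a) (β : GadgetExt r F ≃o GadgetExt r F)
    (hx : x ∈ branch col a) (hz : z ≠ ⊥) (hb : ¬ b ≤ r i)
    (h : tensor r i (e z) b ≤ β (tensor r i (e x) d)) : z ∈ branch col a := by
  refine mem_branch_of_forall H hz fun a' y hy hyz => ?_
  have hact : IsActive C i a' (β (tensor r i (e x) d)) :=
    ⟨e y, hC a' ▸ ⟨y, hy, rfl⟩, b, hb, (tensor_mono (e.monotone hyz) le_sup_left).trans h⟩
  obtain ⟨g, hg, d', hd', hgd⟩ := (M.isActive_map β).1 hact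
  rw [hC] at hg
  obtain ⟨g, hg, rfl⟩ := hg
  exact eq_of_mem_branch hg (mem_branch_of_le hx
    (e.le_iff_le.1 (le_of_tensor_le_tensor hd' hgd)) (ne_bot_of_mem_branch hg))

theorem not_tensor_tooth_le_map_spine (M : IsMarking r C κ) (H : IsCombColoring col κ')
    (hC : ∀ a, C i a = e '' branch col a) (β : GadgetExt r F ≃o GadgetExt r F)
    (hb : ¬ b ≤ r i) (hbd : b ≤ d ⊔ r i) :
    ¬ tensor r i (e (tooth j)) b ≤ β (tensor r i (e (spine k)) d) := fun h => by
  obtain ⟨l, hl⟩ := H.exists_col_ne (col j)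
  have hact : IsActive C i (col l) (β (tensor r i (e (spine l)) b)) :=
    (M.isActive_map β).2
      ⟨_, (hC _).symm ▸ Set.mem_image_of_mem e (spine_mem_branch l), b, hb, le_rfl⟩
  obtain ⟨g, hg, b', hb', hgb⟩ := hact
  rw [hC] at hg
  obtain ⟨g, hg, rfl⟩ := hg
  have hbb : b' ≤ b ⊔ r i :=
    le_sup_of_tensor_le_tensor (by simpa using ne_bot_of_mem_branch hg)
      (hgb.trans (M.map_tensor_le_tensor_top β i _ b))
  have hroof (l : I) : e (spine l) ≤ e roof := e.monotone spine_le_roof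
  refine M.not_tensor_top_le_map (f := e roof) (d := d) β (by simp [roof_ne_top]) hb' ?_
  rw [← e.map_top, ← tooth_sup_of_mem_branch hg hl.symm, map_sup, tensor_sup_left]
  exact sup_le (((tensor_mono le_rfl hbb).trans h).trans
      (β.monotone (tensor_mono (hroof k) le_sup_left)))
    (hgb.trans (β.monotone (tensor_mono (hroof l) hbd)))

theorem isFixed_spine [WellFoundedLT I] (M : IsMarking r C κ) (H : IsCombColoring col κ')
    (hC : ∀ a, C i a = e '' branch col a) (k : I) : IsFixed r i (e (spine k)) := by
  induction k using WellFoundedLT.induction with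
  | ind k ih =>
    refine M.isFixed_of_forall fun β d c b hc hb hbd h => ?_
    obtain ⟨z, rfl⟩ := e.surjective c
    obtain ⟨j, hj, rfl | rfl⟩ := M.mem_branch_of_tensor_le_map H hC β (spine_mem_branch k)
      (by simpa using hc) hb h
    · obtain hjk | hkj := lt_or_ge j k
      · rw [← ih j hjk β b, β.le_iff_le] at h
        exact le_of_tensor_le_tensor hb h
      · exact e.monotone (spine_le_spine.2 ⟨hj, hkj⟩)
    · exact absurd h (M.not_tensor_tooth_le_map_spine H hC β hb hbd)

theorem isFixed_tooth [WellFoundedLT I] (M : IsMarking r C κ) (H : IsCombColoring col κ')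
    (hC : ∀ a, C i a = e '' branch col a) (k : I) : IsFixed r i (e (tooth k)) := by
  refine M.isFixed_of_forall fun β d c b hc hb hbd h => ?_
  obtain ⟨z, rfl⟩ := e.surjective c
  obtain ⟨j, hj, hz⟩ := M.mem_branch_of_tensor_le_map H hC β (tooth_mem_branch k)
    (by simpa using hc) hb h
  have hspine : spine j ≤ z := by obtain rfl | rfl := hz <;> simp [spine_le_tooth]
  have hle : e (spine j) ≤ e (tooth k) := by
    refine le_of_tensor_le_tensor hb (β.le_iff_le.1 (le_trans ?_ h) : _ ≤ tensor r i _ d)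
    rw [M.isFixed_spine H hC]
    exact tensor_mono (e.monotone hspine) le_sup_left
  obtain rfl | rfl := hz
  · exact hle
  · obtain rfl | hkj := (spine_le_tooth.1 (e.le_iff_le.1 hle)).2.eq_or_lt
    · exact le_rfl
    refine absurd ?_ (M.not_tensor_top_le_map (f := e (tooth k)) (d := d) β
      (by simp [tooth_ne_top]) hb)
    rw [← e.map_top, ← tooth_sup_spine hkj, map_sup, tensor_sup_left]
    refine sup_le h ?_
    rw [← M.isFixed_spine H hC k β]
    exact β.monotone (tensor_mono (e.monotone (spine_le_tooth.2 ⟨rfl, le_rfl⟩)) hbd)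

theorem isFixed_comb [WellFoundedLT I] (M : IsMarking r C κ) (H : IsCombColoring col κ')
    (hC : ∀ a, C i a = e '' branch col a) (f : F i) : IsFixed r i f := by
  obtain ⟨x, rfl⟩ := e.surjective f
  cases x with
  | bot =>
    intro β d
    rw [← bot_def, e.map_bot, tensor_eq_base (.inl rfl), M.map_base]
  | top =>
    intro β d
    rw [← top_def, e.map_top, M.map_tensor_top]
  | roof =>
    obtain ⟨p, -⟩ := H.exists_col true
    obtain ⟨q, hq⟩ := H.exists_col_ne (col p)
    rw [← spine_sup_spine_of_ne hq, map_sup]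
    exact (M.isFixed_spine H hC q).sup (M.isFixed_spine H hC p)
  | spine k => exact M.isFixed_spine H hC k
  | tooth k => exact M.isFixed_tooth H hC k

end Comb

end IsMarking

/-- A configuration transferring information between the intervals `[m, y]`, `[m, u]` and
`[m, u']`: `u` meets `u'` in `m`, each of `y` and `u` lies below the join of the other two
elements, and `m` is comparable with everything below `u` or `u'`. -/
structure Link {B : Type*} [Lattice B] (m y u u' : B) : Prop where
  inf : u ⊓ u' = m
  le : y ≤ u ⊔ u'
  le_left : u ≤ y ⊔ u'
  le_or_ge_left : ∀ e ≤ u, e ≤ m ∨ m ≤ e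
  le_or_ge_right : ∀ e ≤ u', e ≤ m ∨ m ≤ e

/-- A set `S` containing `y₀`, where `x₀ < y₀`, such that all intervals above `x₀` with upper end
in `S` are linked, and the lattice is, as an ideal, generated by `S` and the linking elements. -/
structure Linked {B : Type*} [Lattice B] (S : Set B) (x₀ y₀ : B) : Prop where
  mem : y₀ ∈ S
  lt : x₀ < y₀
  exists_link : ∀ m y, x₀ ≤ m → m ≤ y → y ∈ S → ∃ u u', Link m y u u'
  induction : ∀ P : B → Prop, (∀ d d', d ≤ d' → P d' → P d) →
    (∀ d d', P d → P d' → P (d ⊔ d')) → (∀ y ∈ S, y₀ ≤ y → P y) →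
    (∀ m y u u', x₀ ≤ m → m ≤ y → y ∈ S → y₀ ≤ y → Link m y u u' → P u) → ∀ d, P d

namespace Link

variable {B : Type*} [Lattice B] {m y u u' : B}

theorem le_of_left (K : Link m y u u') : m ≤ u := K.inf ▸ inf_le_left

theorem le_of_right (K : Link m y u u') : m ≤ u' := K.inf ▸ inf_le_right

end Link

section

variable {B X : Type*} [Lattice B] {r : X → B} {F : X → Type*} [∀ i, Lattice (F i)]
  [∀ i, BoundedOrder (F i)] [∀ i, Nontrivial (F i)] {i : X} {d d' y : B} {v : GadgetExt r F}

theorem tensor_inf_tensor_top (c : F i) (h : d ≤ d' ⊔ r i) :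
    tensor r i c d' ⊓ tensor r i ⊤ d = tensor r i c d := by
  rw [tensor_inf, inf_top_eq, inf_eq_right.2 (sup_le h le_sup_right), tensor_sup_corner]

theorem tensor_le_tensor_iff (hd : ¬ d ≤ r i) {c f : F i} :
    tensor r i c d ≤ tensor r i f d ↔ c ≤ f :=
  ⟨le_of_tensor_le_tensor hd, fun h => tensor_mono h le_sup_left⟩

theorem exists_tensor_between (hv : base r F (r i) ≤ v) (w : GadgetExt r F)
    (hw : w ≤ tensor r i ⊤ y) (hb : ∀ b, base r F b ≤ w → b ≤ r i)
    (h : ∀ (c : F i) d, c ≠ ⊥ → ¬ d ≤ r i → tensor r i c d ≤ w → tensor r i c y ≤ v) :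
    ∃ f, tensor r i f y ≤ v ∧ w ≤ tensor r i f y := by
  induction w using GadgetExt.induction' with
  | base b =>
    exact ⟨⊥, by rwa [tensor_eq_base (.inl rfl)],
      (base_mono (hb b le_rfl)).trans (base_le_tensor ..)⟩
  | tensor j c d hc hd =>
    obtain rfl := eq_of_tensor_le_tensor hw hc hd
    exact ⟨c, h c d hc hd le_rfl, tensor_mono le_rfl (le_sup_of_tensor_le_tensor hc hw)⟩
  | sup w w' ih ih' =>
    obtain ⟨f, hfv, hwf⟩ := ih (le_sup_left.trans hw) (fun b h => hb b (h.trans le_sup_left))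
      fun c d hc hd hcd => h c d hc hd (hcd.trans le_sup_left)
    obtain ⟨f', hfv', hwf'⟩ := ih' (le_sup_right.trans hw)
      (fun b h => hb b (h.trans le_sup_right))
      fun c d hc hd hcd => h c d hc hd (hcd.trans le_sup_right)
    refine ⟨f ⊔ f', ?_, ?_⟩ <;> rw [tensor_sup_left]
    exacts [sup_le hfv hfv', sup_le_sup hwf hwf']

end

namespace IsMarking

variable {B X : Type u} [Lattice B] {r : X → B} {F : X → Type u} [∀ i, Lattice (F i)]
  [∀ i, BoundedOrder (F i)] [∀ i, Nontrivial (F i)] {C : ∀ i, Bool → Set (F i)}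
  {κ : X → Bool → Cardinal.{u}} {i : X} {f t : F i} {b d d' m x₀ y y₀ u u' : B} {S : Set B}

theorem map_tensor_eq_inf (M : IsMarking r C κ) (β : GadgetExt r F ≃o GadgetExt r F) (c : F i)
    (h : d ≤ d' ⊔ r i) : β (tensor r i c d) = β (tensor r i c d') ⊓ tensor r i ⊤ d := by
  rw [← tensor_inf_tensor_top c h, map_inf, M.map_tensor_top]

theorem tensor_le_map_of_le (M : IsMarking r C κ) (β : GadgetExt r F ≃o GadgetExt r F)
    (hm : r i ≤ m) (hmr : ¬ m ≤ r i) (hmu : m ≤ u) (hcomp : ∀ e ≤ u, e ≤ m ∨ m ≤ e)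
    (h : tensor r i f m ≤ β (tensor r i t y)) : tensor r i f u ≤ β (tensor r i t u) := by
  rw [← OrderIso.symm_apply_le] at h ⊢
  refine M.map_tensor_le β.symm ?_ fun c b _ hb hbu hcb => ?_
  · rintro rfl
    rw [M.map_tensor_top] at h
    exact top_le_iff.1 (le_of_tensor_le_tensor hmr h)
  · rw [sup_eq_left.2 (hm.trans hmu)] at hbu
    have hct {e} (he : ¬ e ≤ r i) (heb : e ≤ b) (hem : e ≤ m) : c ≤ t := by
      refine le_of_tensor_le_tensor he (le_trans ?_ h)
      rw [M.map_tensor_eq_inf β.symm f (hmu.trans le_sup_left)]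
      exact le_inf ((tensor_mono le_rfl (heb.trans le_sup_left)).trans hcb)
        (tensor_mono le_top (hem.trans le_sup_left))
    exact (hcomp b hbu).elim (hct hb le_rfl) fun h => hct hmr h le_rfl

theorem tensor_le_map_of_linked (M : IsMarking r C κ) (β : GadgetExt r F ≃o GadgetExt r F)
    (N : Linked S (r i) y₀) (hy : y ∈ S) (hry : r i ≤ y) (hf : f ≠ ⊥) (hmr : ¬ m ≤ r i)
    (h : tensor r i f m ≤ β (tensor r i t y)) : tensor r i f y ≤ β (tensor r i t y) := by
  have hmy : m ⊔ r i ≤ y := sup_le (by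
    simpa [hry] using le_sup_of_tensor_le_tensor hf (h.trans (M.map_tensor_le_tensor_top β i t y)))
    hry
  rw [← tensor_sup_corner] at h
  have hmr' : ¬ m ⊔ r i ≤ r i := fun h => hmr (le_sup_left.trans h)
  obtain ⟨u, u', K⟩ := N.exists_link (m ⊔ r i) y le_sup_right hmy hy
  have hjoin : tensor r i f (u ⊔ u') ≤ β (tensor r i t (u ⊔ u')) := by
    rw [tensor_sup_right, tensor_sup_right, map_sup]
    exact sup_le_sup (M.tensor_le_map_of_le β le_sup_right hmr' K.le_of_left K.le_or_ge_left h)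
      (M.tensor_le_map_of_le β le_sup_right hmr' K.le_of_right K.le_or_ge_right h)
  have hyu : y ≤ u ⊔ u' ⊔ r i := K.le.trans le_sup_left
  rw [M.map_tensor_eq_inf β t hyu, ← tensor_inf_tensor_top f hyu]
  exact inf_le_inf_right _ hjoin

theorem exists_map_tensor_eq (M : IsMarking r C κ) (β : GadgetExt r F ≃o GadgetExt r F)
    (N : Linked S (r i) y₀) (t : F i) (hy : y ∈ S) (hry : r i ≤ y) :
    ∃ t' : F i, tensor r i t' y = β (tensor r i t y) := by
  obtain rfl | ht := eq_or_ne t ⊤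
  · exact ⟨⊤, (M.map_tensor_top β i y).symm⟩
  obtain ⟨f, hle, hge⟩ := exists_tensor_between ((M.base_le_map_iff β).2 (base_le_tensor ..))
    (β (tensor r i t y)) (M.map_tensor_le_tensor_top β i t y)
    (fun b hb => (base_le_tensor_iff.1 ((M.base_le_map_iff β).1 hb)).resolve_right
      fun h => ht h.1)
    fun c d hc hd hcd => M.tensor_le_map_of_linked β N hy hry hc hd hcd
  exact ⟨f, hle.antisymm hge⟩

theorem map_tensor_eq_of_le (M : IsMarking r C κ) (β : GadgetExt r F ≃o GadgetExt r F)
    (N : Linked S (r i) y₀) (h : β (tensor r i f y₀) = tensor r i t y₀) (hy : y ∈ S)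
    (hy₀ : y₀ ≤ y) : β (tensor r i f y) = tensor r i t y := by
  obtain ⟨t', ht'⟩ := M.exists_map_tensor_eq β N f hy (N.lt.le.trans hy₀)
  have hcut := M.map_tensor_eq_inf β f (hy₀.trans (le_sup_left (b := r i)))
  rw [h, ← ht', tensor_inf_tensor_top _ (hy₀.trans le_sup_left)] at hcut
  have htt : t = t' := (le_of_tensor_le_tensor N.lt.not_ge hcut.le).antisymm
    (le_of_tensor_le_tensor N.lt.not_ge hcut.ge)
  rw [← ht', htt]

theorem map_tensor_le_of_link (M : IsMarking r C κ) (β : GadgetExt r F ≃o GadgetExt r F)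
    (hm : r i ≤ m) (hmy : m ≤ y) (hyr : ¬ y ≤ r i) (K : Link m y u u')
    (h : β (tensor r i f y) = tensor r i t y) : β (tensor r i f u) ≤ tensor r i t u := by
  refine M.map_tensor_le β ?_ fun c b hc hb hbu hcb => ?_
  · rintro rfl
    rw [M.map_tensor_top] at h
    exact top_le_iff.1 (le_of_tensor_le_tensor hyr h.le)
  rw [sup_eq_left.2 (hm.trans K.le_of_left)] at hbu
  have hcopy : tensor r i c b ≤ copy r i u' (y ⊔ u') t := by
    refine hcb.trans ((β.monotone (tensor_mono le_rfl (K.le_left.trans le_sup_left))).trans ?_)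
    rw [tensor_sup_right, map_sup, h]
    exact sup_le_sup (tensor_mono le_rfl (le_sup_left.trans le_sup_left))
      (M.map_tensor_le_tensor_top β i f u')
  obtain ⟨-, hct | hbu'⟩ :=
    ((tensor_le_copy (hm.trans K.le_of_right) le_sup_right).1 hcopy).resolve_left hc
  · exact hct
  have hbm : b ≤ m := K.inf ▸ le_inf hbu hbu'
  have hcm : tensor r i c b ≤ β (tensor r i f m) := by
    rw [M.map_tensor_eq_inf β f (K.le_of_left.trans le_sup_left)]
    exact le_inf hcb (tensor_mono le_top (hbm.trans le_sup_left))
  exact le_of_tensor_le_tensor hb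
    ((hcm.trans (β.monotone (tensor_mono le_rfl (hmy.trans le_sup_left)))).trans h.le)

theorem map_tensor_eq_of_linked (M : IsMarking r C κ) (β : GadgetExt r F ≃o GadgetExt r F)
    (N : Linked S (r i) y₀) (h : β (tensor r i f y₀) = tensor r i t y₀) (d : B) :
    β (tensor r i f d) = tensor r i t d := by
  refine N.induction _ (fun d d' hd hd' => ?_) (fun d d' hd hd' => ?_)
    (fun y hy hy₀ => M.map_tensor_eq_of_le β N h hy hy₀)
    (fun m y u u' hm hmy hy hy₀ K => ?_) d
  · have hdd : d ≤ d' ⊔ r i := hd.trans le_sup_left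
    rw [M.map_tensor_eq_inf β f hdd, hd', tensor_inf_tensor_top _ hdd]
  · rw [tensor_sup_right, tensor_sup_right, map_sup, hd, hd']
  · have hyr : ¬ y ≤ r i := fun h => N.lt.not_ge (hy₀.trans h)
    have hty := M.map_tensor_eq_of_le β N h hy hy₀
    refine (M.map_tensor_le_of_link β hm hmy hyr K hty).antisymm ?_
    rw [← OrderIso.symm_apply_le]
    exact M.map_tensor_le_of_link β.symm hm hmy hyr K ((β.symm_apply_eq).2 hty.symm)

theorem exists_map_tensor (M : IsMarking r C κ) (N : Linked S (r i) y₀)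
    (β : GadgetExt r F ≃o GadgetExt r F) :
    ∃ σ : F i ≃o F i, ∀ t d, β (tensor r i t d) = tensor r i (σ t) d := by
  obtain ⟨σ, hσ⟩ := exists_orderIso_of_mem_range (e := fun c => tensor r i c y₀)
    (fun _ _ => tensor_le_tensor_iff N.lt.not_ge) β
    (fun t => M.exists_map_tensor_eq β N t N.mem N.lt.le)
    (fun t => M.exists_map_tensor_eq β.symm N t N.mem N.lt.le)
  exact ⟨σ, fun t => M.map_tensor_eq_of_linked β N (hσ t).symm⟩

end IsMarking

/-! ### Index sets and linked intervals -/

theorem mk_Ici_toType_ord {c : Cardinal.{u}} (hc : ℵ₀ ≤ c) (i : c.ord.ToType) :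
    #(Set.Ici i) = c := by
  have : Infinite c.ord.ToType := by rwa [Cardinal.infinite_iff, mk_ord_toType]
  rw [← Set.compl_Iio, mk_compl_of_infinite, mk_ord_toType]
  exact mk_Iio_lt i (by rw [mk_ord_toType, Ordinal.type_toType])

theorem exists_isCombColoring (κ : Bool → Cardinal.{u}) (hκ : ∀ a, ℵ₀ ≤ κ a) :
    ∃ (I : Type u) (_ : LinearOrder I) (_ : WellFoundedLT I) (col : I → Bool),
      IsCombColoring col κ := by
  refine ⟨Σₗ' a : Bool, (κ a).ord.ToType, inferInstance,
    ⟨(PSigma.lex ⟨_, wellFounded_lt⟩ fun _ => ⟨_, wellFounded_lt⟩).wf⟩,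
    PSigma.fst, fun a => ?_, fun ⟨a, x⟩ => ?_, hκ⟩
  · have : Nonempty (κ a).ord.ToType := by
      rw [← mk_ne_zero_iff, mk_ord_toType]
      exact (aleph0_pos.trans_le (hκ a)).ne'
    exact ⟨⟨a, Classical.arbitrary _⟩, rfl⟩
  · refine Eq.trans (Eq.symm ?_) (mk_Ici_toType_ord (hκ a) x)
    refine mk_congr (.ofBijective (fun y : Set.Ici x => ⟨⟨a, y⟩, rfl, .right a y.2⟩)
      ⟨fun y z h => ?_, ?_⟩)
    · exact Subtype.ext (eq_of_heq (PSigma.mk.inj (congrArg Subtype.val h)).2)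
    · rintro ⟨⟨b, y⟩, hb, hy⟩
      obtain rfl : b = a := hb
      cases hy with
      | left _ _ h => exact absurd h (lt_irrefl _)
      | right _ h => exact ⟨⟨y, h⟩, rfl⟩

theorem exists_injective_forall_lt (Y : Type u) (c : Cardinal.{u}) :
    ∃ κ : Y → Cardinal.{u}, Function.Injective κ ∧ ∀ y, ℵ₀ ≤ κ y ∧ c < κ y := by
  obtain ⟨o, ho⟩ : Order.succ (max ℵ₀ c) ∈ Set.range aleph := by
    rw [range_aleph]
    exact Set.mem_Ici.2 ((le_max_left ℵ₀ c).trans (Order.le_succ _))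
  refine ⟨fun y => ℵ_ (o + Ordinal.typein (@WellOrderingRel Y) y), fun y z h => ?_,
    fun y => ⟨aleph0_le_aleph _, lt_of_lt_of_le ?_ (aleph_le_aleph.2 le_self_add)⟩⟩
  · rwa [aleph.injective.eq_iff, add_right_inj, Ordinal.typein_inj] at h
  · rw [ho]
    exact (le_max_right _ _).trans_lt (Order.lt_succ _)

namespace GadgetExt

variable {B X : Type*} [Lattice B] {r : X → B} {F : X → Type*} [∀ i, Lattice (F i)]
  [∀ i, BoundedOrder (F i)] [∀ i, Nontrivial (F i)] {i : X} {f g : F i} {x₀ y₀ y : B}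
  {w : GadgetExt r F}

theorem le_or_ge_of_le_tensor (hf : f ≠ ⊤) (hw : w ≤ tensor r i f y) :
    w ≤ base r F (r i) ∨ base r F (r i) ≤ w := by
  by_cases hr : w ∈ Set.range (base r F)
  · obtain ⟨b, rfl⟩ := hr
    exact .inl (base_mono ((base_le_tensor_iff.1 hw).resolve_right fun h => hf h.1))
  · rw [mem_range_base] at hr
    push Not at hr
    obtain ⟨j, c, d, hle, hc, hd⟩ := hr
    obtain rfl := eq_of_tensor_le_tensor (hle.trans hw) hc hd
    exact .inr ((base_le_tensor ..).trans hle)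

theorem link_tensor (hfg : IsCompl f g) (hf : f ≠ ⊤) (hg : g ≠ ⊤) :
    Link (base r F (r i)) (base r F y) (tensor r i f y) (tensor r i g y) where
  inf := by rw [tensor_inf, hfg.inf_eq_bot, tensor_eq_base (.inl rfl)]
  le := by
    rw [← tensor_sup_left, hfg.sup_eq_top]
    exact base_le_tensor_top i y
  le_left := (tensor_mono le_top le_sup_left).trans
    (tensor_top_le (fun h => hf (by simpa [h] using hfg.sup_eq_top)) le_sup_left le_sup_right)
  le_or_ge_left _ := le_or_ge_of_le_tensor hf
  le_or_ge_right _ := le_or_ge_of_le_tensor hg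

theorem linked_range_base (hr : Set.range r = Set.Ici x₀)
    (hF : ∀ i, ∃ f g : F i, IsCompl f g ∧ f ≠ ⊤ ∧ g ≠ ⊤) (h : x₀ < y₀) :
    Linked (Set.range (base r F)) (base r F x₀) (base r F y₀) where
  mem := ⟨y₀, rfl⟩
  lt := lt_of_le_not_ge (base_mono h.le) (base_le_base.not.2 h.not_ge)
  exists_link := by
    rintro m _ hm hmy ⟨y, rfl⟩
    obtain ⟨m, rfl⟩ := mem_range_base_of_le hmy
    obtain ⟨i, rfl⟩ := hr.ge (base_le_base.1 hm)
    obtain ⟨f, g, hfg, hf, hg⟩ := hF i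
    exact ⟨_, _, link_tensor hfg hf hg⟩
  induction P hdown hsup hbase hlink d := by
    induction d using GadgetExt.induction with
    | base b =>
      exact hdown _ _ (base_mono le_sup_left) (hbase (base r F (b ⊔ y₀)) ⟨_, rfl⟩
        (base_mono le_sup_right))
    | tensor i c b =>
      obtain ⟨f, g, hfg, hf, hg⟩ := hF i
      have hx : x₀ ≤ r i := hr.le ⟨i, rfl⟩
      have hi : r i ≤ b ⊔ r i ⊔ y₀ := le_sup_right.trans le_sup_left
      have hP {u u'} (K : Link (base r F (r i)) (base r F (b ⊔ r i ⊔ y₀)) u u') : P u :=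
        hlink _ _ _ _ (base_mono hx) (base_mono hi) ⟨_, rfl⟩ (base_mono le_sup_right) K
      have htop : P (tensor r i ⊤ (b ⊔ r i ⊔ y₀)) := by
        rw [← hfg.sup_eq_top, tensor_sup_left]
        exact hsup _ _ (hP (link_tensor hfg hf hg)) (hP (link_tensor hfg.symm hg hf))
      exact hdown _ _ (tensor_mono le_top ((le_sup_left.trans le_sup_left).trans le_sup_left)) htop
    | sup v w hv hw => exact hsup _ _ hv hw

end GadgetExt

/-! ### Automorphisms of the second extension -/

section MapIso

variable {B X : Type*} {F : X → Type*} [∀ i, Lattice (F i)]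

/-- The action of a family of automorphisms of the gadgets on the generators. -/
def Gen.mapEquiv (τ : ∀ i, F i ≃o F i) : Gen B F ≃ Gen B F where
  toFun
    | base d => base d
    | tensor i c d => tensor i (τ i c) d
  invFun
    | base d => base d
    | tensor i c d => tensor i ((τ i).symm c) d
  left_inv o := by cases o <;> simp
  right_inv o := by cases o <;> simp

variable {r : X → B} [∀ i, BoundedOrder (F i)] (τ : ∀ i, F i ≃o F i)

theorem satBound_mapEquiv {i : X} {N : Set B} {o : Gen B F} :
    SatBound i N (Gen.mapEquiv τ o) ↔ SatBound i N o := by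
  cases o with
  | base d => exact iff_of_true satBound_base satBound_base
  | tensor j c d =>
    obtain rfl | hj := eq_or_ne i j
    · simp [Gen.mapEquiv]
    · exact iff_of_true (satBound_tensor_of_ne hj) (satBound_tensor_of_ne hj)

theorem satBox_mapEquiv {a : ∀ i, F i} {N : Set B} {o : Gen B F} :
    SatBox r a N (Gen.mapEquiv τ o) ↔ SatBox r (fun i => (τ i).symm (a i)) N o := by
  cases o <;> simp [Gen.mapEquiv, OrderIso.le_symm_apply]

variable [Lattice B]

theorem image_genClosure_subset (R : B → B → Prop) (S : Set (Gen B F)) :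
    Gen.mapEquiv τ '' genClosure r R S ⊆ genClosure r R (Gen.mapEquiv τ '' S) := by
  rintro _ ⟨o, ho, rfl⟩
  refine ⟨fun i N hN hr hS => ?_, fun a N hN ha hS => ?_⟩
  · rw [satBound_mapEquiv]
    exact ho.1 i N hN hr fun s hs => (satBound_mapEquiv τ).1 (hS _ ⟨s, hs, rfl⟩)
  · rw [satBox_mapEquiv]
    exact ho.2 _ N hN (fun i => (map_eq_top_iff _).not.2 (ha i))
      fun s hs => (satBox_mapEquiv τ).1 (hS _ ⟨s, hs, rfl⟩)

theorem image_genClosure (R : B → B → Prop) (S : Set (Gen B F)) :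
    Gen.mapEquiv τ '' genClosure r R S = genClosure r R (Gen.mapEquiv τ '' S) := by
  refine (image_genClosure_subset τ R S).antisymm ?_
  rw [← Equiv.symm_image_subset]
  refine (image_genClosure_subset (fun i => (τ i).symm) R _).trans ?_
  exact genClosure_mono r ((Gen.mapEquiv τ).symm_image_image S).le

namespace GadgetExt

/-- The action of a family of automorphisms of the gadgets on the extension. -/
def map (w : GadgetExt r F) : GadgetExt r F :=
  ⟨Gen.mapEquiv τ '' w.carrier, by
    obtain ⟨S, hS, h⟩ := w.exists_gens
    refine ⟨S.map (Gen.mapEquiv τ).toEmbedding, hS.map, ?_⟩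
    rw [h, image_genClosure, Finset.coe_map, Equiv.coe_toEmbedding]⟩

/-- The automorphism of the extension induced by a family of automorphisms of the gadgets. -/
def mapIso : GadgetExt r F ≃o GadgetExt r F where
  toFun := map τ
  invFun := map fun i => (τ i).symm
  left_inv _ := GadgetExt.ext ((Gen.mapEquiv τ).symm_image_image _)
  right_inv _ := GadgetExt.ext ((Gen.mapEquiv τ).image_symm_image _)
  map_rel_iff' := Set.image_subset_image_iff (Gen.mapEquiv τ).injective

theorem mapIso_tensor (i : X) (c : F i) (d : B) :
    mapIso τ (tensor r i c d) = tensor r i (τ i c) d := by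
  refine GadgetExt.ext ((image_genClosure τ _ _).trans ?_)
  rw [Set.image_singleton]
  rfl

end GadgetExt

end MapIso

theorem Comb.isMarked {I : Type u} [LinearOrder I] {col : I → Bool} {κ : Bool → Cardinal.{u}}
    (H : IsCombColoring col κ) : IsMarked (branch col) κ where
  ne_bot _ := ne_bot_of_mem_branch
  ne_top _ := ne_top_of_mem_branch
  mem_of_le _ hh _ := mem_branch_of_le hh
  exists_le _ := exists_mem_branch_le H
  mk_Iic _ := mk_Iic_of_mem_branch H
  aleph0_le := H.aleph0_le
  exists_sup_eq_top := by
    obtain ⟨i, j, h⟩ := exists_isCompl_tooth H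
    exact ⟨tooth i, tooth j, tooth_ne_top, tooth_ne_top, h.sup_eq_top⟩

namespace Inflation

section

variable {K G : Type*} [Lattice K] [BoundedOrder K] [Lattice G] [BoundedOrder G] [Nontrivial G]
  {b : K} {f : G}

instance [Nontrivial K] : Nontrivial (Inflation K G) :=
  ⟨el ⊥, el ⊤, fun h => bot_ne_top (congrArg base h)⟩

theorem pt_ne_bot (hb : b ≠ ⊥) (hf : f ≠ ⊥) : (pt b f : Inflation K G) ≠ ⊥ := by
  rwa [Ne, ← base_eq_bot, base_pt hb hf]

theorem pt_ne_top (hb : b ≠ ⊥) (hf : f ≠ ⊤) : (pt b f : Inflation K G) ≠ ⊤ :=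
  fun h => hf (top_le_iff.1 ((pt_le_pt hb).1 (le_top.trans_eq h.symm)))

variable [Nontrivial K]

theorem hasDisjointPair (h : HasDisjointPair G) : HasDisjointPair (Inflation K G) := by
  obtain ⟨f, g, hf, hg, hfg⟩ := h
  refine ⟨pt ⊤ f, pt ⊤ g, pt_ne_bot top_ne_bot hf, pt_ne_bot top_ne_bot hg, ?_⟩
  rw [disjoint_iff, pt_inf top_ne_bot, hfg.eq_bot, pt_bot]

end

theorem isMarked {K G : Type u} [Lattice K] [BoundedOrder K] [Lattice G] [BoundedOrder G]
    [Nontrivial G] [Nontrivial K] {C : Bool → Set G} {κ : Bool → Cardinal.{u}}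
    (M : IsMarked C κ) :
    IsMarked (fun a => {p : Inflation K G | ∃ b ≠ ⊥, ∃ f ∈ C a, p = pt b f}) κ where
  ne_bot := by
    rintro a _ ⟨b, hb, f, hf, rfl⟩
    exact pt_ne_bot hb (M.ne_bot f hf)
  ne_top := by
    rintro a _ ⟨b, hb, f, hf, rfl⟩
    exact pt_ne_top hb (M.ne_top f hf)
  mem_of_le := by
    rintro a _ ⟨b, hb, f, hf, rfl⟩ p hp hp0
    obtain ⟨g, rfl⟩ := eq_pt_of_le_pt hb (M.ne_top f hf) hp
    exact ⟨b, hb, g, M.mem_of_le f hf g ((pt_le_pt hb).1 hp) fun h => hp0 (by rw [h, pt_bot]), rfl⟩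
  exists_le p hp := by
    obtain ⟨a, f, hf, hle⟩ := M.exists_le p.level p.level_ne_bot
    have hb : p.base ≠ ⊥ := base_eq_bot.not.2 hp
    refine ⟨a, _, ⟨p.base, hb, f, hf, rfl⟩, ?_⟩
    calc pt p.base f ≤ pt p.base p.level := (pt_le_pt hb).2 hle
      _ = p := pt_base_level p
  mk_Iic := by
    rintro a _ ⟨b, hb, f, hf, rfl⟩
    rw [mk_Iic_pt hb (M.ne_top f hf), M.mk_Iic f hf]
  aleph0_le := M.aleph0_le
  exists_sup_eq_top := by
    obtain ⟨f, f', hf, hf', h⟩ := M.exists_sup_eq_top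
    refine ⟨pt ⊤ f, pt ⊤ f', pt_ne_top top_ne_bot hf, pt_ne_top top_ne_bot hf', ?_⟩
    rw [pt_sup top_ne_bot, h, pt_top, el_top]

end Inflation

section Gadget

variable {B : Type u} (K : Type u) [Lattice K] [BoundedOrder K]
  {I : Option B → Type u} [∀ i, LinearOrder (I i)] (col : ∀ i, I i → Bool)

/-- The gadgets of the second extension: a double comb for every element of `B`, and one further
gadget in which the lattice `K` is stored. -/
def Gadget : Option B → Type u
  | none => Inflation K (Comb (col none))
  | some x => Comb (col (some x))

namespace Gadget

noncomputable instance : ∀ i, Lattice (Gadget K col i)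
  | none => inferInstanceAs (Lattice (Inflation K (Comb (col none))))
  | some x => inferInstanceAs (Lattice (Comb (col (some x))))

noncomputable instance : ∀ i, BoundedOrder (Gadget K col i)
  | none => inferInstanceAs (BoundedOrder (Inflation K (Comb (col none))))
  | some x => inferInstanceAs (BoundedOrder (Comb (col (some x))))

instance [Nontrivial K] : ∀ i, Nontrivial (Gadget K col i)
  | none => inferInstanceAs (Nontrivial (Inflation K (Comb (col none))))
  | some x => inferInstanceAs (Nontrivial (Comb (col (some x))))

/-- The marked elements of the gadgets. -/
def branch : ∀ i, Bool → Set (Gadget K col i)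
  | none => fun a => {p : Inflation K (Comb (col none)) |
      ∃ b ≠ ⊥, ∃ f ∈ Comb.branch (col none) a, p = Inflation.pt b f}
  | some x => Comb.branch (col (some x))

variable {K}

/-- The copy of `K` in the additional gadget. -/
def store (x : K) : Gadget K col none := Inflation.el (G := Comb (col none)) x

/-- The automorphisms of the gadgets induced by an automorphism of `K`. -/
noncomputable def mapIso (α : K ≃o K) : ∀ i, Gadget K col i ≃o Gadget K col i
  | none => Inflation.mapIso (G := Comb (col none)) α
  | some _ => OrderIso.refl _

variable {col} {κ : Option B → Bool → Cardinal.{u}}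

theorem store_sup (x y : K) : store col (x ⊔ y) = store col x ⊔ store col y :=
  Inflation.el_sup x y

theorem store_inf (x y : K) : store col (x ⊓ y) = store col x ⊓ store col y :=
  Inflation.el_inf x y

theorem store_injective : Function.Injective (store col : K → Gadget K col none) :=
  fun _ _ h => congrArg Inflation.base h

theorem isCongSimple (H : ∀ i, IsCombColoring (col i) (κ i)) : ∀ i, IsCongSimple (Gadget K col i)
  | none => by
    obtain ⟨i, -⟩ := (H none).exists_col true
    exact Inflation.isCongSimple (Comb.isCongSimple (H none))
      ⟨.tooth i, Comb.tooth_ne_bot, Comb.tooth_ne_top⟩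
  | some x => Comb.isCongSimple (H (some x))

variable [Nontrivial K]

theorem hasDisjointPair (H : ∀ i, IsCombColoring (col i) (κ i)) :
    ∀ i, HasDisjointPair (Gadget K col i)
  | none => Inflation.hasDisjointPair (Comb.hasDisjointPair (H none))
  | some x => Comb.hasDisjointPair (H (some x))

theorem isMarked (H : ∀ i, IsCombColoring (col i) (κ i)) :
    ∀ i, IsMarked (branch K col i) (κ i)
  | none => Inflation.isMarked (Comb.isMarked (H none))
  | some x => Comb.isMarked (H (some x))

end Gadget

/-- The element of `B` above which a gadget of the second extension is placed: the additional
gadget is placed above `x₀`. -/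
def site (x₀ : B) (i : Option B) : B := i.getD x₀

variable {K col} [Nontrivial K] [Lattice B] {κ : Option B → Bool → Cardinal.{u}} {S : Set B}
  {x₀ y₀ : B}

theorem isMarking_site (H : ∀ i, IsCombColoring (col i) (κ i))
    (hinj : ∀ {i a j b}, κ i a = κ j b → i = j ∧ a = b) (hlt : ∀ i a, #B < κ i a) (x₀ : B) :
    IsMarking (site x₀) (Gadget.branch K col) κ where
  isMarked := Gadget.isMarked H
  injective := hinj
  mk_lt := hlt
  surjective x := ⟨some x, rfl⟩

theorem exists_eq_mapIso_gadget [∀ i, WellFoundedLT (I i)] (H : ∀ i, IsCombColoring (col i) (κ i))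
    (hinj : ∀ {i a j b}, κ i a = κ j b → i = j ∧ a = b) (hlt : ∀ i a, #B < κ i a)
    (N : Linked S x₀ y₀)
    (β : GadgetExt (site x₀) (Gadget K col) ≃o GadgetExt (site x₀) (Gadget K col)) :
    ∃ α : K ≃o K, β = mapIso (Gadget.mapIso col α) := by
  have M := isMarking_site (K := K) H hinj hlt x₀
  obtain ⟨σ, hσ⟩ := M.exists_map_tensor (i := none) N β
  obtain ⟨α, hα⟩ : ∃ α : K ≃o K, σ = Gadget.mapIso col α none :=
    Inflation.exists_eq_mapIso (fun _ => Comb.isNondisjointSup_iff (H none))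
      (fun φ x => Comb.map_eq_self (H none) (fun _ _ h => (hinj h).2) φ x) σ
  refine ⟨α, OrderIso.ext (funext fun w => ?_)⟩
  induction w using GadgetExt.induction with
  | base d => rw [M.map_base, M.map_base]
  | tensor i c d =>
    rw [mapIso_tensor]
    cases i with
    | none => rw [hσ, hα]
    | some x =>
      exact M.isFixed_comb (H (some x))
        (e := show Comb (col (some x)) ≃o Gadget K col (some x) from OrderIso.refl (Comb _))
        (fun a => (Set.image_id _).symm) c β d
  | sup v w hv hw => rw [map_sup, map_sup, hv, hw]

end Gadget

/-! ### Automorphism-preserving embeddings -/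

theorem mem_range_withBot_withTop_coe {L : Type*} {x : WithBot (WithTop L)} :
    x ∈ Set.range (fun a : L => ((a : WithTop L) : WithBot (WithTop L))) ↔ x ≠ ⊥ ∧ x ≠ ⊤ := by
  constructor
  · rintro ⟨a, rfl⟩
    exact ⟨WithBot.coe_ne_bot, fun h => WithTop.coe_ne_top (WithBot.coe_injective h)⟩
  · rintro ⟨hbot, htop⟩
    obtain ⟨y, rfl⟩ := WithBot.ne_bot_iff_exists.1 hbot
    obtain ⟨a, rfl⟩ := WithTop.ne_top_iff_exists.1 fun h => htop (congrArg _ h)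
    exact ⟨a, rfl⟩

section

variable {L L' L'' : Type*} [Lattice L] [Lattice L'] [Lattice L'']

theorem isLatAuto_iff {h : L → L} : IsLatAuto L h ↔ ∃ e : L ≃o L, ⇑e = h := by
  constructor
  · rintro ⟨hbij, hsup, -⟩
    refine ⟨⟨Equiv.ofBijective h hbij, fun {a b} => ?_⟩, rfl⟩
    change h a ≤ h b ↔ a ≤ b
    rw [← sup_eq_right, ← hsup, hbij.1.eq_iff, sup_eq_right]
  · rintro ⟨e, rfl⟩
    exact ⟨e.bijective, map_sup e, map_inf e⟩

theorem apEmb_iff {f : L → L'} :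
    APEmb L L' f ↔ Function.Injective f ∧
      (∀ x y, f (x ⊔ y) = f x ⊔ f y) ∧ (∀ x y, f (x ⊓ y) = f x ⊓ f y) ∧
      (∀ α : L ≃o L, ∃! β : L' ≃o L', ∀ x, β (f x) = f (α x)) ∧
      ∀ β : L' ≃o L', ∃ α : L ≃o L, ∀ x, β (f x) = f (α x) := by
  refine and_congr_right' (and_congr_right' (and_congr_right' (and_congr ?_ ?_)))
  · simp only [isLatAuto_iff, forall_exists_index, forall_apply_eq_imp_iff]
    refine forall_congr' fun α => ⟨?_, ?_⟩
    · rintro ⟨_, ⟨⟨β, rfl⟩, hβ⟩, huniq⟩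
      exact ⟨β, hβ, fun β' h => DFunLike.coe_injective (huniq β' ⟨⟨β', rfl⟩, h⟩)⟩
    · rintro ⟨β, hβ, huniq⟩
      refine ⟨β, ⟨⟨β, rfl⟩, hβ⟩, ?_⟩
      rintro _ ⟨⟨β', rfl⟩, h⟩
      rw [huniq β' h]
  · simp only [isLatAuto_iff, forall_exists_index, forall_apply_eq_imp_iff,
      exists_exists_eq_and]

theorem APEmb.comp {f : L → L'} {g : L' → L''} (hf : APEmb L L' f) (hg : APEmb L' L'' g) :
    APEmb L L'' (g ∘ f) := by
  obtain ⟨hf1, hfs, hfi, hfe, hfr⟩ := apEmb_iff.1 hf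
  obtain ⟨hg1, hgs, hgi, hge, hgr⟩ := apEmb_iff.1 hg
  refine apEmb_iff.2 ⟨hg1.comp hf1, fun x y => ?_, fun x y => ?_, fun α => ?_, fun γ => ?_⟩
  · simp only [Function.comp_apply, hfs, hgs]
  · simp only [Function.comp_apply, hfi, hgi]
  · obtain ⟨β, hβ, hβu⟩ := hfe α
    obtain ⟨γ, hγ, hγu⟩ := hge β
    refine ⟨γ, fun x => (hγ _).trans (congrArg g (hβ x)), fun γ' h => hγu γ' fun y => ?_⟩
    obtain ⟨β', hβ'⟩ := hgr γ'
    rw [hβ', hβu β' fun x => hg1 ((hβ' _).symm.trans (h x))]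
  · obtain ⟨β, hβ⟩ := hgr γ
    obtain ⟨α, hα⟩ := hfr β
    exact ⟨α, fun x => (hβ _).trans (congrArg g (hα x))⟩

theorem apEmb_withBot_withTop_coe :
    APEmb L (WithBot (WithTop L)) fun a => ((a : WithTop L) : WithBot (WithTop L)) := by
  refine apEmb_iff.2 ⟨WithBot.coe_injective.comp WithTop.coe_injective, fun _ _ => rfl,
    fun _ _ => rfl, fun α => ⟨α.withTopCongr.withBotCongr, fun _ => rfl, fun β hβ => ?_⟩,
    fun β => ?_⟩
  · refine OrderIso.ext (funext fun x => ?_)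
    induction x with
    | bot => exact map_bot β
    | coe x =>
      induction x with
      | top => exact map_top β
      | coe a => exact hβ a
  · have hmaps (τ : WithBot (WithTop L) ≃o WithBot (WithTop L)) (a : L) :
        τ ((a : WithTop L) : WithBot (WithTop L)) ∈
          Set.range fun a : L => ((a : WithTop L) : WithBot (WithTop L)) := by
      have ha := mem_range_withBot_withTop_coe.1 ⟨a, rfl⟩
      rw [mem_range_withBot_withTop_coe, Ne, Ne, map_eq_bot_iff, map_eq_top_iff]
      exact ha
    obtain ⟨α, hα⟩ := exists_orderIso_of_mem_range
      (fun a b => WithBot.coe_le_coe.trans WithTop.coe_le_coe) β (hmaps β) (hmaps β.symm)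
    exact ⟨α, fun a => (hα a).symm⟩

end

section

variable {K B : Type u} [Lattice K] [BoundedOrder K] [Nontrivial K] [Lattice B] {S : Set B}
  {x₀ y₀ : B} {I : Option B → Type u} [∀ i, LinearOrder (I i)] [∀ i, WellFoundedLT (I i)]
  {col : ∀ i, I i → Bool} {κ : Option B → Bool → Cardinal.{u}}

theorem apEmb_tensor_store (H : ∀ i, IsCombColoring (col i) (κ i))
    (hinj : ∀ {i a j b}, κ i a = κ j b → i = j ∧ a = b) (hlt : ∀ i a, #B < κ i a)
    (N : Linked S x₀ y₀) :
    APEmb K (GadgetExt (site x₀) (Gadget K col))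
      fun x => tensor (site x₀) none (Gadget.store col x) y₀ := by
  have hinjective : Function.Injective fun x : K =>
      tensor (F := Gadget K col) (site x₀) none (Gadget.store col x) y₀ := fun x y h =>
    Gadget.store_injective <| le_antisymm ((tensor_le_tensor_iff N.lt.not_ge).1 h.le)
      ((tensor_le_tensor_iff N.lt.not_ge).1 h.ge)
  have hmap (α : K ≃o K) (x : K) : mapIso (r := site x₀) (Gadget.mapIso col α)
      (tensor (site x₀) none (Gadget.store col x) y₀) =
        tensor (site x₀) none (Gadget.store col (α x)) y₀ :=
    mapIso_tensor _ _ _ _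
  have hexists := exists_eq_mapIso_gadget (K := K) H hinj hlt N
  refine apEmb_iff.2 ⟨hinjective, fun x y => ?_, fun x y => ?_,
    fun α => ⟨mapIso (Gadget.mapIso col α), hmap α, fun β hβ => ?_⟩, fun β => ?_⟩
  · rw [Gadget.store_sup, tensor_sup_left]
  · rw [Gadget.store_inf, tensor_inf, inf_idem, tensor_sup_corner]
  · obtain ⟨α', rfl⟩ := hexists β
    congr
    exact OrderIso.ext (funext fun x => hinjective ((hmap α' x).symm.trans (hβ x)))
  · obtain ⟨α, rfl⟩ := hexists β
    exact ⟨α, hmap α⟩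

theorem exists_apEmb_cpEmb (L : Type u) [Lattice L] (N : Linked S x₀ y₀) :
    ∃ (M : Type u) (_ : Lattice M) (f : L → M) (g : B → M), APEmb L M f ∧ CPEmb B M g := by
  obtain ⟨κ, hκ_inj, hκ⟩ := exists_injective_forall_lt (Option B × Bool) #B
  choose I _ _ col H using fun i : Option B =>
    exists_isCombColoring (fun a => κ (i, a)) fun a => (hκ (i, a)).1
  have hf := apEmb_tensor_store (K := WithBot (WithTop L)) H
    (fun h => Prod.mk.inj (hκ_inj h)) (fun i a => (hκ (i, a)).2) N
  exact ⟨_, inferInstance, _, _, APEmb.comp apEmb_withBot_withTop_coe hf,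
    cpEmb_base (Gadget.isCongSimple H) (Gadget.hasDisjointPair H)⟩

end

end StrongIndependence

open StrongIndependence in
/-- The Strong Independence Theorem for lattices. -/
theorem strong_independence_lattices
    (La Lc : Type u) [instA : Lattice La] [instC : Lattice Lc] [Nontrivial Lc] :
    ∃ (L : Type u) (instL : Lattice L) (f : La → L) (g : Lc → L),
      @APEmb La instA L instL f ∧ @CPEmb Lc instC L instL g := by
  obtain ⟨x₀, y₀, hxy⟩ : ∃ x y : Lc, x < y := by
    obtain ⟨x, y, hne⟩ := exists_pair_ne Lc
    by_cases hle : x ≤ y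
    · exact ⟨x, y, hle.lt_of_ne hne⟩
    · exact ⟨x ⊓ y, x, inf_lt_left.2 hle⟩
  obtain ⟨I, _, _, col, H⟩ := exists_isCombColoring (fun _ => Cardinal.aleph0) fun _ => le_rfl
  obtain ⟨i, j, hij⟩ := Comb.exists_isCompl_tooth H
  have hcp : CPEmb Lc (GadgetExt (Subtype.val : {m // x₀ ≤ m} → Lc) fun _ => Comb col) _ :=
    GadgetExt.cpEmb_base (fun _ => Comb.isCongSimple H) fun _ => Comb.hasDisjointPair H
  have hlinked := GadgetExt.linked_range_base (F := fun _ : {m // x₀ ≤ m} => Comb col)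
    Subtype.range_coe_subtype
    (fun _ => ⟨.tooth i, .tooth j, hij, Comb.tooth_ne_top, Comb.tooth_ne_top⟩) hxy
  obtain ⟨L, instL, f, g, hf, hg⟩ := exists_apEmb_cpEmb La hlinked
  exact ⟨L, instL, f, _, hf, CPEmb.comp hcp hg⟩
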